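/- If c_1 < c_2 < c_3 < ... is the increasing enumeration of the cyclic numbers, then c_n is asymptotically equivalent to e^γ · n · log log log n as n → ∞, where γ is the Euler–Mascheroni constant. -/

import Mathlib

open Filter Asymptotics Real

/-- A positive integer `n` is *cyclic* if `gcd(n, φ(n)) = 1`. -/
def IsCyclicNum (n : ℕ) : Prop := 0 < n ∧ Nat.gcd n (Nat.totient n) = 1

instance : DecidablePred IsCyclicNum := fun n =>
  decidable_of_iff (0 < n ∧ Nat.gcd n (Nat.totient n) = 1) Iff.rfl

/-- The `n`-th cyclic number, indexed from 1: `cyclicNum 1 = 1`, `cyclicNum 2 = 2`, .... -/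
noncomputable def cyclicNum (n : ℕ) : ℕ := Nat.nth IsCyclicNum (n - 1)

/-- The number of cyclic numbers less than or equal to the real number `x`. -/
noncomputable def cyclicCount (x : ℝ) : ℕ :=
  ((Finset.range (⌊x⌋₊ + 1)).filter IsCyclicNum).card

open Filter Asymptotics Real

namespace Cyc

lemma abel_bound (a : ℕ → ℂ) (f : ℕ → ℝ) (N : ℕ) (B : ℝ)
    (hf0 : ∀ n, N ≤ n → 0 ≤ f n) (hf : ∀ n, N ≤ n → f (n + 1) ≤ f n)
    (hB : ∀ n, N ≤ n → ‖∑ i ∈ Finset.Ico N n, a i‖ ≤ B) (M : ℕ) (hM : N ≤ M) :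
    ‖∑ i ∈ Finset.Ico N M, a i * (f i : ℂ)‖ ≤ B * f N := by
  have key : ∀ M, N ≤ M → ∑ i ∈ Finset.Ico N M, a i * (f i : ℂ) =
      (f M : ℂ) * (∑ i ∈ Finset.Ico N M, a i) +
      ∑ i ∈ Finset.Ico N M, ((f i - f (i + 1) : ℝ) : ℂ) * ∑ j ∈ Finset.Ico N (i + 1), a j := by
    intro M hM
    induction M, hM using Nat.le_induction with
    | base => simp
    | succ M hM ih =>
      rw [Finset.sum_Ico_succ_top hM, ih, Finset.sum_Ico_succ_top hM, Finset.sum_Ico_succ_top hM,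
        Finset.sum_Ico_succ_top hM]
      push_cast
      ring
  have tel : ∀ M, N ≤ M → ∑ i ∈ Finset.Ico N M, (f i - f (i + 1)) = f N - f M := by
    intro M hM
    induction M, hM using Nat.le_induction with
    | base => simp
    | succ M hM ih => rw [Finset.sum_Ico_succ_top hM, ih]; ring
  rw [key M hM]
  calc _ ≤ ‖(f M : ℂ) * (∑ i ∈ Finset.Ico N M, a i)‖ +
      ∑ i ∈ Finset.Ico N M, ‖((f i - f (i + 1) : ℝ) : ℂ) * ∑ j ∈ Finset.Ico N (i + 1), a j‖ :=
        (norm_add_le _ _).trans (by gcongr; exact norm_sum_le _ _)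
    _ ≤ f M * B + ∑ i ∈ Finset.Ico N M, (f i - f (i + 1)) * B := by
        gcongr with i hi
        · rw [norm_mul, Complex.norm_real, Real.norm_of_nonneg (hf0 M hM)]
          exact mul_le_mul_of_nonneg_left (hB M hM) (hf0 M hM)
        · have hi' := (Finset.mem_Ico.1 hi).1
          have h0 : 0 ≤ f i - f (i + 1) := sub_nonneg.2 (hf i hi')
          rw [norm_mul, Complex.norm_real, Real.norm_of_nonneg h0]
          exact mul_le_mul_of_nonneg_left (hB _ (by omega)) h0
    _ = B * f N := by rw [← Finset.sum_mul, tel M hM]; ring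

variable {p : ℕ} [hp : Fact p.Prime]

lemma char_block (χ : DirichletCharacter ℂ p) (hχ : χ ≠ 1) (N : ℕ) :
    ∑ i ∈ Finset.Ico N (N + p), χ (i : ZMod p) = 0 := by
  have hp0 : 0 < p := hp.out.pos
  induction N with
  | zero =>
    have h := MulChar.sum_eq_zero_of_ne_one hχ
    rw [zero_add, ← Finset.range_eq_Ico, ← h, Finset.sum_range]
    refine Fintype.sum_bijective (fun i : Fin p => ((i : ℕ) : ZMod p)) ?_ _ _ (fun i => rfl)
    refine (Fintype.bijective_iff_injective_and_card _).2 ⟨?_, by simp [ZMod.card]⟩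
    intro i j hij
    have := (ZMod.natCast_eq_natCast_iff' _ _ _).1 hij
    rw [Nat.mod_eq_of_lt i.2, Nat.mod_eq_of_lt j.2] at this
    exact Fin.ext this
  | succ N ih =>
    rw [show N + 1 + p = (N + p) + 1 by ring, Finset.sum_Ico_succ_top (by omega)]
    rw [Finset.sum_eq_sum_Ico_succ_bot (by omega)] at ih
    rw [← ih]; push_cast; simp [add_comm]

lemma char_partial (χ : DirichletCharacter ℂ p) (hχ : χ ≠ 1) (N n : ℕ) (hn : N ≤ n) :
    ‖∑ i ∈ Finset.Ico N n, χ (i : ZMod p)‖ ≤ p := by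
  have hp0 : 0 < p := hp.out.pos
  obtain ⟨k, rfl⟩ := Nat.exists_eq_add_of_le hn
  clear hn
  induction k using Nat.strong_induction_on generalizing N with
  | _ k ih =>
    by_cases hk : k < p
    · calc _ ≤ ∑ i ∈ Finset.Ico N (N + k), ‖χ (i : ZMod p)‖ := norm_sum_le _ _
        _ ≤ ∑ i ∈ Finset.Ico N (N + k), (1 : ℝ) := by
            gcongr; exact DirichletCharacter.norm_le_one χ _
        _ ≤ p := by simp; omega
    · rw [← Finset.sum_Ico_consecutive _ (show N ≤ N + p by omega) (by omega),
        char_block χ hχ, zero_add]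
      have := ih (k - p) (by omega) (N + p)
      rwa [show N + p + (k - p) = N + k by omega] at this

lemma char_tsum_bound (χ : DirichletCharacter ℂ p) (hχ : χ ≠ 1) (f : ℕ → ℝ) (N : ℕ) (H : ℝ)
    (hf0 : ∀ n, 0 ≤ f n) (hf : ∀ n, N ≤ n → f (n + 1) ≤ f n)
    (hs : Summable fun n : ℕ => χ (n : ZMod p) * (f n : ℂ))
    (hH : ∑ n ∈ Finset.range N, f n ≤ H) :
    ‖∑' n : ℕ, χ (n : ZMod p) * (f n : ℂ)‖ ≤ H + p * f N := by
  refine le_of_tendsto hs.hasSum.tendsto_sum_nat.norm ?_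
  filter_upwards [eventually_ge_atTop N] with M hM
  rw [← Finset.sum_range_add_sum_Ico _ hM]
  refine (norm_add_le _ _).trans (add_le_add ?_ ?_)
  · refine le_trans (norm_sum_le _ _) (le_trans (Finset.sum_le_sum fun i _ => ?_) hH)
    rw [norm_mul, Complex.norm_real, Real.norm_of_nonneg (hf0 i)]
    exact mul_le_of_le_one_left (hf0 i) (DirichletCharacter.norm_le_one χ _)
  · exact abel_bound _ f N p (fun n _ => hf0 n) hf (fun n hn => char_partial χ hχ N n hn) M hM

end Cyc

open Filter Asymptotics Real

namespace Cyc
open DirichletCharacter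
variable {p : ℕ} [hp : Fact p.Prime]

lemma term_eq (χ : DirichletCharacter ℂ p) {s : ℝ} (hs : 1 < s) (n : ℕ) :
    LSeries.term (fun n : ℕ => χ (n : ZMod p)) (s : ℂ) n =
      χ (n : ZMod p) * (((n : ℝ) ^ (-s) : ℝ) : ℂ) := by
  rcases eq_or_ne n 0 with rfl | hn
  · simp [Real.zero_rpow (by linarith : -s ≠ 0)]
  · rw [LSeries.term_of_ne_zero hn, Complex.ofReal_cpow (by positivity)]
    push_cast
    rw [Complex.cpow_neg, div_eq_mul_inv]

lemma term_eq' (χ : DirichletCharacter ℂ p) {s : ℝ} (n : ℕ) :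
    LSeries.term (LSeries.logMul (fun n : ℕ => χ (n : ZMod p))) (s : ℂ) n =
      χ (n : ZMod p) * ((Real.log n * (n : ℝ) ^ (-s) : ℝ) : ℂ) := by
  rcases eq_or_ne n 0 with rfl | hn
  · simp
  · rw [LSeries.term_of_ne_zero hn, Complex.ofReal_mul, Complex.ofReal_cpow (by positivity),
      LSeries.logMul, ← Complex.natCast_log]
    push_cast
    rw [Complex.cpow_neg, div_eq_mul_inv]
    ring

lemma harm_bound (p : ℕ) {s : ℝ} (hs : 1 < s) :
    ∑ n ∈ Finset.range (p + 1), (n : ℝ) ^ (-s) ≤ 1 + Real.log p := by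
  refine le_trans ?_ (harmonic_le_one_add_log p)
  rw [Finset.sum_range_succ', harmonic]
  push_cast
  rw [Real.zero_rpow (by linarith), add_zero]
  gcongr with i hi
  rw [← Real.rpow_neg_one]
  exact Real.rpow_le_rpow_of_exponent_le (by linarith [(Nat.cast_nonneg i : (0:ℝ) ≤ i)]) (by linarith)

lemma tail_le_one (p : ℕ) {s : ℝ} (hs : 1 < s) : (p : ℝ) * ((p + 1 : ℕ) : ℝ) ^ (-s) ≤ 1 := by
  have h : ((p + 1 : ℕ) : ℝ) ^ (-s) ≤ ((p + 1 : ℕ) : ℝ)⁻¹ := by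
    rw [← Real.rpow_neg_one]
    exact Real.rpow_le_rpow_of_exponent_le (by push_cast; linarith [(Nat.cast_nonneg p : (0:ℝ) ≤ p)]) (by linarith)
  calc _ ≤ (p : ℝ) * ((p + 1 : ℕ) : ℝ)⁻¹ := by gcongr
    _ ≤ 1 := by
      push_cast
      rw [← div_eq_mul_inv, div_le_one (by positivity)]; linarith

/-- the size parameter -/
noncomputable def ell (p : ℕ) : ℝ := 1 + Real.log p

lemma one_le_ell (p : ℕ) : 1 ≤ ell p := by
  unfold ell; linarith [Real.log_natCast_nonneg p]

lemma L_upper (χ : DirichletCharacter ℂ p) (hχ : χ ≠ 1) {s : ℝ} (hs : 1 < s) :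
    ‖LFunction χ (s : ℂ)‖ ≤ 2 * ell p := by
  have hs' : 1 < (s : ℂ).re := by simpa
  rw [LFunction_eq_LSeries χ hs', LSeries]
  have hsum := LSeriesSummable_of_one_lt_re χ hs'
  unfold LSeriesSummable at hsum
  simp_rw [term_eq χ hs]
  have e : LSeries.term (fun n : ℕ => χ (n : ZMod p)) (s : ℂ) = fun n : ℕ =>
      χ (n : ZMod p) * (((n : ℝ) ^ (-s) : ℝ) : ℂ) := funext (term_eq χ hs)
  rw [e] at hsum
  have := char_tsum_bound χ hχ (fun n => (n : ℝ) ^ (-s)) (p + 1) _ (fun n => by positivity)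
    (fun n hn => Real.rpow_le_rpow_of_nonpos (by norm_cast; omega) (by push_cast; linarith) (by linarith))
    hsum (harm_bound p hs)
  have h2 := tail_le_one p hs
  have := one_le_ell p
  simp only [ell] at *
  linarith

lemma L_deriv_upper (χ : DirichletCharacter ℂ p) (hχ : χ ≠ 1) {s : ℝ} (hs : 1 < s) :
    ‖deriv (LFunction χ) (s : ℂ)‖ ≤ 2 * ell p ^ 2 := by
  have hs' : 1 < (s : ℂ).re := by simpa
  have habs : LSeries.abscissaOfAbsConv (fun n : ℕ => χ (n : ZMod p)) < (s : ℂ).re := by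
    rw [absicssaOfAbsConv_eq_one hp.out.ne_zero]; exact_mod_cast hs
  rw [deriv_LFunction_eq_deriv_LSeries χ hs', LSeries_deriv habs, norm_neg, LSeries]
  have hsum : LSeriesSummable (LSeries.logMul (fun n : ℕ => χ (n : ZMod p))) (s : ℂ) :=
    LSeriesSummable_logMul_of_lt_re habs
  unfold LSeriesSummable at hsum
  simp_rw [term_eq' χ]
  have e : LSeries.term (LSeries.logMul (fun n : ℕ => χ (n : ZMod p))) (s : ℂ) = fun n : ℕ =>
      χ (n : ZMod p) * ((Real.log n * (n : ℝ) ^ (-s) : ℝ) : ℂ) := funext (term_eq' χ)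
  rw [e] at hsum
  have hp1 : (1 : ℝ) ≤ p := by exact_mod_cast hp.out.one_le
  have hH : ∑ n ∈ Finset.range (p + 1), Real.log n * (n : ℝ) ^ (-s) ≤
      Real.log p * (1 + Real.log p) := by
    calc _ ≤ ∑ n ∈ Finset.range (p + 1), Real.log p * (n : ℝ) ^ (-s) := by
          refine Finset.sum_le_sum fun n hn => mul_le_mul_of_nonneg_right ?_ (by positivity)
          rcases Nat.eq_zero_or_pos n with rfl | h
          · simpa using Real.log_natCast_nonneg p
          · have : n ≤ p := by have := Finset.mem_range.1 hn; omega
            exact Real.log_le_log (by exact_mod_cast h) (by exact_mod_cast this)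
      _ ≤ _ := by
          rw [← Finset.mul_sum]
          exact mul_le_mul_of_nonneg_left (harm_bound p hs) (Real.log_natCast_nonneg p)
  have hanti : ∀ n, p + 1 ≤ n → Real.log ((n + 1 : ℕ) : ℝ) * ((n + 1 : ℕ) : ℝ) ^ (-s) ≤
      Real.log n * (n : ℝ) ^ (-s) := by
    intro n hn
    have h3 : (3 : ℝ) ≤ n := by have := hp.out.two_le; norm_cast; omega
    have := Real.log_div_self_rpow_antitoneOn (a := s) (by linarith)
    have he : Real.exp (s⁻¹) ≤ n := by
      refine le_trans (Real.exp_le_exp.2 (?_ : s⁻¹ ≤ 1)) ?_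
      · exact inv_le_one_of_one_le₀ hs.le
      · linarith [Real.exp_one_lt_d9]
    have h := this (a := (n : ℝ)) (b := ((n + 1 : ℕ) : ℝ)) he (by rw [Set.mem_Ici]; push_cast; linarith) (by push_cast; linarith)
    rw [Real.rpow_neg (by positivity), Real.rpow_neg (by positivity)]
    simpa only [div_eq_mul_inv] using h
  have := char_tsum_bound χ hχ (fun n => Real.log n * (n : ℝ) ^ (-s)) (p + 1) _
    (fun n => mul_nonneg (Real.log_natCast_nonneg n) (by positivity)) hanti hsum hH
  have h2 := tail_le_one p hs
  have h4 : Real.log ((p + 1 : ℕ) : ℝ) ≤ 1 + Real.log p := by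
    have : ((p + 1 : ℕ) : ℝ) ≤ Real.exp 1 * p := by
      push_cast; nlinarith [Real.add_one_le_exp (1:ℝ)]
    have := Real.log_le_log (by positivity) this
    rwa [Real.log_mul (by positivity) (by positivity), Real.log_exp] at this
  have h5 := Real.log_natCast_nonneg p
  have h6 := Real.log_natCast_nonneg (p + 1)
  have h7 : (p : ℝ) * (Real.log ((p + 1 : ℕ) : ℝ) * ((p + 1 : ℕ) : ℝ) ^ (-s)) ≤ 1 + Real.log p := by
    calc _ = Real.log ((p + 1 : ℕ) : ℝ) * (p * ((p + 1 : ℕ) : ℝ) ^ (-s)) := by ring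
      _ ≤ Real.log ((p + 1 : ℕ) : ℝ) * 1 := by gcongr
      _ ≤ _ := by linarith
  refine this.trans ?_
  unfold ell
  nlinarith

lemma L_lip (χ : DirichletCharacter ℂ p) (hχ : χ ≠ 1) {s t : ℝ} (hs : 1 < s) (ht : 1 < t) :
    ‖LFunction χ (s : ℂ) - LFunction χ (t : ℂ)‖ ≤ 2 * ell p ^ 2 * |s - t| := by
  have := Convex.norm_image_sub_le_of_norm_hasDerivWithin_le (s := Set.Ioi (1:ℝ)) (C := 2 * ell p ^ 2)
    (f := fun x : ℝ => LFunction χ (x : ℂ)) (f' := fun x => deriv (LFunction χ) (x : ℂ))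
    (x := t) (y := s)
    (fun x _ => ((differentiable_LFunction hχ (x:ℂ)).hasDerivAt.comp_ofReal).hasDerivWithinAt)
    (fun x hx => L_deriv_upper χ hχ hx) (convex_Ioi 1) ht hs
  simpa using this

lemma zeta_upper {s : ℝ} (hs : 1 < s) : ∑' n : ℕ, 1 / (n + 1 : ℝ) ^ s ≤ 1 + 1 / (s - 1) := by
  have := ZetaAsymptotics.zeta_limit_aux1 hs
  have h2 : 0 ≤ ZetaAsymptotics.termTSum s := tsum_nonneg fun n => ZetaAsymptotics.term_nonneg _ _
  nlinarith

lemma L_triv_upper (χ : DirichletCharacter ℂ p) {s : ℝ} (hs : 1 < s) :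
    ‖LFunction χ (s : ℂ)‖ ≤ 1 + 1 / (s - 1) := by
  have hs' : 1 < (s : ℂ).re := by simpa
  rw [LFunction_eq_LSeries χ hs', LSeries]
  simp_rw [term_eq χ hs]
  have hsm : Summable fun n : ℕ => (n : ℝ) ^ (-s) := by
    simpa [Real.rpow_neg] using Real.summable_nat_rpow_inv.2 hs
  refine le_trans (tsum_of_norm_bounded hsm.hasSum fun n => ?_) (le_trans (le_of_eq ?_) (zeta_upper hs))
  · rw [norm_mul, Complex.norm_real, Real.norm_of_nonneg (by positivity)]
    exact mul_le_of_le_one_left (by positivity) (DirichletCharacter.norm_le_one χ _)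
  · rw [hsm.tsum_eq_zero_add]
    simp only [Nat.cast_zero, Real.zero_rpow (by linarith : -s ≠ 0), zero_add, Nat.cast_add, Nat.cast_one, one_div]
    refine tsum_congr fun n => ?_
    rw [Real.rpow_neg (by positivity)]

end Cyc

open Filter Asymptotics Real

namespace Cyc
open DirichletCharacter
variable {p : ℕ} [hp : Fact p.Prime]

lemma three_four_one (χ : DirichletCharacter ℂ p) {x : ℝ} (hx : 0 < x) :
    1 ≤ (1 + 1 / x) ^ 3 * ‖LFunction χ ((1 + x : ℝ) : ℂ)‖ ^ 4 *
      ‖LFunction (χ ^ 2) ((1 + x : ℝ) : ℂ)‖ := by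
  have := norm_LFunction_product_ge_one χ hx 0
  simp only [Complex.ofReal_zero, mul_zero, add_zero, norm_mul, norm_pow] at this
  have h0 : ‖LFunctionTrivChar p (1 + x)‖ ≤ 1 + 1 / x := by
    have := L_triv_upper (1 : DirichletCharacter ℂ p) (s := 1 + x) (by linarith)
    rw [add_sub_cancel_left] at this
    simpa using this
  push_cast
  refine le_trans this ?_
  gcongr

lemma L_lower_complex (χ : DirichletCharacter ℂ p) (hχ : χ ≠ 1) (hχ2 : χ ^ 2 ≠ 1) {s : ℝ}
    (hs : 1 < s) (hs2 : s ≤ 2) : 1 ≤ 2 ^ 11 * ell p ^ 7 * ‖LFunction χ (s : ℂ)‖ := by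
  have hl := one_le_ell p
  set l := ell p with hldef
  have hl0 : 0 < l := by linarith
  have big : ∀ s : ℝ, 1 < s → s ≤ 2 → 1 ≤ 2 ^ 12 * l ^ 9 * (s - 1) →
      1 ≤ 2 ^ 10 * l ^ 7 * ‖LFunction χ (s : ℂ)‖ := by
    intro s hs hs2 h
    have hx : 0 < s - 1 := by linarith
    have h1 := three_four_one χ hx
    rw [add_sub_cancel] at h1
    have h2 := L_upper (χ ^ 2) hχ2 hs
    rw [← hldef] at h2
    set A := ‖LFunction χ (s : ℂ)‖
    have hA : 0 ≤ A := norm_nonneg _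
    have h3 : 1 + 1 / (s - 1) ≤ 2 * (2 ^ 12 * l ^ 9) := by
      have : 1 / (s - 1) ≤ 2 ^ 12 * l ^ 9 := by
        rw [div_le_iff₀ hx]; exact h
      have : 1 ≤ 1 / (s - 1) := by rw [le_div_iff₀ hx]; linarith
      linarith
    have h4 : 1 ≤ (2 * (2 ^ 12 * l ^ 9)) ^ 3 * A ^ 4 * (2 * l) := by
      refine h1.trans ?_
      gcongr
    have h5 : 1 ≤ (2 ^ 10 * l ^ 7 * A) ^ 4 := by
      refine h4.trans (le_of_eq ?_)
      ring
    by_contra hcon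
    push Not at hcon
    have : (2 ^ 10 * l ^ 7 * A) ^ 4 < 1 := pow_lt_one₀ (by positivity) hcon (by norm_num)
    linarith
  by_cases h : 1 ≤ 2 ^ 12 * l ^ 9 * (s - 1)
  · have := big s hs hs2 h
    have h3 : 0 ≤ l ^ 7 * ‖LFunction χ (s : ℂ)‖ := by positivity
    nlinarith
  · push Not at h
    have hl9 : 1 ≤ l ^ 9 := one_le_pow₀ hl
    set t := 1 + 1 / (2 ^ 12 * l ^ 9) with ht
    have ht1 : 1 < t := by rw [ht]; simp; positivity
    have ht2 : t ≤ 2 := by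
      have : 1 / (2 ^ 12 * l ^ 9) ≤ 1 := by rw [div_le_one (by positivity)]; linarith
      linarith
    have hb := big t ht1 ht2 (by rw [ht]; field_simp; simp)
    have hst : s ≤ t := by
      have : s - 1 ≤ 1 / (2 ^ 12 * l ^ 9) := by
        rw [le_div_iff₀ (by positivity)]; linarith
      linarith
    have hlip := L_lip χ hχ ht1 hs
    rw [← hldef, abs_of_nonneg (by linarith)] at hlip
    have h6 : 2 * l ^ 2 * (t - s) ≤ 2 * l ^ 2 * (1 / (2 ^ 12 * l ^ 9)) := by
      gcongr; linarith
    have h7 : ‖LFunction χ (t : ℂ)‖ ≤ ‖LFunction χ (s : ℂ)‖ + 2 * l ^ 2 * (1 / (2 ^ 12 * l ^ 9)) := by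
      have := norm_sub_norm_le (LFunction χ (t : ℂ)) (LFunction χ (s : ℂ))
      linarith
    have h8 : 2 ^ 11 * l ^ 7 * (2 * l ^ 2 * (1 / (2 ^ 12 * l ^ 9))) = 1 := by
      field_simp
    have h9 := mul_le_mul_of_nonneg_left h7 (show 0 ≤ 2 ^ 11 * l ^ 7 by positivity)
    rw [mul_add, h8] at h9
    linarith

lemma L_lower_quad1 (χ : DirichletCharacter ℂ p) (hχ2 : χ ^ 2 = 1) {s : ℝ}
    (hs : 1 < s) (hs2 : s ≤ 2) : s - 1 ≤ 2 * ‖LFunction χ (s : ℂ)‖ := by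
  have hx : 0 < s - 1 := by linarith
  have h1 := three_four_one χ hx
  rw [add_sub_cancel, hχ2] at h1
  have h2 := L_triv_upper (1 : DirichletCharacter ℂ p) hs
  set A := ‖LFunction χ (s : ℂ)‖
  have hA : 0 ≤ A := norm_nonneg _
  have h3 : 1 + 1 / (s - 1) ≤ 2 / (s - 1) := by
    have : 1 ≤ 1 / (s - 1) := by rw [le_div_iff₀ hx]; linarith
    have e : 2 / (s - 1) = 1 / (s - 1) + 1 / (s - 1) := by ring
    linarith
  have h5 : 1 ≤ (2 / (s - 1) * A) ^ 4 := by
    refine h1.trans ?_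
    calc _ ≤ (2 / (s - 1)) ^ 3 * A ^ 4 * (2 / (s - 1)) := by
          gcongr
          exact h2.trans h3
      _ = _ := by ring
  by_contra hcon
  push Not at hcon
  have : (2 / (s - 1) * A) ^ 4 < 1 := by
    refine pow_lt_one₀ (by positivity) ?_ (by norm_num)
    rw [div_mul_eq_mul_div, div_lt_one hx]; exact hcon
  linarith

end Cyc

open Filter Asymptotics Real

namespace Cyc
open DirichletCharacter
variable {p : ℕ} [hp : Fact p.Prime]

lemma zetaMul_sum (χ : DirichletCharacter ℂ p) (n : ℕ) :
    zetaMul χ n = ∑ d ∈ n.divisors, χ (d : ZMod p) := by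
  rw [zetaMul, ArithmeticFunction.coe_zeta_mul_apply]
  refine Finset.sum_congr rfl fun d hd => ?_
  have : d ≠ 0 := (Nat.pos_of_mem_divisors hd).ne'
  simp [toArithmeticFunction, this]

lemma zetaMul_even_pow (χ : DirichletCharacter ℂ p) (hχ : χ ^ 2 = 1) {q : ℕ} (hq : q.Prime)
    (k : ℕ) : ∃ m : ℕ, 1 ≤ m ∧ zetaMul χ (q ^ (2 * k)) = m := by
  rw [zetaMul_sum, Nat.sum_divisors_prime_pow hq]
  push_cast
  simp only [map_pow]
  rcases MulChar.isQuadratic_iff_sq_eq_one.mpr hχ q with h | h | h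
  · refine ⟨1, le_rfl, ?_⟩
    rw [h, Finset.sum_range_succ']
    simp
  · refine ⟨2 * k + 1, by omega, ?_⟩
    rw [h]; simp
  · refine ⟨1, le_rfl, ?_⟩
    rw [h, neg_one_geom_sum, if_neg (by simp)]; simp

lemma zetaMul_sq (χ : DirichletCharacter ℂ p) (hχ : χ ^ 2 = 1) {n : ℕ} (hn : n ≠ 0) :
    1 ≤ (zetaMul χ (n ^ 2)).re := by
  have hn2 : n ^ 2 ≠ 0 := pow_ne_zero _ hn
  rw [χ.isMultiplicative_zetaMul.multiplicative_factorization _ hn2, Finsupp.prod]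
  have : ∀ q : ℕ, ∃ m : ℕ, q.Prime → 1 ≤ m ∧ zetaMul χ (q ^ ((n ^ 2).factorization q)) = m := by
    intro q
    by_cases hq : q.Prime
    · obtain ⟨m, h1, h2⟩ := zetaMul_even_pow χ hχ hq (n.factorization q)
      exact ⟨m, fun _ => ⟨h1, by simpa [Nat.factorization_pow] using h2⟩⟩
    · exact ⟨0, fun h => absurd h hq⟩
  choose m hm using this
  have hpr : ∀ q ∈ (n ^ 2).factorization.support, q.Prime := fun q hq => by
    rw [Nat.support_factorization] at hq
    exact Nat.prime_of_mem_primeFactors hq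
  rw [Finset.prod_congr rfl fun q hq => (hm q (hpr q hq)).2, ← Nat.cast_prod, Complex.natCast_re]
  have : 1 ≤ ∏ q ∈ (n ^ 2).factorization.support, m q :=
    Finset.one_le_prod' fun q hq => (hm q (hpr q hq)).1
  exact_mod_cast this

lemma lambert_eq (χ : DirichletCharacter ℂ p) {r : ℝ} (h0 : 0 < r) (h1 : r < 1) :
    Summable (fun n : ℕ+ => zetaMul χ n * ((r ^ (n : ℕ) : ℝ) : ℂ)) ∧
    ∑' n : ℕ+, zetaMul χ n * ((r ^ (n : ℕ) : ℝ) : ℂ) =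
      ∑' d : ℕ+, χ ((d : ℕ) : ZMod p) * ((r ^ (d : ℕ) / (1 - r ^ (d : ℕ)) : ℝ) : ℂ) := by
  have hs : Summable fun c : ℕ+ × ℕ+ => χ ((c.1 : ℕ) : ZMod p) * ((r ^ (c.1 * c.2 : ℕ) : ℝ) : ℂ) := by
    have h := summable_prod_mul_pow (𝕜 := ℝ) 0 (r := r) (by rw [Real.norm_of_nonneg h0.le]; exact h1)
    refine Summable.of_norm_bounded h fun c => ?_
    rw [norm_mul, Complex.norm_real, Real.norm_of_nonneg (by positivity)]
    simpa using mul_le_of_le_one_left (by positivity) (DirichletCharacter.norm_le_one χ _)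
  have hs2 := (sigmaAntidiagonalEquivProd.summable_iff).2 hs
  have hfib : ∀ n : ℕ+, HasSum (fun c : ((n : ℕ).divisorsAntidiagonal) =>
      ((fun c : ℕ+ × ℕ+ => χ ((c.1 : ℕ) : ZMod p) * ((r ^ (c.1 * c.2 : ℕ) : ℝ) : ℂ)) ∘
        sigmaAntidiagonalEquivProd) ⟨n, c⟩) (zetaMul χ n * ((r ^ (n : ℕ) : ℝ) : ℂ)) := by
    intro n
    convert hasSum_fintype _ using 1
    rw [zetaMul_sum, Finset.sum_mul]
    have e : ∀ c : ((n : ℕ).divisorsAntidiagonal),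
      ((fun c : ℕ+ × ℕ+ => χ ((c.1 : ℕ) : ZMod p) * ((r ^ (c.1 * c.2 : ℕ) : ℝ) : ℂ)) ∘
        sigmaAntidiagonalEquivProd) ⟨n, c⟩ =
        χ ((c.1.1 : ℕ) : ZMod p) * ((r ^ (c.1.1 * c.1.2 : ℕ) : ℝ) : ℂ) := fun c => rfl
    simp_rw [e]
    rw [Finset.univ_eq_attach, (n : ℕ).divisorsAntidiagonal.sum_attach
      (fun x : ℕ × ℕ => χ ((x.1 : ℕ) : ZMod p) * ((r ^ (x.1 * x.2 : ℕ) : ℝ) : ℂ)),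
      Nat.sum_divisorsAntidiagonal (fun x y => χ ((x : ℕ) : ZMod p) * ((r ^ (x * y : ℕ) : ℝ) : ℂ))]
    refine Finset.sum_congr rfl fun i hi => ?_
    rw [Nat.mul_div_cancel' (Nat.dvd_of_mem_divisors hi)]
  have hs3 := hs2.hasSum.sigma hfib
  refine ⟨hs3.summable, ?_⟩
  have e2 := sigmaAntidiagonalEquivProd.tsum_eq (f := fun c : ℕ+ × ℕ+ =>
    χ ((c.1 : ℕ) : ZMod p) * ((r ^ (c.1 * c.2 : ℕ) : ℝ) : ℂ))
  rw [hs3.tsum_eq]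
  refine Eq.trans e2 ?_
  rw [hs.tsum_prod]
  refine tsum_congr fun d => ?_
  dsimp only
  rw [tsum_mul_left]
  congr 1
  have hr : r ^ (d : ℕ) < 1 := pow_lt_one₀ h0.le h1 d.ne_zero
  have := (hasSum_geometric_of_lt_one (by positivity) hr).mul_left (r ^ (d : ℕ))
  rw [← Complex.ofReal_tsum, tsum_pnat_eq_tsum_succ (f := fun k : ℕ => r ^ ((d : ℕ) * k))]
  congr 1
  rw [div_eq_mul_inv, ← this.tsum_eq]
  refine tsum_congr fun k => ?_
  rw [← pow_mul, ← pow_add]; ring_nf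

lemma lambert_lower (χ : DirichletCharacter ℂ p) (hχ : χ ^ 2 = 1) {r : ℝ} (h0 : 0 < r) (h1 : r < 1)
    (M : ℕ) : M * r ^ (M ^ 2) ≤
    ‖∑' d : ℕ+, χ ((d : ℕ) : ZMod p) * ((r ^ (d : ℕ) / (1 - r ^ (d : ℕ)) : ℝ) : ℂ)‖ := by
  obtain ⟨hs, he⟩ := lambert_eq χ h0 h1
  rw [← he]
  refine le_trans ?_ (Complex.re_le_norm _)
  rw [Complex.re_tsum hs]
  have hs' := (Complex.hasSum_re hs.hasSum).summable
  have hnn : ∀ n : ℕ+, 0 ≤ (zetaMul χ n * ((r ^ (n : ℕ) : ℝ) : ℂ)).re := by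
    intro n
    rw [Complex.re_mul_ofReal]
    exact mul_nonneg (Complex.nonneg_iff.1 (zetaMul_nonneg hχ n)).1 (by positivity)
  have hinj : Function.Injective (fun n : ℕ => (Nat.succPNat n) ^ 2) := by
    intro a b h
    have h' := congrArg (fun x : ℕ+ => (x : ℕ)) h
    simp only [PNat.pow_coe, Nat.succPNat_coe] at h'
    have := Nat.pow_left_injective (n := 2) (by norm_num) h'
    simpa using this
  refine le_trans ?_ (hs'.sum_le_tsum ((Finset.range M).image (fun n : ℕ => (Nat.succPNat n) ^ 2))
    (fun n _ => hnn n))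
  rw [Finset.sum_image (fun a _ b _ h => hinj h)]
  have hc := Finset.card_nsmul_le_sum (Finset.range M)
    (fun n => (zetaMul χ ((Nat.succPNat n) ^ 2 : ℕ+) *
      ((r ^ (((Nat.succPNat n) ^ 2 : ℕ+) : ℕ) : ℝ) : ℂ)).re) (r ^ (M ^ 2)) (fun n hn => by
    have hn' : n + 1 ≤ M := Finset.mem_range.1 hn
    rw [Complex.re_mul_ofReal, PNat.pow_coe, Nat.succPNat_coe]
    have h2 := zetaMul_sq χ hχ (Nat.succ_ne_zero n)
    have h3 : r ^ (M ^ 2) ≤ r ^ ((n + 1 : ℕ) ^ 2) :=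
      pow_le_pow_of_le_one h0.le h1.le (Nat.pow_le_pow_left hn' 2)
    have h4 : 0 ≤ r ^ (M ^ 2) := by positivity
    change r ^ (M ^ 2) ≤ (zetaMul χ ((n + 1) ^ 2)).re * r ^ ((n + 1) ^ 2)
    change 1 ≤ (zetaMul χ ((n + 1) ^ 2)).re at h2
    nlinarith)
  rw [Finset.card_range, nsmul_eq_mul] at hc
  exact hc

end Cyc

open Filter Asymptotics Real

namespace Cyc
open DirichletCharacter
variable {p : ℕ} [hp : Fact p.Prime]

/-- auxiliary kernel -/
noncomputable def hker (u : ℝ) : ℝ := u⁻¹ - (Real.exp u - 1)⁻¹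

lemma exp_sub_pos {u : ℝ} (hu : 0 < u) : 0 < Real.exp u - 1 := by
  linarith [Real.add_one_lt_exp hu.ne']

lemma hker_nonneg {u : ℝ} (hu : 0 < u) : 0 ≤ hker u := by
  unfold hker
  rw [sub_nonneg]
  exact inv_anti₀ hu (by linarith [Real.add_one_le_exp u])

lemma hker_le_one {u : ℝ} (hu : 0 < u) : hker u ≤ 1 := by
  unfold hker
  have h1 := exp_sub_pos hu
  have h2 := Real.add_one_le_exp (-u)
  have h3 : Real.exp (-u) * Real.exp u = 1 := by rw [← Real.exp_add]; simp
  have h4 := Real.exp_pos u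
  rw [sub_le_iff_le_add, inv_le_iff_one_le_mul₀ hu]
  have h5 : (1 + (Real.exp u - 1)⁻¹) = Real.exp u / (Real.exp u - 1) := by field_simp; ring
  rw [h5, div_mul_eq_mul_div, le_div_iff₀ h1]
  nlinarith

lemma hker_anti : AntitoneOn hker (Set.Ioi 0) := by
  have hd : ∀ u ∈ Set.Ioi (0:ℝ), HasDerivAt hker (-(u ^ 2)⁻¹ - -Real.exp u / (Real.exp u - 1) ^ 2) u := by
    intro u hu
    exact (hasDerivAt_inv (ne_of_gt hu)).sub
      (((Real.hasDerivAt_exp u).sub_const 1).fun_inv (exp_sub_pos hu).ne')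
  refine antitoneOn_of_deriv_nonpos (convex_Ioi 0)
    (fun u hu => (hd u hu).continuousAt.continuousWithinAt)
    (fun u hu => (hd u (interior_subset hu)).differentiableAt.differentiableWithinAt)
    (fun u hu => ?_)
  rw [interior_Ioi] at hu
  rw [(hd u hu).deriv]
  have hu' : 0 < u := hu
  have h1 := exp_sub_pos hu'
  have h2 : u / 2 ≤ Real.sinh (u / 2) := Real.self_le_sinh_iff.2 (by linarith)
  rw [Real.sinh_eq] at h2
  have h3 : Real.exp (u / 2) * Real.exp (u / 2) = Real.exp u := by rw [← Real.exp_add]; ring_nf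
  have h4 : Real.exp (-(u / 2)) * Real.exp (u / 2) = 1 := by rw [← Real.exp_add]; simp
  have h5 := Real.exp_pos (u / 2)
  have h6 : u * Real.exp (u / 2) ≤ Real.exp u - 1 := by nlinarith
  have h7 : u ^ 2 * Real.exp u ≤ (Real.exp u - 1) ^ 2 := by
    calc u ^ 2 * Real.exp u = (u * Real.exp (u / 2)) ^ 2 := by rw [← h3]; ring
      _ ≤ _ := by gcongr
  rw [neg_div, sub_neg_eq_add, neg_add_nonpos_iff, inv_eq_one_div, div_le_div_iff₀ (by positivity) (by positivity)]
  linarith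

lemma summ_exp {δ : ℝ} (hδ : 0 < δ) : Summable fun n : ℕ => (Real.exp (n * δ) - 1)⁻¹ := by
  have hs : Summable fun n : ℕ => Real.exp (-δ) ^ n * (1 - Real.exp (-δ))⁻¹ :=
    (summable_geometric_of_lt_one (Real.exp_pos _).le (by rw [Real.exp_lt_one_iff]; linarith)).mul_right _
  have hr : Real.exp (-δ) < 1 := by rw [Real.exp_lt_one_iff]; linarith
  refine Summable.of_nonneg_of_le (fun n => ?_) (fun n => ?_) hs
  · refine inv_nonneg.2 ?_
    have : 0 ≤ n * δ := by positivity
    linarith [Real.add_one_le_exp (n * δ)]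
  · rcases Nat.eq_zero_or_pos n with rfl | hn
    · simp; exact hδ.le
    · have hn1 : (1:ℝ) ≤ n := by exact_mod_cast hn
      have h1 : 0 < Real.exp (n * δ) - 1 := exp_sub_pos (by positivity)
      rw [← Real.exp_nat_mul, inv_le_iff_one_le_mul₀ h1]
      have h2 : 0 < 1 - Real.exp (-δ) := by linarith
      rw [mul_assoc, inv_mul_eq_div, mul_div_assoc', le_div_iff₀ h2, one_mul, mul_sub, ← Real.exp_add]
      have : Real.exp (n * -δ) ≤ Real.exp (-δ) := Real.exp_le_exp.2 (by nlinarith)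
      have h3 : Real.exp (n * -δ + n * δ) = 1 := by rw [← Real.exp_zero]; congr 1; ring
      rw [h3]; linarith

lemma exp_inv_nonneg {δ : ℝ} (hδ : 0 < δ) (n : ℕ) : 0 ≤ (Real.exp (n * δ) - 1)⁻¹ := by
  refine inv_nonneg.2 ?_
  have : 0 ≤ n * δ := by positivity
  linarith [Real.add_one_le_exp (n * δ)]

lemma npow_le_one {σ : ℝ} (hσ : 0 < σ) (n : ℕ) : (n : ℝ) ^ (-σ) ≤ 1 := by
  rcases Nat.eq_zero_or_pos n with rfl | hn
  · simp [Real.zero_rpow (neg_ne_zero.2 hσ.ne')]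
  · exact Real.rpow_le_one_of_one_le_of_nonpos (by exact_mod_cast hn) (by linarith)

lemma lamb_s (χ : DirichletCharacter ℂ p) (hχ : χ ≠ 1) {δ σ : ℝ} (hδ : 0 < δ) (hσ : 0 < σ) :
    ‖∑' n : ℕ, χ (n : ZMod p) * (((n : ℝ) ^ (-σ) * (Real.exp (n * δ) - 1)⁻¹ : ℝ) : ℂ)‖ ≤
      ‖LFunction χ ((1 + σ : ℝ) : ℂ)‖ / δ + p := by
  have hs' : 1 < ((1 + σ : ℝ) : ℂ).re := by simpa using hσ
  have hsum := LSeriesSummable_of_one_lt_re χ hs'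
  unfold LSeriesSummable at hsum
  have hL := LFunction_eq_LSeries χ hs'
  rw [LSeries] at hL
  have e0 : LSeries.term (fun n : ℕ => χ (n : ZMod p)) ((1 + σ : ℝ) : ℂ) =
    fun n : ℕ => χ (n : ZMod p) * (((n : ℝ) ^ (-(1+σ)) : ℝ) : ℂ) :=
    funext fun n => term_eq χ (by linarith) n
  rw [e0] at hsum
  simp_rw [e0] at hL
  have hs2 : Summable fun n : ℕ => χ (n : ZMod p) * (((n : ℝ) ^ (-σ) * (Real.exp (n * δ) - 1)⁻¹ : ℝ) : ℂ) := by
    refine Summable.of_norm_bounded (summ_exp hδ) fun n => ?_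
    have h0 := exp_inv_nonneg hδ n
    rw [norm_mul, Complex.norm_real, Real.norm_of_nonneg (by positivity)]
    refine (mul_le_of_le_one_left (by positivity) (DirichletCharacter.norm_le_one χ _)).trans ?_
    exact mul_le_of_le_one_left h0 (npow_le_one hσ n)
  have hdec : ∀ n : ℕ, χ (n : ZMod p) * (((n : ℝ) ^ (-σ) * hker (n * δ) : ℝ) : ℂ) =
      ((δ⁻¹ : ℝ) : ℂ) * (χ (n : ZMod p) * (((n : ℝ) ^ (-(1+σ)) : ℝ) : ℂ)) -
        χ (n : ZMod p) * (((n : ℝ) ^ (-σ) * (Real.exp (n * δ) - 1)⁻¹ : ℝ) : ℂ) := by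
    intro n
    rcases Nat.eq_zero_or_pos n with rfl | hn
    · have h0 : χ 0 = 0 := χ.map_nonunit not_isUnit_zero
      rw [Nat.cast_zero, h0]; simp
    · have hn' : (0:ℝ) < n := by exact_mod_cast hn
      have : (n : ℝ) ^ (-σ) * hker (n * δ) = δ⁻¹ * (n : ℝ) ^ (-(1+σ)) -
          (n : ℝ) ^ (-σ) * (Real.exp (n * δ) - 1)⁻¹ := by
        rw [neg_add, Real.rpow_add hn', Real.rpow_neg_one, hker]
        field_simp
      rw [this]; push_cast; ring
  have hs3 := (hsum.mul_left ((δ⁻¹ : ℝ) : ℂ)).sub hs2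
  have hs3' : Summable fun n : ℕ => χ (n : ZMod p) * (((n : ℝ) ^ (-σ) * hker (n * δ) : ℝ) : ℂ) := by
    simp_rw [hdec]; exact hs3
  have hb := char_tsum_bound χ hχ (fun n : ℕ => (n : ℝ) ^ (-σ) * hker (n * δ)) 1 0
    (fun n => by
      rcases Nat.eq_zero_or_pos n with rfl | hn
      · simp [Real.zero_rpow (neg_ne_zero.2 hσ.ne')]
      · have hn' : (0:ℝ) < n := by exact_mod_cast hn
        exact mul_nonneg (by positivity) (hker_nonneg (by positivity)))
    (fun n hn => by
      have hn' : (0:ℝ) < n := by exact_mod_cast hn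
      refine mul_le_mul ?_ ?_ (hker_nonneg (by positivity)) (by positivity)
      · exact Real.rpow_le_rpow_of_nonpos hn' (by push_cast; linarith) (by linarith)
      · refine hker_anti (Set.mem_Ioi.2 (by positivity)) (Set.mem_Ioi.2 (by positivity)) ?_
        push_cast; nlinarith)
    hs3' (by simp [Real.zero_rpow (neg_ne_zero.2 hσ.ne')])
  simp_rw [hdec] at hb
  rw [(hsum.mul_left ((δ⁻¹ : ℝ) : ℂ)).tsum_sub hs2, tsum_mul_left, ← hL] at hb
  have h1 := hker_le_one hδ
  have hp0 : (0:ℝ) ≤ p := by positivity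
  simp only [Nat.cast_one, Real.one_rpow, one_mul, zero_add] at hb
  have hb2 : p * hker δ ≤ p := by nlinarith
  have h3 := norm_sub_norm_le (∑' n : ℕ, χ (n : ZMod p) * (((n : ℝ) ^ (-σ) * (Real.exp (n * δ) - 1)⁻¹ : ℝ) : ℂ))
    (((δ⁻¹ : ℝ) : ℂ) * LFunction χ ((1 + σ : ℝ) : ℂ))
  rw [norm_sub_rev, norm_mul, Complex.norm_real, Real.norm_of_nonneg (by positivity), inv_mul_eq_div] at h3
  linarith

lemma lamb_1 (χ : DirichletCharacter ℂ p) (hχ : χ ≠ 1) {δ : ℝ} (hδ : 0 < δ) :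
    ‖∑' n : ℕ, χ (n : ZMod p) * (((Real.exp (n * δ) - 1)⁻¹ : ℝ) : ℂ)‖ ≤
      ‖LFunction χ 1‖ / δ + p := by
  have h1 : Tendsto (fun σ : ℝ => ∑' n : ℕ, χ (n : ZMod p) *
      (((n : ℝ) ^ (-σ) * (Real.exp (n * δ) - 1)⁻¹ : ℝ) : ℂ)) (nhdsWithin 0 (Set.Ioi 0))
      (nhds (∑' n : ℕ, χ (n : ZMod p) * (((Real.exp (n * δ) - 1)⁻¹ : ℝ) : ℂ))) := by
    refine tendsto_tsum_of_dominated_convergence (summ_exp hδ) (fun n => ?_) ?_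
    · rcases Nat.eq_zero_or_pos n with rfl | hn
      · simp
      · have hn' : (0:ℝ) < n := by exact_mod_cast hn
        have : ContinuousAt (fun σ : ℝ => χ (n : ZMod p) *
          (((n : ℝ) ^ (-σ) * (Real.exp (n * δ) - 1)⁻¹ : ℝ) : ℂ)) 0 := by
          refine continuousAt_const.mul (Complex.continuous_ofReal.continuousAt.comp ?_)
          refine ContinuousAt.mul ?_ continuousAt_const
          exact continuousAt_const.rpow continuousAt_id.neg (Or.inl hn'.ne')
        have h := this.tendsto.mono_left (nhdsWithin_le_nhds (s := Set.Ioi 0))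
        simpa using h
    · filter_upwards [self_mem_nhdsWithin] with σ hσ n
      have h0 := exp_inv_nonneg hδ n
      rw [norm_mul, Complex.norm_real, Real.norm_of_nonneg (by positivity)]
      refine (mul_le_of_le_one_left (by positivity) (DirichletCharacter.norm_le_one χ _)).trans ?_
      exact mul_le_of_le_one_left h0 (npow_le_one hσ n)
  have h2 : Tendsto (fun σ : ℝ => ‖LFunction χ ((1 + σ : ℝ) : ℂ)‖ / δ + p) (nhdsWithin 0 (Set.Ioi 0))
      (nhds (‖LFunction χ 1‖ / δ + p)) := by
    have : Continuous (fun σ : ℝ => ‖LFunction χ ((1 + σ : ℝ) : ℂ)‖ / δ + p) := by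
      have := (differentiable_LFunction hχ).continuous
      fun_prop
    have h := (this.tendsto 0).mono_left (nhdsWithin_le_nhds (s := Set.Ioi 0))
    simpa using h
  refine le_of_tendsto_of_tendsto h1.norm h2 ?_
  filter_upwards [self_mem_nhdsWithin] with σ hσ using lamb_s χ hχ hδ hσ

lemma L_one_lower (χ : DirichletCharacter ℂ p) (hχ : χ ≠ 1) (hχ2 : χ ^ 2 = 1) :
    1 ≤ 36 * p * ‖LFunction χ 1‖ := by
  have hp0 : (0:ℝ) < p := by exact_mod_cast hp.out.pos
  set M : ℕ := 6 * p with hM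
  have hM0 : (0:ℝ) < M := by rw [hM]; push_cast; positivity
  set δ : ℝ := ((M : ℝ) ^ 2)⁻¹ with hδ'
  have hδ : 0 < δ := by positivity
  have h1 := lamb_1 χ hχ hδ
  have h2 := lambert_lower χ hχ2 (Real.exp_pos (-δ)) (by rw [Real.exp_lt_one_iff]; linarith) M
  have e : ∑' d : ℕ+, χ ((d : ℕ) : ZMod p) * ((Real.exp (-δ) ^ (d : ℕ) / (1 - Real.exp (-δ) ^ (d : ℕ)) : ℝ) : ℂ)
      = ∑' n : ℕ, χ (n : ZMod p) * (((Real.exp (n * δ) - 1)⁻¹ : ℝ) : ℂ) := by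
    have e1 : ∀ d : ℕ, Real.exp (-δ) ^ d / (1 - Real.exp (-δ) ^ d) = (Real.exp (d * δ) - 1)⁻¹ := by
      intro d
      rw [← Real.exp_nat_mul, mul_neg, Real.exp_neg]
      have := Real.exp_pos (d * δ)
      field_simp
    simp_rw [e1]
    rw [tsum_pnat_eq_tsum_succ (f := fun n : ℕ => χ (n : ZMod p) * (((Real.exp (n * δ) - 1)⁻¹ : ℝ) : ℂ))]
    refine (Function.Injective.tsum_eq (g := fun n : ℕ => n + 1) (add_left_injective 1) (f := fun n : ℕ => χ (n : ZMod p) * (((Real.exp (n * δ) - 1)⁻¹ : ℝ) : ℂ)) ?_)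
    intro n hn
    rcases n with _ | n
    · exact absurd (by simp) hn
    · exact ⟨n, rfl⟩
  rw [e] at h2
  have h3 : Real.exp (-δ) ^ M ^ 2 = Real.exp (-1) := by
    rw [← Real.exp_nat_mul]; congr 1; push_cast; rw [hδ']; field_simp
  rw [h3] at h2
  have h4 : (1:ℝ) / 3 ≤ Real.exp (-1) := by
    rw [Real.exp_neg, ← one_div]
    exact one_div_le_one_div_of_le (Real.exp_pos _) (by linarith [Real.exp_one_lt_d9])
  have h5 : ‖LFunction χ 1‖ / δ = M ^ 2 * ‖LFunction χ 1‖ := by rw [hδ', div_inv_eq_mul, mul_comm]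
  rw [h5] at h1
  have h6 : (M : ℝ) = 6 * p := by rw [hM]; push_cast; ring
  have h7 : (M : ℝ) * (1 / 3) ≤ M ^ 2 * ‖LFunction χ 1‖ + p := by
    have : (M : ℝ) * (1/3) ≤ M * Real.exp (-1) := by gcongr
    linarith
  rw [h6] at h7
  have h8 : (p : ℝ) * 1 ≤ p * (36 * p * ‖LFunction χ 1‖) := by linarith
  exact le_of_mul_le_mul_left h8 hp0

lemma L_lower_quad (χ : DirichletCharacter ℂ p) (hχ : χ ≠ 1) (hχ2 : χ ^ 2 = 1) {s : ℝ}
    (hs : 1 < s) (hs2 : s ≤ 2) : 1 ≤ 180 * p * ell p ^ 2 * ‖LFunction χ (s : ℂ)‖ := by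
  have hp0 : (0:ℝ) < p := by exact_mod_cast hp.out.pos
  have h1 := L_one_lower χ hχ hχ2
  have h2 := L_lower_quad1 χ hχ2 hs hs2
  have h3 : ‖LFunction χ 1 - LFunction χ (s : ℂ)‖ ≤ 2 * ell p ^ 2 * (s - 1) := by
    have hl : Tendsto (fun t : ℝ => ‖LFunction χ (t : ℂ) - LFunction χ (s : ℂ)‖) (nhdsWithin 1 (Set.Ioi 1))
        (nhds ‖LFunction χ ((1:ℝ):ℂ) - LFunction χ (s : ℂ)‖) := by
      have hc := (differentiable_LFunction hχ).continuous
      have : Continuous (fun t : ℝ => ‖LFunction χ (t : ℂ) - LFunction χ (s : ℂ)‖) := by fun_prop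
      exact (this.tendsto 1).mono_left nhdsWithin_le_nhds
    have hr : Tendsto (fun t : ℝ => 2 * ell p ^ 2 * |t - s|) (nhdsWithin 1 (Set.Ioi 1))
        (nhds (2 * ell p ^ 2 * |1 - s|)) := by
      have : Continuous (fun t : ℝ => 2 * ell p ^ 2 * |t - s|) := by fun_prop
      exact (this.tendsto 1).mono_left nhdsWithin_le_nhds
    have := le_of_tendsto_of_tendsto hl hr (by
      filter_upwards [self_mem_nhdsWithin] with t ht using L_lip χ hχ ht hs)
    rw [abs_sub_comm, abs_of_pos (by linarith)] at this
    simpa using this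
  have h4 := norm_sub_norm_le (LFunction χ 1) (LFunction χ (s : ℂ))
  have h5 := one_le_ell p
  have h6 : 1 ≤ ell p ^ 2 := one_le_pow₀ h5
  have h7 : ‖LFunction χ 1‖ ≤ 5 * ell p ^ 2 * ‖LFunction χ (s : ℂ)‖ := by
    have a : 2 * ell p ^ 2 * (s - 1) ≤ 2 * ell p ^ 2 * (2 * ‖LFunction χ (s : ℂ)‖) := by gcongr
    have b := norm_nonneg (LFunction χ (s : ℂ))
    nlinarith
  calc (1:ℝ) ≤ 36 * p * ‖LFunction χ 1‖ := h1
    _ ≤ 36 * p * (5 * ell p ^ 2 * ‖LFunction χ (s : ℂ)‖) := by gcongr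
    _ = _ := by ring

end Cyc

open Filter Asymptotics Real

namespace Cyc
open DirichletCharacter

lemma zeta_logDeriv_bound : ∃ C : ℝ, 0 < C ∧ ∀ u : ℝ, 0 < u → u ≤ 1 →
    ‖-(deriv riemannZeta ((1 + u : ℝ) : ℂ) / riemannZeta ((1 + u : ℝ) : ℂ)) - ((1 / u : ℝ) : ℂ)‖ ≤ C := by
  have hc := continuousOn_neg_logDeriv_LFunctionTrivChar₁ 1
  have hz : (LFunctionTrivChar 1) = riemannZeta := LFunction_modOne_eq
  have hK : IsCompact ((fun u : ℝ => ((1 + u : ℝ) : ℂ)) '' Set.Icc 0 1) :=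
    isCompact_Icc.image (by fun_prop)
  obtain ⟨C, hC⟩ := hK.exists_bound_of_continuousOn (hc.mono (by
    rintro _ ⟨u, hu, rfl⟩
    right
    rw [hz]
    exact riemannZeta_ne_zero_of_one_le_re (by simpa using hu.1)))
  refine ⟨|C| + 1, by positivity, fun u hu0 hu1 => ?_⟩
  have h := hC ((1 + u : ℝ) : ℂ) ⟨u, ⟨hu0.le, hu1⟩, rfl⟩
  have hne : ((1 + u : ℝ) : ℂ) ≠ 1 := by
    intro h; have := congrArg Complex.re h; simp at this; exact hu0.ne' this
  rw [deriv_LFunctionTrivChar₁_apply_of_ne_one 1 hne, LFunctionTrivChar₁, Function.update_of_ne hne, hz] at h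
  have hzn : riemannZeta ((1 + u : ℝ) : ℂ) ≠ 0 := riemannZeta_ne_zero_of_one_le_re (by simpa using hu0.le)
  have hu' : (u : ℂ) ≠ 0 := by exact_mod_cast hu0.ne'
  have e : -((((1 + u : ℝ) : ℂ) - 1) * deriv riemannZeta ((1 + u : ℝ) : ℂ) + riemannZeta ((1 + u : ℝ) : ℂ)) /
      ((((1 + u : ℝ) : ℂ) - 1) * riemannZeta ((1 + u : ℝ) : ℂ)) =
      -(deriv riemannZeta ((1 + u : ℝ) : ℂ) / riemannZeta ((1 + u : ℝ) : ℂ)) - ((1 / u : ℝ) : ℂ) := by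
    have : (((1 + u : ℝ) : ℂ) - 1) = u := by push_cast; ring
    rw [this]
    push_cast at hzn ⊢
    field_simp
    ring
  rw [e] at h
  linarith [le_abs_self C]

variable {p : ℕ} [hp : Fact p.Prime]

lemma triv_logDeriv {u : ℝ} (hu : 0 < u) :
    ‖deriv (LFunction (1 : DirichletCharacter ℂ p)) ((1 + u : ℝ) : ℂ) /
        LFunction (1 : DirichletCharacter ℂ p) ((1 + u : ℝ) : ℂ) -
      deriv riemannZeta ((1 + u : ℝ) : ℂ) / riemannZeta ((1 + u : ℝ) : ℂ)‖ ≤ ell p := by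
  set s : ℂ := ((1 + u : ℝ) : ℂ) with hs
  have hne : s ≠ 1 := by
    intro h; have := congrArg Complex.re h; simp [hs] at this; exact hu.ne' this
  have hp0 : (p : ℂ) ≠ 0 := by exact_mod_cast hp.out.ne_zero
  have hev : LFunction (1 : DirichletCharacter ℂ p) =ᶠ[nhds s]
      fun w => (1 - (p : ℂ) ^ (-w)) * riemannZeta w := by
    filter_upwards [isOpen_ne.mem_nhds hne] with w hw
    have := LFunctionTrivChar_eq_mul_riemannZeta (N := p) hw
    rw [hp.out.primeFactors, Finset.prod_singleton] at this
    exact this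
  have hd1 : HasDerivAt (fun w : ℂ => (1 - (p : ℂ) ^ (-w))) ((p : ℂ) ^ (-s) * Complex.log p) s := by
    have := ((hasDerivAt_neg s).const_cpow (c := (p : ℂ)) (Or.inl hp0)).const_sub 1
    refine this.congr_deriv ?_
    ring
  have hd2 : HasDerivAt riemannZeta (deriv riemannZeta s) s := (differentiableAt_riemannZeta hne).hasDerivAt
  have hzn : riemannZeta s ≠ 0 := riemannZeta_ne_zero_of_one_le_re (by simpa [hs] using hu.le)
  set q : ℝ := (p : ℝ) ^ (-(1 + u)) with hq
  have hqs : (p : ℂ) ^ (-s) = (q : ℂ) := by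
    rw [hq, Complex.ofReal_cpow (by positivity), hs]; push_cast; rfl
  have hp2 : (2:ℝ) ≤ p := by exact_mod_cast hp.out.two_le
  have hq0 : 0 < q := by positivity
  have hq1 : q ≤ 1 / 2 := by
    calc q ≤ (p : ℝ) ^ (-1 : ℝ) := Real.rpow_le_rpow_of_exponent_le (by linarith) (by linarith)
      _ = 1 / p := by rw [Real.rpow_neg_one, one_div]
      _ ≤ 1 / 2 := one_div_le_one_div_of_le (by norm_num) hp2
  have hq' : (1 - (q : ℂ)) ≠ 0 := by
    have : (1 - q) ≠ 0 := by linarith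
    exact_mod_cast this
  rw [hev.deriv_eq, (hd1.fun_mul hd2).deriv, hev.eq_of_nhds, hqs]
  have e : (↑q * Complex.log ↑p * riemannZeta s + (1 - (q : ℂ)) * deriv riemannZeta s) /
      ((1 - (q : ℂ)) * riemannZeta s) - deriv riemannZeta s / riemannZeta s =
      ((q * Real.log p / (1 - q) : ℝ) : ℂ) := by
    push_cast
    field_simp
    ring
  rw [e, Complex.norm_real]
  have hl := Real.log_natCast_nonneg p
  rw [Real.norm_of_nonneg (div_nonneg (by positivity) (by linarith)), ell, div_le_iff₀ (by linarith)]
  nlinarith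

lemma quad_card : (Finset.univ.filter fun χ : DirichletCharacter ℂ p => χ ≠ 1 ∧ χ ^ 2 = 1).card ≤ 1 := by
  classical
  obtain ⟨g, hg⟩ := IsCyclic.exists_generator (α := (ZMod p)ˣ)
  have key : ∀ χ : DirichletCharacter ℂ p, χ ≠ 1 → χ ^ 2 = 1 → χ g = -1 := by
    intro χ h1 h2
    rcases MulChar.isQuadratic_iff_sq_eq_one.mpr h2 g with h | h | h
    · exact absurd h ((g.isUnit.map χ).ne_zero)
    · refine absurd ((MulChar.eq_iff hg χ 1).2 ?_) h1
      rw [h]; simp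
    · exact h
  rw [Finset.card_le_one]
  intro a ha b hb
  simp only [Finset.mem_filter] at ha hb
  exact (MulChar.eq_iff hg a b).2 (by rw [key a ha.2.1 ha.2.2, key b hb.2.1 hb.2.2])

open ArithmeticFunction.vonMangoldt in
/-- The Dirichlet series -/
noncomputable def fp (p : ℕ) (u : ℝ) : ℝ := ∑' n : ℕ, residueClass (1 : ZMod p) n * (n : ℝ) ^ (-(1 + u))

open ArithmeticFunction.vonMangoldt in
lemma fp_term (u : ℝ) (n : ℕ) : LSeries.term (fun n => ((residueClass (1 : ZMod p) n : ℝ) : ℂ)) ((1 + u : ℝ) : ℂ) n =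
   ((residueClass (1 : ZMod p) n * (n : ℝ) ^ (-(1 + u)) : ℝ) : ℂ) := by
  rcases eq_or_ne n 0 with rfl | hn
  · simp
  · rw [LSeries.term_of_ne_zero hn, Complex.ofReal_mul, Complex.ofReal_cpow (by positivity)]
    push_cast
    rw [Complex.cpow_neg, div_eq_mul_inv]

open ArithmeticFunction.vonMangoldt in
lemma fp_summable {u : ℝ} (hu : 0 < u) :
    Summable fun n : ℕ => residueClass (1 : ZMod p) n * (n : ℝ) ^ (-(1 + u)) := by
  have h : LSeriesSummable (fun n => ((residueClass (1 : ZMod p) n : ℝ) : ℂ)) ((1 + u : ℝ) : ℂ) :=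
    LSeriesSummable_of_abscissaOfAbsConv_lt_re <|
      (abscissaOfAbsConv_residueClass_le_one (1 : ZMod p)).trans_lt (by
        rw [Complex.ofReal_re]; exact_mod_cast (by linarith : (1:ℝ) < 1 + u))
  unfold LSeriesSummable at h
  have e : LSeries.term (fun n => ((residueClass (1 : ZMod p) n : ℝ) : ℂ)) ((1 + u : ℝ) : ℂ) =
    fun n => ((residueClass (1 : ZMod p) n * (n : ℝ) ^ (-(1 + u)) : ℝ) : ℂ) := funext fun n => fp_term u n
  rw [e] at h
  exact Complex.summable_ofReal.1 h

theorem propF : ∃ C : ℝ, 0 < C ∧ ∀ p : ℕ, p.Prime → ∀ u : ℝ, 0 < u → u ≤ 1 →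
    |fp p u - 1 / ((p - 1) * u)| ≤ C * ell p ^ 9 := by
  obtain ⟨C, hC0, hC⟩ := zeta_logDeriv_bound
  refine ⟨C + 1 + 2 ^ 12 + 720, by positivity, fun p hp' u hu0 hu1 => ?_⟩
  have hp : Fact p.Prime := ⟨hp'⟩
  have hs' : 1 < ((1 + u : ℝ) : ℂ).re := by simpa using hu0
  have h1 := ArithmeticFunction.vonMangoldt.LSeries_residueClass_eq (q := p) (a := 1) isUnit_one hs'
  rw [LSeries] at h1
  simp_rw [fp_term u] at h1
  rw [← Complex.ofReal_tsum] at h1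
  change ((fp p u : ℝ) : ℂ) = _ at h1
  have hinv : ∀ χ : DirichletCharacter ℂ p, χ ((1 : ZMod p)⁻¹) = 1 := by intro χ; simp
  simp_rw [hinv, one_mul] at h1
  classical
  rw [← Finset.add_sum_erase _ _ (Finset.mem_univ (1 : DirichletCharacter ℂ p)), Nat.totient_prime hp'] at h1
  have hp2 : (2:ℝ) ≤ p := by exact_mod_cast hp'.two_le
  have hcast : ((p - 1 : ℕ) : ℂ) = ((p - 1 : ℝ) : ℂ) := by
    rw [Nat.cast_sub hp'.one_le]; push_cast; ring
  rw [hcast] at h1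
  set s : ℂ := ((1 + u : ℝ) : ℂ) with hs
  set T : DirichletCharacter ℂ p → ℂ := fun χ => deriv (LFunction χ) s / LFunction χ s with hT
  have hl1 := one_le_ell p
  have hl9 : ell p ≤ ell p ^ 9 := le_self_pow₀ hl1 (by norm_num)
  have hl49 : ell p ^ 4 ≤ ell p ^ 9 := pow_le_pow_right₀ hl1 (by norm_num)
  have b1 : ‖-T 1 - ((1 / u : ℝ) : ℂ)‖ ≤ C + ell p := by
    have a := hC u hu0 hu1
    have b := triv_logDeriv (p := p) hu0
    calc ‖-T 1 - ((1 / u : ℝ) : ℂ)‖ = ‖(-(deriv riemannZeta s / riemannZeta s) - ((1 / u : ℝ) : ℂ)) -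
          (T 1 - deriv riemannZeta s / riemannZeta s)‖ := by congr 1; ring
      _ ≤ _ := (norm_sub_le _ _).trans (add_le_add a b)
  have hs1 : 1 < 1 + u := by linarith
  have hs2 : 1 + u ≤ 2 := by linarith
  have b2 : ∀ χ ∈ Finset.univ.erase (1 : DirichletCharacter ℂ p), ‖T χ‖ ≤ 2 ^ 12 * ell p ^ 9 +
      if χ ≠ 1 ∧ χ ^ 2 = 1 then 360 * p * ell p ^ 4 else 0 := by
    intro χ hχ
    have hχ1 : χ ≠ 1 := Finset.ne_of_mem_erase hχ
    have hu := L_deriv_upper χ hχ1 hs1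
    rw [hT]; simp only; rw [norm_div]
    by_cases h2 : χ ^ 2 = 1
    · rw [if_pos ⟨hχ1, h2⟩]
      have hlow := L_lower_quad χ hχ1 h2 hs1 hs2
      have hpos : 0 < ‖LFunction χ s‖ := by
        by_contra h
        have h0 : ‖LFunction χ s‖ = 0 := le_antisymm (not_lt.1 h) (norm_nonneg _)
        rw [← hs, h0] at hlow; norm_num at hlow
      have : ‖deriv (LFunction χ) s‖ / ‖LFunction χ s‖ ≤ 360 * p * ell p ^ 4 := by
        rw [div_le_iff₀ hpos]
        calc ‖deriv (LFunction χ) s‖ ≤ 2 * ell p ^ 2 * 1 := by rw [mul_one]; exact hu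
          _ ≤ 2 * ell p ^ 2 * (180 * p * ell p ^ 2 * ‖LFunction χ s‖) := by gcongr
          _ = _ := by ring
      have h0 : 0 ≤ 2 ^ 12 * ell p ^ 9 := by positivity
      linarith
    · rw [if_neg (by tauto), add_zero]
      have hlow := L_lower_complex χ hχ1 h2 hs1 hs2
      have hpos : 0 < ‖LFunction χ s‖ := by
        by_contra h
        have h0 : ‖LFunction χ s‖ = 0 := le_antisymm (not_lt.1 h) (norm_nonneg _)
        rw [← hs, h0] at hlow; norm_num at hlow
      rw [div_le_iff₀ hpos]
      calc ‖deriv (LFunction χ) s‖ ≤ 2 * ell p ^ 2 * 1 := by rw [mul_one]; exact hu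
        _ ≤ 2 * ell p ^ 2 * (2 ^ 11 * ell p ^ 7 * ‖LFunction χ s‖) := by gcongr
        _ = _ := by ring
  have hcard : (Fintype.card (DirichletCharacter ℂ p) : ℝ) = p - 1 := by
    rw [← Nat.card_eq_fintype_card, DirichletCharacter.card_eq_totient_of_hasEnoughRootsOfUnity, Nat.totient_prime hp',
      Nat.cast_sub hp'.one_le]; simp
  have b3 : ‖∑ χ ∈ Finset.univ.erase (1 : DirichletCharacter ℂ p), T χ‖ ≤
      (p - 1) * (2 ^ 12 * ell p ^ 9) + 360 * p * ell p ^ 4 := by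
    refine (norm_sum_le _ _).trans ((Finset.sum_le_sum b2).trans ?_)
    refine (Finset.sum_le_sum_of_subset_of_nonneg (Finset.erase_subset _ _) (fun χ _ _ => ?_)).trans ?_
    · split_ifs <;> positivity
    rw [Finset.sum_add_distrib, ← Finset.sum_filter, Finset.sum_const, Finset.sum_const, nsmul_eq_mul, nsmul_eq_mul,
      Finset.card_univ, hcard]
    have := quad_card (p := p)
    have h1 : ((Finset.univ.filter fun χ : DirichletCharacter ℂ p => χ ≠ 1 ∧ χ ^ 2 = 1).card : ℝ) ≤ 1 := by
      exact_mod_cast this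
    have h2 : 0 ≤ 360 * p * ell p ^ 4 := by positivity
    nlinarith
  have key : ((fp p u - 1 / ((p - 1) * u) : ℝ) : ℂ) = (((p - 1 : ℝ)⁻¹ : ℝ) : ℂ) *
      ((-T 1 - ((1 / u : ℝ) : ℂ)) - ∑ χ ∈ Finset.univ.erase (1 : DirichletCharacter ℂ p), T χ) := by
    have hpc : ((p : ℂ) - 1) ≠ 0 := by
      have : (p - 1 : ℝ) ≠ 0 := by linarith
      exact_mod_cast this
    have huc : (u : ℂ) ≠ 0 := by exact_mod_cast hu0.ne'
    rw [Complex.ofReal_sub, h1]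
    push_cast
    field_simp
    ring
  have := congrArg norm key
  rw [Complex.norm_real, Real.norm_eq_abs, norm_mul, Complex.norm_real,
    Real.norm_of_nonneg (inv_nonneg.2 (by linarith))] at this
  rw [this]
  have b4 := (norm_sub_le (-T 1 - ((1 / u : ℝ) : ℂ)) (∑ χ ∈ Finset.univ.erase (1 : DirichletCharacter ℂ p), T χ)).trans
    (add_le_add b1 b3)
  rw [inv_mul_le_iff₀ (by linarith)]
  refine b4.trans ?_
  have hp1 : (1:ℝ) ≤ p - 1 := by linarith
  have hL1 : 1 ≤ ell p ^ 9 := one_le_pow₀ hl1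
  have c1 : C ≤ (p - 1) * (C * ell p ^ 9) := by
    have : C * 1 ≤ C * ell p ^ 9 := by gcongr
    nlinarith
  have c2 : ell p ≤ (p - 1) * ell p ^ 9 := by nlinarith
  have c3 : 360 * p * ell p ^ 4 ≤ 720 * ((p - 1) * ell p ^ 9) := by
    have : (p : ℝ) * ell p ^ 4 ≤ (2 * (p - 1)) * ell p ^ 9 := by
      apply mul_le_mul _ hl49 (by positivity) (by linarith)
      linarith
    linarith
  nlinarith

end Cyc

open Filter Asymptotics Real

namespace Cyc
open ArithmeticFunction.vonMangoldt

/-- primes up to N congruent to 1 mod p -/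
def Qs (p N : ℕ) : Finset ℕ := (Finset.range (N + 1)).filter (fun q => q.Prime ∧ (q : ZMod p) = 1)

/-- sum of reciprocals -/
noncomputable def Sp (p N : ℕ) : ℝ := ∑ q ∈ Qs p N, (1 / q : ℝ)

lemma mem_Qs {p N q : ℕ} : q ∈ Qs p N ↔ q ≤ N ∧ q.Prime ∧ (q : ZMod p) = 1 := by
  simp [Qs]

lemma weight_lower {u0 L B : ℝ} (hu : 0 < u0) (hu1 : u0 ≤ 1) (hL : 1 ≤ L * u0) (hLB : L ≤ B) {J : ℕ}
    (hJ : B < 2 ^ J) : 1 / L ≤ Real.exp 2 * ∑ j ∈ Finset.range J, (u0 / 2 ^ j) * Real.exp (-(u0 / 2 ^ j) * L) := by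
  have hL0 : 0 < L := by
    by_contra h
    have : L * u0 ≤ 0 := mul_nonpos_of_nonpos_of_nonneg (not_lt.1 h) hu.le
    linarith
  obtain ⟨n, h1, h2⟩ := exists_nat_pow_near hL (one_lt_two)
  have hn : n < J := by
    have : (2:ℝ) ^ n < 2 ^ J := by nlinarith
    exact (pow_lt_pow_iff_right₀ one_lt_two).1 this
  have h3 := Finset.single_le_sum (f := fun j => (u0 / 2 ^ j) * Real.exp (-(u0 / 2 ^ j) * L))
    (fun j _ => by positivity) (Finset.mem_range.2 hn)
  have h2n : (0:ℝ) < 2 ^ n := by positivity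
  have h4 : 1 ≤ (u0 / 2 ^ n) * L := by
    rw [div_mul_eq_mul_div, le_div_iff₀ h2n]; linarith
  have h5 : (u0 / 2 ^ n) * L ≤ 2 := by
    rw [div_mul_eq_mul_div, div_le_iff₀ h2n]; rw [pow_succ] at h2; linarith
  have h6 : 1 / L ≤ u0 / 2 ^ n := by rw [div_le_iff₀ hL0]; exact h4
  have h7 : 1 ≤ Real.exp 2 * Real.exp (-(u0 / 2 ^ n) * L) := by
    rw [← Real.exp_add]; exact Real.one_le_exp (by linarith)
  calc 1 / L ≤ (u0 / 2 ^ n) * 1 := by rw [mul_one]; exact h6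
    _ ≤ (u0 / 2 ^ n) * (Real.exp 2 * Real.exp (-(u0 / 2 ^ n) * L)) := by gcongr
    _ = Real.exp 2 * ((u0 / 2 ^ n) * Real.exp (-(u0 / 2 ^ n) * L)) := by ring
    _ ≤ _ := by gcongr

lemma weight_upper (L : ℝ) (J : ℕ) :
    L * ∑ j ∈ Finset.range J, (1 / 2 ^ j) * Real.exp (-(1 / 2 ^ j) * L) ≤ 2 := by
  have h : ∀ j : ℕ, L * ((1 / 2 ^ j) * Real.exp (-(1 / 2 ^ j) * L)) ≤
      2 * Real.exp (-(1 / 2 ^ (j + 1)) * L) - 2 * Real.exp (-(1 / 2 ^ j) * L) := by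
    intro j
    set v : ℝ := (1 / 2 ^ j) * L with hv
    have e1 : -(1 / 2 ^ (j + 1)) * L = -v / 2 := by rw [hv, pow_succ]; field_simp
    have e2 : -(1 / 2 ^ j) * L = -v := by rw [hv]; ring
    rw [e1, e2]
    have e3 : Real.exp (-v / 2) = Real.exp (-v) * Real.exp (v / 2) := by rw [← Real.exp_add]; ring_nf
    have h1 := Real.add_one_le_exp (v / 2)
    have h2 := Real.exp_pos (-v)
    rw [e3]
    have : L * (1 / 2 ^ j * Real.exp (-v)) = v * Real.exp (-v) := by rw [hv]; ring
    rw [this]; nlinarith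
  rw [Finset.mul_sum]
  refine (Finset.sum_le_sum fun j _ => h j).trans ?_
  rw [Finset.sum_range_sub (fun j => 2 * Real.exp (-(1 / 2 ^ j) * L))]
  rcases le_or_gt 0 L with h0 | h0
  · have : Real.exp (-(1 / 2 ^ J) * L) ≤ 1 := by
      rw [Real.exp_le_one_iff]
      have : 0 ≤ (1 / 2 ^ J) * L := by positivity
      linarith
    have := Real.exp_pos (-(1 / 2 ^ 0) * L)
    linarith
  · have : Real.exp (-(1 / 2 ^ J) * L) ≤ Real.exp (-(1 / 2 ^ 0) * L) := by
      rw [Real.exp_le_exp]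
      have : (1:ℝ) / 2 ^ J ≤ 1 / 2 ^ 0 := by
        apply one_div_le_one_div_of_le (by norm_num)
        exact pow_le_pow_right₀ (by norm_num) (Nat.zero_le _)
      nlinarith
    linarith

lemma geom_le (J : ℕ) (u0 : ℝ) (h : 0 ≤ u0) : ∑ j ∈ Finset.range J, u0 / 2 ^ j ≤ 2 * u0 := by
  have h1 : ∀ j : ℕ, u0 / 2 ^ j = u0 * (1 / 2 : ℝ) ^ j := by intro j; rw [one_div, inv_pow]; rfl
  simp_rw [h1]
  rw [← Finset.mul_sum]
  have := (summable_geometric_two).sum_le_tsum (Finset.range J) (fun _ _ => by positivity)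
  rw [tsum_geometric_two] at this
  nlinarith

lemma Sp_small {p : ℕ} (hp : p.Prime) (K : ℕ) : Sp p K ≤ (1 + Real.log K) / p := by
  have hp0 : (0:ℝ) < p := by exact_mod_cast hp.pos
  have hsub : Qs p K ⊆ (Finset.range K).image (fun m => (m + 1) * p + 1) := by
    intro q hq
    rw [mem_Qs] at hq
    obtain ⟨h1, h2, h3⟩ := hq
    have h4 : ((q : ℕ) : ZMod p) = ((1 : ℕ) : ZMod p) := by simpa using h3
    rw [ZMod.natCast_eq_natCast_iff] at h4
    have h5 : p ∣ q - 1 := (Nat.modEq_iff_dvd' h2.one_le).1 h4.symm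
    obtain ⟨m, hm⟩ := h5
    have hq2 := h2.two_le
    rcases m with _ | m
    · omega
    rw [Finset.mem_image]
    refine ⟨m, ?_, ?_⟩
    · rw [Finset.mem_range]
      have : m + 1 ≤ p * (m + 1) := Nat.le_mul_of_pos_left _ hp.pos
      omega
    · rw [mul_comm]; omega
  refine (Finset.sum_le_sum_of_subset_of_nonneg hsub (fun _ _ _ => by positivity)).trans ?_
  rw [Finset.sum_image (by
    intro a _ b _ h
    simp only [Nat.add_right_cancel_iff] at h
    have := Nat.eq_of_mul_eq_mul_right hp.pos h
    omega)]
  have hh := harmonic_le_one_add_log K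
  rw [harmonic] at hh
  push_cast at hh
  calc ∑ m ∈ Finset.range K, (1 / (((m + 1) * p + 1 : ℕ) : ℝ)) ≤
      ∑ m ∈ Finset.range K, ((m : ℝ) + 1)⁻¹ * (1 / p) := by
        refine Finset.sum_le_sum fun m _ => ?_
        push_cast
        rw [← one_div, one_div_mul_one_div]
        exact one_div_le_one_div_of_le (by positivity) (by linarith)
    _ = (∑ m ∈ Finset.range K, ((m : ℝ) + 1)⁻¹) * (1 / p) := by rw [Finset.sum_mul]
    _ ≤ (1 + Real.log K) * (1 / p) := by gcongr
    _ = _ := by ring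

lemma res_prime {p q : ℕ} (hq : q.Prime) (h1 : (q : ZMod p) = 1) :
    residueClass (1 : ZMod p) q = Real.log q := by
  rw [residueClass, Set.indicator_of_mem (by exact h1), ArithmeticFunction.vonMangoldt_apply_prime hq]

lemma rpow_exp {n : ℕ} (hn : 0 < n) (u : ℝ) : (n : ℝ) ^ (-(1 + u)) = 1 / n * Real.exp (-u * Real.log n) := by
  have : (0:ℝ) < n := by exact_mod_cast hn
  rw [neg_add, Real.rpow_add this, Real.rpow_neg_one, one_div, Real.rpow_def_of_pos this]
  ring_nf

lemma ell_bound {p : ℕ} (hp : 0 < p) : ell p ^ 9 ≤ 37 ^ 9 * (p : ℝ) ^ (1 / 4 : ℝ) := by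
  have hp0 : (1:ℝ) ≤ p := by exact_mod_cast hp
  have h := Real.log_le_rpow_div (x := (p : ℝ)) (by linarith) (ε := 1 / 36) (by norm_num)
  have h1 : 1 ≤ (p : ℝ) ^ (1 / 36 : ℝ) := Real.one_le_rpow hp0 (by norm_num)
  have h2 : ell p ≤ 37 * (p : ℝ) ^ (1 / 36 : ℝ) := by unfold ell; linarith
  calc ell p ^ 9 ≤ (37 * (p : ℝ) ^ (1 / 36 : ℝ)) ^ 9 := by
        have := one_le_ell p; gcongr
    _ = 37 ^ 9 * (p : ℝ) ^ (1 / 4 : ℝ) := by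
        rw [mul_pow, ← Real.rpow_natCast ((p : ℝ) ^ (1 / 36 : ℝ)), ← Real.rpow_mul (by linarith)]; norm_num

theorem propU : ∃ C : ℝ, 0 < C ∧ ∀ p N : ℕ, p.Prime → 1 ≤ Real.log (Real.log N) →
    Sp p N ≤ C * (Real.log (Real.log N) / p + (p : ℝ) ^ (-(1 / 4) : ℝ)) := by
  obtain ⟨C, hC0, hC⟩ := propF
  refine ⟨2 + Real.exp 2 * (6 + 2 * C * 37 ^ 9), by positivity, fun p N hp hN => ?_⟩
  have : Fact p.Prime := ⟨hp⟩
  have hp1 : (1:ℝ) ≤ p := by exact_mod_cast hp.one_le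
  have hp2 : (2:ℝ) ≤ p := by exact_mod_cast hp.two_le
  have hp0 : (0:ℝ) < p := by linarith
  set A : ℝ := (p : ℝ) ^ (1 / 2 : ℝ) with hA
  set u0 : ℝ := (p : ℝ) ^ (-(1 / 2) : ℝ) with hu0
  have hA1 : 1 ≤ A := Real.one_le_rpow hp1 (by norm_num)
  have hAu : A * u0 = 1 := by rw [hA, hu0, ← Real.rpow_add hp0]; norm_num
  have hu0p : 0 < u0 := by positivity
  have hu01 : u0 ≤ 1 := by nlinarith
  set l := Real.log (Real.log N) with hl
  have hlogN : 1 ≤ Real.log N := by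
    by_contra h
    have h0 := Real.log_natCast_nonneg N
    have := Real.log_nonpos h0 (not_le.1 h).le
    linarith
  obtain ⟨n, hn1, hn2⟩ := exists_nat_pow_near hlogN (one_lt_two)
  have hn3 : (n : ℝ) * Real.log 2 ≤ l := by
    rw [← Real.log_pow]; exact Real.log_le_log (by positivity) hn1
  have hJ : ((n + 1 : ℕ) : ℝ) ≤ 3 * l := by
    have := Real.log_two_gt_d9
    push_cast
    nlinarith
  set K := ⌊Real.exp A⌋₊ with hK
  -- split
  have hsplit : Sp p N ≤ Sp p K + ∑ q ∈ (Qs p N).filter (fun q => K < q), (1 / q : ℝ) := by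
    rw [Sp, ← Finset.sum_filter_add_sum_filter_not (Qs p N) (fun q => K < q), add_comm]
    gcongr
    refine Finset.sum_le_sum_of_subset_of_nonneg ?_ (fun _ _ _ => by positivity)
    intro q hq
    rw [Finset.mem_filter, mem_Qs] at hq
    rw [mem_Qs]
    exact ⟨not_lt.1 hq.2, hq.1.2⟩
  have hr4 : u0 ≤ (p : ℝ) ^ (-(1 / 4) : ℝ) := Real.rpow_le_rpow_of_exponent_le hp1 (by norm_num)
  have h1 : Sp p K ≤ 2 * (p : ℝ) ^ (-(1 / 4) : ℝ) := by
    refine (Sp_small hp K).trans ?_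
    have hK0 : 0 < K := Nat.floor_pos.2 (Real.one_le_exp (by linarith))
    have : Real.log K ≤ A := by
      rw [Real.log_le_iff_le_exp (by exact_mod_cast hK0)]
      exact Nat.floor_le (Real.exp_pos _).le
    have e : u0 * p = A := by
      rw [hA, hu0]; nth_rewrite 2 [← Real.rpow_one (p:ℝ)]; rw [← Real.rpow_add hp0]; norm_num
    rw [div_le_iff₀ hp0]
    have : u0 * p ≤ (p : ℝ) ^ (-(1 / 4) : ℝ) * p := by gcongr
    linarith
  have h2 : ∑ q ∈ (Qs p N).filter (fun q => K < q), (1 / q : ℝ) ≤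
      Real.exp 2 * ∑ j ∈ Finset.range (n + 1), (u0 / 2 ^ j) * fp p (u0 / 2 ^ j) := by
    have hq : ∀ q ∈ (Qs p N).filter (fun q => K < q), (1 / q : ℝ) ≤
        Real.exp 2 * ∑ j ∈ Finset.range (n + 1), (u0 / 2 ^ j) *
          (residueClass (1 : ZMod p) q * (q : ℝ) ^ (-(1 + u0 / 2 ^ j))) := by
      intro q hq
      rw [Finset.mem_filter, mem_Qs] at hq
      obtain ⟨⟨hqN, hqp, hq1⟩, hqK⟩ := hq
      have hq0 : (0:ℝ) < q := by exact_mod_cast hqp.pos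
      have hqA : A < Real.log q := by
        rw [Real.lt_log_iff_exp_lt hq0]
        exact (Nat.floor_lt (Real.exp_pos _).le).1 hqK
      have hw := weight_lower hu0p hu01 (L := Real.log q) (B := Real.log N) (by nlinarith)
        (Real.log_le_log hq0 (by exact_mod_cast hqN)) hn2
      have hL0 : 0 < Real.log q := by linarith
      rw [res_prime hqp hq1]
      simp_rw [rpow_exp hqp.pos]
      calc (1 / q : ℝ) = (Real.log q / q) * (1 / Real.log q) := by field_simp
        _ ≤ (Real.log q / q) * (Real.exp 2 * ∑ j ∈ Finset.range (n + 1),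
            (u0 / 2 ^ j) * Real.exp (-(u0 / 2 ^ j) * Real.log q)) := by gcongr
        _ = _ := by
          rw [mul_left_comm, Finset.mul_sum]
          congr 1
          refine Finset.sum_congr rfl fun j _ => ?_
          ring
    refine (Finset.sum_le_sum hq).trans ?_
    rw [← Finset.mul_sum, Finset.sum_comm]
    gcongr with j hj
    rw [← Finset.mul_sum]
    gcongr
    exact (fp_summable (by positivity)).sum_le_tsum _ (fun n _ => mul_nonneg (residueClass_nonneg _ _) (by positivity))
  have h3 : ∑ j ∈ Finset.range (n + 1), (u0 / 2 ^ j) * fp p (u0 / 2 ^ j) ≤ 6 * (l / p) + 2 * C * 37 ^ 9 * (p : ℝ) ^ (-(1 / 4) : ℝ) := by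
    have hj : ∀ j ∈ Finset.range (n + 1), (u0 / 2 ^ j) * fp p (u0 / 2 ^ j) ≤ 2 / p + (u0 / 2 ^ j) * (C * ell p ^ 9) := by
      intro j _
      have hup : 0 < u0 / 2 ^ j := by positivity
      have hu1 : u0 / 2 ^ j ≤ 1 := (div_le_self hu0p.le (one_le_pow₀ (by norm_num))).trans hu01
      have := (abs_le.1 (hC p hp _ hup hu1)).2
      have hh : fp p (u0 / 2 ^ j) ≤ 1 / ((p - 1) * (u0 / 2 ^ j)) + C * ell p ^ 9 := by linarith
      calc (u0 / 2 ^ j) * fp p (u0 / 2 ^ j) ≤ (u0 / 2 ^ j) * (1 / ((p - 1) * (u0 / 2 ^ j)) + C * ell p ^ 9) := by gcongr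
        _ = 1 / (p - 1) + (u0 / 2 ^ j) * (C * ell p ^ 9) := by
            have : (p - 1 : ℝ) ≠ 0 := by linarith
            field_simp
        _ ≤ _ := by
            refine add_le_add ?_ le_rfl
            rw [div_le_div_iff₀ (by linarith) hp0]; linarith
    refine (Finset.sum_le_sum hj).trans ?_
    rw [Finset.sum_add_distrib, ← Finset.sum_mul, Finset.sum_const, Finset.card_range, nsmul_eq_mul]
    have g := geom_le (n + 1) u0 hu0p.le
    have e9 := ell_bound hp.pos
    have hl9 : 0 ≤ ell p ^ 9 := by have := one_le_ell p; positivity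
    refine add_le_add ?_ ?_
    · calc ((n + 1 : ℕ) : ℝ) * (2 / p) ≤ (3 * l) * (2 / p) := by gcongr
        _ = _ := by ring
    · calc (∑ j ∈ Finset.range (n + 1), u0 / 2 ^ j) * (C * ell p ^ 9) ≤ (2 * u0) * (C * (37 ^ 9 * (p : ℝ) ^ (1 / 4 : ℝ))) := by gcongr
        _ = 2 * C * 37 ^ 9 * ((p : ℝ) ^ (1 / 4 : ℝ) * u0) := by ring
        _ = _ := by rw [hu0, ← Real.rpow_add hp0]; norm_num
  have hx : 0 ≤ l / p := by positivity
  have hy : 0 ≤ (p : ℝ) ^ (-(1 / 4) : ℝ) := by positivity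
  have he := Real.exp_pos 2
  set y := (p : ℝ) ^ (-(1 / 4) : ℝ)
  calc Sp p N ≤ 2 * y + Real.exp 2 * (6 * (l / p) + 2 * C * 37 ^ 9 * y) := by
        refine hsplit.trans (add_le_add h1 (h2.trans ?_)); gcongr
    _ ≤ _ := by
      have a1 : 0 ≤ Real.exp 2 * (l / p) * C := by positivity
      have a2 : 0 ≤ Real.exp 2 * y := by positivity
      nlinarith

end Cyc

open Filter Asymptotics Real

namespace Cyc
open ArithmeticFunction.vonMangoldt

lemma nonprime_bound : ∃ K : ℝ, 0 < K ∧ ∀ p : ℕ, ∀ s : Finset ℕ,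
    ∑ n ∈ s, (if n.Prime then 0 else residueClass (1 : ZMod p) n) / (n : ℝ) ≤ K := by
  have hs := summable_residueClass_non_primes_div (1 : ZMod 1)
  refine ⟨(∑' n : ℕ, (if n.Prime then 0 else residueClass (1 : ZMod 1) n) / (n : ℝ)) + 1, ?_, fun p s => ?_⟩
  · have : 0 ≤ (∑' n : ℕ, (if n.Prime then 0 else residueClass (1 : ZMod 1) n) / (n : ℝ)) :=
      tsum_nonneg fun n => div_nonneg (by split_ifs; exacts [le_rfl, residueClass_nonneg _ _]) (by positivity)
    linarith
  · refine le_trans ?_ ((hs.sum_le_tsum s (fun n _ =>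
      div_nonneg (by split_ifs; exacts [le_rfl, residueClass_nonneg _ _]) (by positivity))).trans (by linarith))
    refine Finset.sum_le_sum fun n _ => ?_
    gcongr
    split_ifs
    · exact le_rfl
    · have : residueClass (1 : ZMod 1) n = ArithmeticFunction.vonMangoldt n := by
        rw [residueClass, Set.indicator_of_mem]
        exact Subsingleton.elim _ _
      rw [this]
      exact residueClass_le _ _

lemma fp_trunc {p : ℕ} [Fact p.Prime] {u : ℝ} (hu : 0 < u) {N : ℕ} (hN : 0 < N) :
    fp p u ≤ ∑ n ∈ Finset.range (N + 1), residueClass (1 : ZMod p) n * (n : ℝ) ^ (-(1 + u)) +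
      Real.exp (-(u / 2) * Real.log N) * fp p (u / 2) := by
  rw [fp, ← (fp_summable hu).sum_add_tsum_nat_add (N + 1), fp, ← tsum_mul_left]
  refine add_le_add le_rfl ?_
  have h2 := (fp_summable (p := p) (half_pos hu)).mul_left (Real.exp (-(u / 2) * Real.log N))
  have hN' : (0:ℝ) < N := by exact_mod_cast hN
  calc _ ≤ ∑' i : ℕ, Real.exp (-(u / 2) * Real.log N) *
        (residueClass (1 : ZMod p) (i + (N + 1)) * ((i + (N + 1) : ℕ) : ℝ) ^ (-(1 + u / 2))) := by
        refine ((summable_nat_add_iff (N + 1)).2 (fp_summable (p := p) hu)).tsum_le_tsum (fun i => ?_)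
          ((summable_nat_add_iff (N + 1)).2 h2)
        rw [mul_left_comm]
        refine mul_le_mul_of_nonneg_left ?_ (residueClass_nonneg _ _)
        rw [rpow_exp (by omega), rpow_exp (by omega), mul_left_comm, ← Real.exp_add]
        gcongr
        have : Real.log N ≤ Real.log ((i + (N + 1) : ℕ) : ℝ) :=
          Real.log_le_log hN' (by push_cast; linarith [(Nat.cast_nonneg i : (0:ℝ) ≤ i)])
        nlinarith
    _ ≤ _ := by
        rw [← h2.sum_add_tsum_nat_add (N + 1)]
        refine le_add_of_nonneg_left (Finset.sum_nonneg fun n _ => ?_)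
        exact mul_nonneg (Real.exp_pos _).le (mul_nonneg (residueClass_nonneg _ _) (by positivity))

lemma exp_tail (J : ℕ) {L : ℝ} (hJ : 2 ^ J ≤ L) :
    ∑ j ∈ Finset.range J, Real.exp (-(1 / 2 ^ j / 2) * L) ≤ 2 := by
  have hL : 0 < L := lt_of_lt_of_le (by positivity) hJ
  have h : ∀ j ∈ Finset.range J, Real.exp (-(1 / 2 ^ j / 2) * L) ≤ 2 / L * 2 ^ j := by
    intro j _
    set v : ℝ := (1 / 2 ^ j / 2) * L with hv
    have hv0 : 0 < v := by positivity
    have : -(1 / 2 ^ j / 2) * L = -v := by rw [hv]; ring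
    rw [this, Real.exp_neg]
    have e : 2 / L * 2 ^ j = v⁻¹ := by rw [hv]; field_simp
    rw [e]
    exact inv_anti₀ hv0 (by linarith [Real.add_one_le_exp v])
  refine (Finset.sum_le_sum h).trans ?_
  rw [← Finset.mul_sum]
  have hg := geom_sum_eq (x := (2:ℝ)) (by norm_num) J
  rw [hg, div_mul_eq_mul_div, div_le_iff₀ hL]
  linarith

theorem propL : ∃ C0 : ℝ, 0 < C0 ∧ ∀ p N : ℕ, p.Prime → C0 * p * ell p ^ 9 ≤ Real.log (Real.log N) →
    Real.log (Real.log N) / (4 * p) ≤ Sp p N := by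
  obtain ⟨C, hC0, hC⟩ := propF
  obtain ⟨K, hK0, hK⟩ := nonprime_bound
  set D := 4 * C + 8 + 2 * K with hD
  refine ⟨4 * (D + 1), by positivity, fun p N hp hN => ?_⟩
  have hF : Fact p.Prime := ⟨hp⟩
  have hp1 : (1:ℝ) ≤ p := by exact_mod_cast hp.one_le
  have hp2 : (2:ℝ) ≤ p := by exact_mod_cast hp.two_le
  have hp0 : (0:ℝ) < p := by linarith
  have hl1 : 1 ≤ ell p ^ 9 := one_le_pow₀ (one_le_ell p)
  set l := Real.log (Real.log N) with hl
  have hD0 : 0 < D := by positivity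
  have hDl : D * ell p ^ 9 ≤ l / (4 * p) := by
    rw [le_div_iff₀ (by positivity)]
    have : 0 ≤ (p : ℝ) * ell p ^ 9 := by positivity
    nlinarith
  have hl4 : 4 ≤ l := by
    have h1 : 1 ≤ (p : ℝ) * ell p ^ 9 := by nlinarith
    nlinarith
  have hlogN : 1 ≤ Real.log N := by
    by_contra h
    have h0 := Real.log_natCast_nonneg N
    have := Real.log_nonpos h0 (not_le.1 h).le
    linarith
  have hNpos : 0 < N := by
    rcases Nat.eq_zero_or_pos N with h | h
    · rw [h] at hlogN; norm_num at hlogN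
    · exact h
  obtain ⟨J, hJ1, hJ2⟩ := exists_nat_pow_near hlogN (one_lt_two)
  have hJ : l - 1 ≤ J := by
    have h1 : l ≤ ((J + 1 : ℕ) : ℝ) * Real.log 2 := by
      rw [← Real.log_pow]; exact Real.log_le_log (by linarith) hJ2.le
    have h2 := Real.log_two_lt_d9
    push_cast at h1
    nlinarith [(Nat.cast_nonneg J : (0:ℝ) ≤ J)]
  have hu : ∀ j : ℕ, 0 < (1 / 2 ^ j : ℝ) ∧ (1 / 2 ^ j : ℝ) ≤ 1 := fun j =>
    ⟨by positivity, by rw [div_le_one (by positivity)]; exact one_le_pow₀ (by norm_num)⟩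
  have hpne : (p - 1 : ℝ) ≠ 0 := by linarith
  -- lower bound of full sum
  have hA : J / p - 2 * C * ell p ^ 9 ≤ ∑ j ∈ Finset.range J, (1 / 2 ^ j : ℝ) * fp p (1 / 2 ^ j) := by
    have hj : ∀ j ∈ Finset.range J, 1 / (p : ℝ) - (1 / 2 ^ j) * (C * ell p ^ 9) ≤ (1 / 2 ^ j : ℝ) * fp p (1 / 2 ^ j) := by
      intro j _
      obtain ⟨h0, h1⟩ := hu j
      have := (abs_le.1 (hC p hp _ h0 h1)).1
      have hh : 1 / ((p - 1) * (1 / 2 ^ j)) - C * ell p ^ 9 ≤ fp p (1 / 2 ^ j) := by linarith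
      calc _ ≤ 1 / (p - 1 : ℝ) - (1 / 2 ^ j) * (C * ell p ^ 9) := by
            refine sub_le_sub_right ?_ _
            exact one_div_le_one_div_of_le (by linarith) (by linarith)
        _ = (1 / 2 ^ j) * (1 / ((p - 1) * (1 / 2 ^ j)) - C * ell p ^ 9) := by field_simp
        _ ≤ _ := by gcongr
    refine le_trans ?_ (Finset.sum_le_sum hj)
    rw [Finset.sum_sub_distrib, ← Finset.sum_mul, Finset.sum_const, Finset.card_range, nsmul_eq_mul]
    have g := geom_le J 1 (by norm_num)
    have : (∑ j ∈ Finset.range J, (1 : ℝ) / 2 ^ j) * (C * ell p ^ 9) ≤ (2 * 1) * (C * ell p ^ 9) := by gcongr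
    rw [mul_one_div]
    linarith
  -- tail
  have hT : ∑ j ∈ Finset.range J, (1 / 2 ^ j : ℝ) * (Real.exp (-(1 / 2 ^ j / 2) * Real.log N) * fp p (1 / 2 ^ j / 2)) ≤
      8 + 2 * C * ell p ^ 9 := by
    have hj : ∀ j ∈ Finset.range J, (1 / 2 ^ j : ℝ) * (Real.exp (-(1 / 2 ^ j / 2) * Real.log N) * fp p (1 / 2 ^ j / 2)) ≤
        Real.exp (-(1 / 2 ^ j / 2) * Real.log N) * 4 + (1 / 2 ^ j) * (C * ell p ^ 9) := by
      intro j _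
      obtain ⟨h0, h1⟩ := hu j
      have := (abs_le.1 (hC p hp _ (half_pos h0) (by linarith))).2
      have hh : fp p (1 / 2 ^ j / 2) ≤ 1 / ((p - 1) * (1 / 2 ^ j / 2)) + C * ell p ^ 9 := by linarith
      set E := Real.exp (-(1 / 2 ^ j / 2) * Real.log N) with hE
      have hE0 : 0 < E := Real.exp_pos _
      have hE1 : E ≤ 1 := by
        rw [hE, Real.exp_le_one_iff]
        have : 0 ≤ (1 / 2 ^ j / 2) * Real.log N := by positivity
        linarith
      calc _ ≤ (1 / 2 ^ j : ℝ) * (E * (1 / ((p - 1) * (1 / 2 ^ j / 2)) + C * ell p ^ 9)) := by gcongr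
        _ = E * (2 / (p - 1)) + E * ((1 / 2 ^ j) * (C * ell p ^ 9)) := by field_simp
        _ ≤ E * 4 + 1 * ((1 / 2 ^ j) * (C * ell p ^ 9)) := by
            refine add_le_add (mul_le_mul_of_nonneg_left ?_ hE0.le) (mul_le_mul_of_nonneg_right hE1 (by positivity))
            rw [div_le_iff₀ (by linarith)]; linarith
        _ = _ := by ring
    refine (Finset.sum_le_sum hj).trans ?_
    rw [Finset.sum_add_distrib, ← Finset.sum_mul, ← Finset.sum_mul]
    have g := geom_le J 1 (by norm_num)
    have h1 : (∑ j ∈ Finset.range J, (1 : ℝ) / 2 ^ j) * (C * ell p ^ 9) ≤ (2 * 1) * (C * ell p ^ 9) := by gcongr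
    have h2 := exp_tail J hJ1
    linarith
  -- upper bound of truncated sum
  have hB : ∑ j ∈ Finset.range J, (1 / 2 ^ j : ℝ) *
      ∑ n ∈ Finset.range (N + 1), residueClass (1 : ZMod p) n * (n : ℝ) ^ (-(1 + 1 / 2 ^ j : ℝ)) ≤ 2 * Sp p N + 2 * K := by
    have hn : ∀ n ∈ Finset.range (N + 1), ∑ j ∈ Finset.range J, (1 / 2 ^ j : ℝ) *
        (residueClass (1 : ZMod p) n * (n : ℝ) ^ (-(1 + 1 / 2 ^ j : ℝ))) ≤
        2 * (if n.Prime ∧ (n : ZMod p) = 1 then 1 / (n : ℝ) else 0) +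
        2 * ((if n.Prime then 0 else residueClass (1 : ZMod p) n) / (n : ℝ)) := by
      intro n hn
      rcases Nat.eq_zero_or_pos n with rfl | hn0
      · simp
      simp_rw [rpow_exp hn0]
      have e : ∑ j ∈ Finset.range J, (1 / 2 ^ j : ℝ) *
          (residueClass (1 : ZMod p) n * (1 / n * Real.exp (-(1 / 2 ^ j) * Real.log n))) =
          residueClass (1 : ZMod p) n / n *
            ∑ j ∈ Finset.range J, (1 / 2 ^ j : ℝ) * Real.exp (-(1 / 2 ^ j) * Real.log n) := by
        rw [Finset.mul_sum]
        exact Finset.sum_congr rfl fun j _ => by ring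
      rw [e]
      have hn' : (0:ℝ) < n := by exact_mod_cast hn0
      by_cases hpr : n.Prime
      · by_cases h1 : (n : ZMod p) = 1
        · rw [if_pos ⟨hpr, h1⟩, if_pos hpr, res_prime hpr h1]
          have := weight_upper (Real.log n) J
          calc _ = (Real.log n * ∑ j ∈ Finset.range J, (1 / 2 ^ j : ℝ) * Real.exp (-(1 / 2 ^ j) * Real.log n)) * (1 / n) := by ring
            _ ≤ 2 * (1 / n) := by gcongr
            _ = _ := by simp
        · have : residueClass (1 : ZMod p) n = 0 := by
            rw [residueClass, Set.indicator_of_notMem (by exact h1)]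
          rw [this, if_neg (by tauto), if_pos hpr]; simp
      · rw [if_neg (by tauto), if_neg hpr, mul_zero, zero_add, mul_comm]
        refine mul_le_mul_of_nonneg_right ?_ (div_nonneg (residueClass_nonneg _ _) hn'.le)
        have g := geom_le J 1 (by norm_num)
        rw [mul_one] at g
        refine le_trans (Finset.sum_le_sum fun j _ => ?_) g
        refine mul_le_of_le_one_right (by positivity) ?_
        rw [Real.exp_le_one_iff]
        have h0 := Real.log_natCast_nonneg n
        have : 0 ≤ (1 / 2 ^ j) * Real.log n := by positivity
        linarith
    simp_rw [Finset.mul_sum]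
    rw [Finset.sum_comm]
    refine (Finset.sum_le_sum hn).trans ?_
    rw [Finset.sum_add_distrib, ← Finset.mul_sum, ← Finset.mul_sum, ← Finset.sum_filter]
    have := hK p (Finset.range (N + 1))
    have e : ∑ n ∈ (Finset.range (N + 1)).filter (fun n : ℕ => n.Prime ∧ (n : ZMod p) = 1), (1 / (n : ℝ)) = Sp p N := rfl
    rw [e]
    linarith
  have hfin : ∑ j ∈ Finset.range J, (1 / 2 ^ j : ℝ) * fp p (1 / 2 ^ j) ≤
      (2 * Sp p N + 2 * K) + (8 + 2 * C * ell p ^ 9) := by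
    refine le_trans ?_ (add_le_add hB hT)
    rw [← Finset.sum_add_distrib]
    refine Finset.sum_le_sum fun j _ => ?_
    rw [← mul_add]
    exact mul_le_mul_of_nonneg_left (fp_trunc (hu j).1 hNpos) (hu j).1.le
  have h1 : (l - 1) / p ≤ J / p := by gcongr
  have h2 : 3 / 4 * l / p ≤ (l - 1) / p := by gcongr; linarith
  have h3 : 4 * C * ell p ^ 9 + 8 + 2 * K ≤ D * ell p ^ 9 := by
    rw [hD]; nlinarith
  have h4 : l / (4 * p) = (l / p) / 4 := by field_simp
  rw [h4] at hDl ⊢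
  have h5 : 3 / 4 * l / p = 3 / 4 * (l / p) := by ring
  rw [h5] at h2
  linarith

end Cyc

open Filter Asymptotics Real

namespace Cyc

theorem turan (Q : Finset ℕ) (N : ℕ) (hQ : ∀ q ∈ Q, q.Prime ∧ q ≤ N) :
    (((Finset.Ioc 0 N).filter (fun n => ∀ q ∈ Q, ¬ q ∣ n)).card : ℝ) * ∑ q ∈ Q, (1 / q : ℝ) ≤ 3 * N := by
  set S : ℝ := ∑ q ∈ Q, (1 / q : ℝ) with hS
  have hS0 : 0 ≤ S := Finset.sum_nonneg fun q _ => by positivity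
  rcases hS0.eq_or_lt with h0 | hpos
  · rw [← h0, mul_zero]; positivity
  set w : ℕ → ℝ := fun n => ∑ q ∈ Q, if q ∣ n then (1:ℝ) else 0 with hw
  set A := (Finset.Ioc 0 N).filter (fun n => ∀ q ∈ Q, ¬ q ∣ n) with hA
  have hcount : ∀ d : ℕ, ∑ n ∈ Finset.Ioc 0 N, (if d ∣ n then (1:ℝ) else 0) = ((N / d : ℕ) : ℝ) := by
    intro d
    rw [← Finset.sum_filter, Finset.sum_const, nsmul_eq_mul, mul_one, Nat.Ioc_filter_dvd_card_eq_div]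
  -- card of Q
  have hcard : (Q.card : ℝ) ≤ N := by
    have : Q ⊆ Finset.Ioc 0 N := fun q hq => Finset.mem_Ioc.2 ⟨(hQ q hq).1.pos, (hQ q hq).2⟩
    have := Finset.card_le_card this
    rw [Nat.card_Ioc] at this
    exact_mod_cast this
  have h1 : N * S - N ≤ ∑ n ∈ Finset.Ioc 0 N, w n := by
    rw [hw, Finset.sum_comm]
    simp_rw [hcount]
    have : ∀ q ∈ Q, (N : ℝ) * (1 / q) - 1 ≤ ((N / q : ℕ) : ℝ) := by
      intro q hq
      have hq0 : (0:ℝ) < q := by exact_mod_cast (hQ q hq).1.pos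
      have := Nat.lt_floor_add_one ((N : ℝ) / q)
      rw [Nat.floor_div_natCast, Nat.floor_natCast] at this
      rw [mul_one_div]; linarith
    refine le_trans ?_ (Finset.sum_le_sum this)
    rw [Finset.sum_sub_distrib, ← Finset.mul_sum, Finset.sum_const, nsmul_eq_mul, mul_one]
    linarith
  have h2 : ∑ n ∈ Finset.Ioc 0 N, w n ^ 2 ≤ N * S ^ 2 + N * S := by
    have e : ∀ n, w n ^ 2 = ∑ q ∈ Q, ∑ r ∈ Q, if q ∣ n ∧ r ∣ n then (1:ℝ) else 0 := by
      intro n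
      rw [hw, sq, Finset.sum_mul_sum]
      refine Finset.sum_congr rfl fun q _ => Finset.sum_congr rfl fun r _ => ?_
      by_cases a : q ∣ n <;> by_cases b : r ∣ n <;> simp [a, b]
    simp_rw [e]
    rw [Finset.sum_comm]
    have b : ∀ q ∈ Q, ∑ n ∈ Finset.Ioc 0 N, ∑ r ∈ Q, (if q ∣ n ∧ r ∣ n then (1:ℝ) else 0) ≤
        ∑ r ∈ Q, (N:ℝ) * ((1 / (q:ℝ)) * (1 / (r:ℝ))) + (N:ℝ) * (1 / (q:ℝ)) := by
      intro q hq
      rw [Finset.sum_comm]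
      have hq0 : (0:ℝ) < q := by exact_mod_cast (hQ q hq).1.pos
      have c : ∀ r ∈ Q, ∑ n ∈ Finset.Ioc 0 N, (if q ∣ n ∧ r ∣ n then (1:ℝ) else 0) ≤
          (N:ℝ) * ((1 / (q:ℝ)) * (1 / (r:ℝ))) + if r = q then (N:ℝ) * (1 / (q:ℝ)) else 0 := by
        intro r hr
        by_cases hrq : r = q
        · subst hrq
          simp only [and_self, if_true]
          rw [hcount]
          have := Nat.cast_div_le (α := ℝ) (m := N) (n := r)
          have h0 : 0 ≤ (N : ℝ) * ((1 / r) * (1 / r)) := by positivity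
          have h1 : (N : ℝ) * (1 / r) = N / r := mul_one_div _ _
          linarith
        · rw [if_neg hrq, add_zero]
          have hco : Nat.Coprime q r := (Nat.coprime_primes (hQ q hq).1 (hQ r hr).1).2 (Ne.symm hrq)
          have : ∀ n, (q ∣ n ∧ r ∣ n) ↔ q * r ∣ n := fun n =>
            ⟨fun h => hco.mul_dvd_of_dvd_of_dvd h.1 h.2, fun h => ⟨(dvd_mul_right _ _).trans h, (dvd_mul_left _ _).trans h⟩⟩
          simp_rw [this, hcount]
          have := Nat.cast_div_le (α := ℝ) (m := N) (n := q * r)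
          refine this.trans (le_of_eq ?_)
          push_cast
          rw [one_div_mul_one_div, mul_one_div]
      refine (Finset.sum_le_sum c).trans ?_
      rw [Finset.sum_add_distrib, Finset.sum_ite_eq' Q q, if_pos hq]
    refine (Finset.sum_le_sum b).trans ?_
    rw [Finset.sum_add_distrib, ← Finset.mul_sum]
    refine le_of_eq ?_
    congr 1
    rw [sq, hS, Finset.sum_mul_sum, Finset.mul_sum]
    exact Finset.sum_congr rfl fun q _ => by rw [Finset.mul_sum]
  have h3 : (A.card : ℝ) * S ^ 2 ≤ ∑ n ∈ Finset.Ioc 0 N, (w n - S) ^ 2 := by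
    have : ∑ n ∈ A, (w n - S) ^ 2 = A.card * S ^ 2 := by
      rw [← nsmul_eq_mul, ← Finset.sum_const]
      refine Finset.sum_congr rfl fun n hn => ?_
      have hn' := (Finset.mem_filter.1 hn).2
      have : w n = 0 := Finset.sum_eq_zero fun q hq => if_neg (hn' q hq)
      rw [this]; ring
    rw [← this]
    exact Finset.sum_le_sum_of_subset_of_nonneg (Finset.filter_subset _ _) fun _ _ _ => sq_nonneg _
  have h4 : ∑ n ∈ Finset.Ioc 0 N, (w n - S) ^ 2 =
      ∑ n ∈ Finset.Ioc 0 N, w n ^ 2 - 2 * S * ∑ n ∈ Finset.Ioc 0 N, w n + N * S ^ 2 := by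
    have : ∀ n, (w n - S) ^ 2 = w n ^ 2 - 2 * S * w n + S ^ 2 := fun n => by ring
    simp_rw [this]
    rw [Finset.sum_add_distrib, Finset.sum_sub_distrib, ← Finset.mul_sum, Finset.sum_const, Nat.card_Ioc,
      nsmul_eq_mul, Nat.sub_zero]
  have h5 : (A.card : ℝ) * S * S ≤ 3 * N * S := by nlinarith
  exact le_of_mul_le_mul_right h5 hpos

/-- Mertens product -/
noncomputable def V (y : ℕ) : ℝ := ∏ q ∈ Nat.primesLE y, (1 - (q : ℝ)⁻¹)

open Classical in
/-- rough numbers -/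
noncomputable def Rough (N y : ℕ) : Finset ℕ := (Finset.Ioc 0 N).filter (fun n => ∀ q, q.Prime → q ≤ y → ¬ q ∣ n)

lemma mem_Rough {N y n : ℕ} : n ∈ Rough N y ↔ (0 < n ∧ n ≤ N) ∧ ∀ q, q.Prime → q ≤ y → ¬ q ∣ n := by
  simp [Rough]

lemma Rough_eq (N y : ℕ) : Rough N y = (Finset.Ico 1 (1 + N)).filter (fun n => (primorial y).Coprime n) := by
  ext n
  rw [mem_Rough, Finset.mem_filter, Finset.mem_Ico]
  refine and_congr (by omega) ?_
  constructor
  · intro h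
    refine Nat.Coprime.symm (Nat.coprime_of_dvd ?_)
    intro k hk h1 h2
    exact h k hk (hk.dvd_primorial_iff.1 h2) h1
  · intro h q hq hy hd
    have := Nat.dvd_gcd (hq.dvd_primorial_iff.2 hy) hd
    rw [h] at this
    exact hq.one_lt.ne' (Nat.dvd_one.1 this)

lemma phi_primorial (y : ℕ) : (Nat.totient (primorial y) : ℝ) = primorial y * V y := by
  have := Nat.totient_eq_mul_prod_factors (primorial y)
  rw [primeFactors_primorial] at this
  rw [V]
  have h := congrArg (fun x : ℚ => (x : ℝ)) this
  push_cast at h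
  exact h

lemma V_nonneg (y : ℕ) : 0 ≤ V y := Finset.prod_nonneg fun q hq => by
  have := (Nat.prime_of_mem_primesLE hq).one_le
  have h : ((q : ℝ))⁻¹ ≤ 1 := inv_le_one_of_one_le₀ (by exact_mod_cast this)
  linarith

lemma V_le_one (y : ℕ) : V y ≤ 1 := Finset.prod_le_one (fun q hq => by
  have := (Nat.prime_of_mem_primesLE hq).one_le
  have h : ((q : ℝ))⁻¹ ≤ 1 := inv_le_one_of_one_le₀ (by exact_mod_cast this)
  linarith) (fun q hq => by
  have : 0 ≤ (q : ℝ)⁻¹ := by positivity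
  linarith)

lemma coprime_block (P k : ℕ) :
    ((Finset.Ico 1 (1 + P * k)).filter (fun n => P.Coprime n)).card = P.totient * k := by
  induction k with
  | zero => simp
  | succ k ih =>
    have hu : Finset.Ico 1 (1 + P * (k + 1)) = Finset.Ico 1 (1 + P * k) ∪ Finset.Ico (1 + P * k) (1 + P * k + P) := by
      rw [Finset.Ico_union_Ico_eq_Ico (by omega) (by omega)]; congr 1; ring
    rw [hu, Finset.filter_union, Finset.card_union_of_disjoint
      (Finset.disjoint_filter_filter (Finset.Ico_disjoint_Ico_consecutive _ _ _)), ih,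
      Nat.filter_coprime_Ico_eq_totient]
    ring

theorem rough_bound (N y : ℕ) : |((Rough N y).card : ℝ) - N * V y| ≤ 4 ^ y := by
  rw [Rough_eq]
  set P := primorial y with hP
  have hP0 : P ≠ 0 := primorial_ne_zero y
  have hPp : (0:ℝ) < P := by exact_mod_cast Nat.pos_of_ne_zero hP0
  have hP4 : (P : ℝ) ≤ 4 ^ y := by exact_mod_cast primorial_le_four_pow y
  have hup := Nat.Ico_filter_coprime_le 1 N hP0
  have hlow : P.totient * (N / P) ≤ ((Finset.Ico 1 (1 + N)).filter (fun n => P.Coprime n)).card := by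
    rw [← coprime_block]
    exact Finset.card_le_card (Finset.filter_subset_filter _ (Finset.Ico_subset_Ico_right (by
      have := Nat.mul_div_le N P
      omega)))
  set c := ((Finset.Ico 1 (1 + N)).filter (fun n => P.Coprime n)).card with hc
  have hup' : (c : ℝ) ≤ P * V y * ((N / P : ℕ) + 1) := by
    rw [← phi_primorial]; exact_mod_cast hup
  have hlow' : P * V y * ((N / P : ℕ) : ℝ) ≤ c := by
    rw [← phi_primorial]; exact_mod_cast hlow
  have hd1 := Nat.cast_div_le (α := ℝ) (m := N) (n := P)
  have hd2 := Nat.lt_floor_add_one ((N : ℝ) / P)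
  rw [Nat.floor_div_natCast, Nat.floor_natCast] at hd2
  have hV0 := V_nonneg y
  have hV1 := V_le_one y
  have hPV : P * V y ≤ P := mul_le_of_le_one_right hPp.le hV1
  have hPV0 : 0 ≤ P * V y := by positivity
  have e : N * V y = P * V y * (N / P) := by field_simp
  rw [e, abs_le]
  constructor
  · nlinarith
  · nlinarith

end Cyc

open Filter Asymptotics Real

namespace Cyc

/-- minus log of the Euler factor -/
noncomputable def gp (n : ℕ) : ℝ := if n.Prime then -Real.log (1 - (n:ℝ)⁻¹) else 0

lemma gp_bounds {n : ℕ} (hn : n.Prime) : (1 / n : ℝ) ≤ gp n ∧ gp n ≤ 1 / ((n:ℝ) - 1) := by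
  have h2 : (2:ℝ) ≤ n := by exact_mod_cast hn.two_le
  have hi : (n:ℝ)⁻¹ ≤ 1/2 := by
    rw [inv_le_comm₀ (by linarith) (by norm_num)]; norm_num; exact_mod_cast h2
  have hpos : 0 < 1 - (n:ℝ)⁻¹ := by linarith
  rw [gp, if_pos hn]
  constructor
  · have := Real.log_le_sub_one_of_pos hpos
    rw [one_div]; linarith
  · have := Real.one_sub_inv_le_log_of_pos hpos
    have e : 1 - (1 - (n:ℝ)⁻¹)⁻¹ = - (1 / ((n:ℝ) - 1)) := by
      have : (n:ℝ) - 1 ≠ 0 := by linarith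
      field_simp
      ring
    linarith

lemma gp_nonneg (n : ℕ) : 0 ≤ gp n := by
  by_cases h : n.Prime
  · exact le_trans (by positivity) (gp_bounds h).1
  · rw [gp, if_neg h]

lemma log_V (y : ℕ) : Real.log (V y) = - ∑ n ∈ Finset.range (y + 1), gp n := by
  have : Nat.primesLE y = (Finset.range (y + 1)).filter Nat.Prime := by
    ext p; simp [Nat.mem_primesLE, Nat.lt_succ_iff]
  rw [V, Real.log_prod]
  · rw [this, Finset.sum_filter, ← Finset.sum_neg_distrib]
    refine Finset.sum_congr rfl fun n _ => ?_
    rw [gp]; split_ifs <;> simp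
  · intro q hq
    have h2 : (2:ℝ) ≤ q := by exact_mod_cast Nat.two_le_of_mem_primesLE hq
    have hi : (q:ℝ)⁻¹ ≤ 1/2 := by
      rw [inv_le_comm₀ (by linarith) (by norm_num)]; norm_num; exact_mod_cast h2
    linarith

lemma V_pos (y : ℕ) : 0 < V y := by
  refine Finset.prod_pos fun q hq => ?_
  have h2 : (2:ℝ) ≤ q := by exact_mod_cast Nat.two_le_of_mem_primesLE hq
  have hi : (q:ℝ)⁻¹ ≤ 1/2 := by
    rw [inv_le_comm₀ (by linarith) (by norm_num)]; norm_num; exact_mod_cast h2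
  linarith

lemma log_fact (N : ℕ) : Real.log (N.factorial) =
    ∑ p ∈ Nat.primesLE N, (padicValNat p N.factorial : ℝ) * Real.log p := by
  rw [Real.log_nat_eq_sum_factorization, Finsupp.sum_of_support_subset (s := Nat.primesLE N)]
  · refine Finset.sum_congr rfl fun p hp => ?_
    rw [Nat.factorization_def _ (Nat.prime_of_mem_primesLE hp)]
  · intro p hp
    have h := Nat.support_factorization (N.factorial) ▸ hp
    have hpp := Nat.prime_of_mem_primeFactors h
    exact Nat.mem_primesLE.2 ⟨(hpp.dvd_factorial).1 (Nat.dvd_of_mem_primeFactors h), hpp⟩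
  · simp

lemma padic_low {p N : ℕ} (hp : p.Prime) : (N : ℝ) / p - 1 ≤ (padicValNat p N.factorial : ℝ) := by
  haveI := Fact.mk hp
  have h : N / p ≤ padicValNat p N.factorial := by
    rw [padicValNat_factorial (lt_add_of_pos_right (Nat.log p N) (by norm_num : 0 < 2))]
    have : 1 ∈ Finset.Ico 1 (Nat.log p N + 2) := by simp
    have := Finset.single_le_sum (f := fun i => N / p ^ i) (fun i _ => Nat.zero_le _) this
    simpa using this
  have h' : ((N / p : ℕ) : ℝ) ≤ padicValNat p N.factorial := by exact_mod_cast h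
  have hd2 := Nat.lt_floor_add_one ((N : ℝ) / p)
  rw [Nat.floor_div_natCast, Nat.floor_natCast] at hd2
  linarith

lemma padic_up {p N : ℕ} (hp : p.Prime) : (padicValNat p N.factorial : ℝ) ≤ N / ((p:ℝ) - 1) := by
  haveI := Fact.mk hp
  have h := sub_one_mul_padicValNat_factorial (p := p) N
  have h2 : (2:ℝ) ≤ p := by exact_mod_cast hp.two_le
  have h' : (p - 1) * padicValNat p N.factorial ≤ N := by rw [h]; exact Nat.sub_le _ _
  have h3 : (((p - 1 : ℕ)) : ℝ) * padicValNat p N.factorial ≤ N := by exact_mod_cast h'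
  rw [Nat.cast_sub hp.one_le, Nat.cast_one] at h3
  rw [le_div_iff₀ (by linarith)]; linarith

lemma log_div_bound {n : ℕ} (hn : 2 ≤ n) :
    Real.log n * (1 / ((n:ℝ) - 1) - 1 / n) ≤ 4 * ((n:ℝ) ^ (3/2:ℝ))⁻¹ := by
  have h2 : (2:ℝ) ≤ n := by exact_mod_cast hn
  have hl : Real.log n ≤ 2 * (n:ℝ) ^ (1/2:ℝ) := by
    have := Real.log_le_rpow_div (x := n) (by linarith) (ε := 1/2) (by norm_num)
    linarith
  have e : 1 / ((n:ℝ) - 1) - 1 / n ≤ 2 * ((n:ℝ) ^ (2:ℝ))⁻¹ := by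
    have : (0:ℝ) < n - 1 := by linarith
    rw [Real.rpow_two, div_sub_div _ _ (by linarith) (by linarith), ← div_eq_mul_inv, div_le_div_iff₀ (by positivity) (by positivity)]
    nlinarith [sq_nonneg (n:ℝ)]
  have h0 : 0 ≤ 1 / ((n:ℝ) - 1) - 1 / n := by
    rw [sub_nonneg]; exact one_div_le_one_div_of_le (by linarith) (by linarith)
  calc _ ≤ (2 * (n:ℝ) ^ (1/2:ℝ)) * (2 * ((n:ℝ) ^ (2:ℝ))⁻¹) := by gcongr
    _ = _ := by
      rw [← Real.rpow_neg (by linarith), ← Real.rpow_neg (by linarith)]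
      have : (n:ℝ) ^ (-(3/2):ℝ) = (n:ℝ) ^ (1/2:ℝ) * (n:ℝ) ^ (-2:ℝ) := by
        rw [← Real.rpow_add (by linarith)]; norm_num
      rw [this]; ring

theorem mertens1 : ∃ K, ∀ N : ℕ, 1 ≤ N →
    |∑ n ∈ Finset.range (N + 1), gp n * Real.log n - Real.log N| ≤ K := by
  have hs : Summable fun n : ℕ => 4 * ((n:ℝ) ^ (3/2:ℝ))⁻¹ :=
    (Real.summable_nat_rpow_inv.2 (by norm_num)).mul_left 4
  set K0 := ∑' n : ℕ, 4 * ((n:ℝ) ^ (3/2:ℝ))⁻¹ with hK0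
  have hK00 : 0 ≤ K0 := tsum_nonneg fun n => by positivity
  refine ⟨K0 + 2, fun N hN => ?_⟩
  have hN0 : (0:ℝ) < N := by exact_mod_cast hN
  have hfilter : Nat.primesLE N = (Finset.range (N + 1)).filter Nat.Prime := by
    ext p; simp [Nat.mem_primesLE, Nat.lt_succ_iff]
  have eA : ∑ n ∈ Finset.range (N + 1), gp n * Real.log n = ∑ p ∈ Nat.primesLE N, gp p * Real.log p := by
    rw [hfilter, Finset.sum_filter]
    refine Finset.sum_congr rfl fun n _ => ?_
    by_cases h : n.Prime <;> simp [gp, h]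
  rw [eA]
  set A := ∑ p ∈ Nat.primesLE N, gp p * Real.log p
  set B := ∑ p ∈ Nat.primesLE N, (1 / p : ℝ) * Real.log p with hB
  set C := ∑ p ∈ Nat.primesLE N, (1 / ((p:ℝ) - 1)) * Real.log p with hC
  have hlog : ∀ p : ℕ, 0 ≤ Real.log p := fun p => Real.log_natCast_nonneg p
  have hBA : B ≤ A := Finset.sum_le_sum fun p hp =>
    mul_le_mul_of_nonneg_right (gp_bounds (Nat.prime_of_mem_primesLE hp)).1 (hlog p)
  have hAC : A ≤ C := Finset.sum_le_sum fun p hp =>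
    mul_le_mul_of_nonneg_right (gp_bounds (Nat.prime_of_mem_primesLE hp)).2 (hlog p)
  have hCB : C ≤ B + K0 := by
    have : C - B ≤ K0 := by
      rw [hC, hB, ← Finset.sum_sub_distrib]
      refine le_trans (Finset.sum_le_sum (g := fun n : ℕ => 4 * ((n:ℝ) ^ (3/2:ℝ))⁻¹) fun p hp => ?_)
        (hs.sum_le_tsum _ fun n _ => by positivity)
      have := log_div_bound (Nat.two_le_of_mem_primesLE hp)
      linarith
    linarith
  have hf1 : Real.log N.factorial ≤ N * C := by
    rw [log_fact, hC, Finset.mul_sum]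
    refine Finset.sum_le_sum fun p hp => ?_
    rw [← mul_assoc, mul_one_div]
    exact mul_le_mul_of_nonneg_right (padic_up (Nat.prime_of_mem_primesLE hp)) (hlog p)
  have hth : Chebyshev.theta N ≤ Real.log 4 * N := Chebyshev.theta_le_log4_mul_x hN0.le
  have hf2 : N * B - Real.log 4 * N ≤ Real.log N.factorial := by
    refine le_trans (sub_le_sub_left hth _) ?_
    rw [log_fact, hB, Finset.mul_sum, Chebyshev.theta_eq_sum_primesLE_log, ← Finset.sum_sub_distrib]
    refine Finset.sum_le_sum fun p hp => ?_
    have := mul_le_mul_of_nonneg_right (padic_low (N := N) (Nat.prime_of_mem_primesLE hp)) (hlog p)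
    rw [div_eq_mul_one_div] at this
    linarith
  have hs1 : N * Real.log N - N ≤ Real.log N.factorial := by
    have h := Stirling.le_factorial_stirling N
    have h1 : (1:ℝ) ≤ √(2 * π * N) := by
      rw [Real.one_le_sqrt]
      have := Real.pi_gt_three
      have : (1:ℝ) ≤ N := by exact_mod_cast hN
      nlinarith
    have h2 : ((N:ℝ) / Real.exp 1) ^ N ≤ N.factorial :=
      le_trans (le_mul_of_one_le_left (by positivity) h1) h
    have := Real.log_le_log (by positivity) h2
    rw [Real.log_pow, Real.log_div hN0.ne' (Real.exp_pos 1).ne', Real.log_exp] at this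
    linarith
  have hs2 : Real.log N.factorial ≤ N * Real.log N := by
    rw [← Real.log_pow]
    exact Real.log_le_log (by exact_mod_cast Nat.factorial_pos N) (by exact_mod_cast Nat.factorial_le_pow N)
  have h4 : Real.log 4 ≤ 2 := by
    have : (4:ℝ) = 2 ^ 2 := by norm_num
    rw [this, Real.log_pow]
    have := Real.log_two_lt_d9
    push_cast; linarith
  have g1 : Real.log N - 1 ≤ C := by
    refine le_of_mul_le_mul_left ?_ hN0
    linarith
  have g2 : B - Real.log 4 ≤ Real.log N := by
    refine le_of_mul_le_mul_left ?_ hN0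
    linarith
  rw [abs_le]; constructor <;> linarith

/-- auxiliary -/
noncomputable def dn (n : ℕ) : ℝ := Real.log (Real.log (n+3:ℕ)) - Real.log (Real.log (n + 2:ℕ))

lemma dn_summable : Summable fun n : ℕ => dn n - (Real.log (n+3:ℕ) - Real.log (n+2:ℕ)) / Real.log (n+3:ℕ) := by
  have hs : Summable fun n : ℕ => 4 * (1 / ((n + 1:ℕ):ℝ) ^ 2) :=
    ((summable_nat_add_iff 1).2 (Real.summable_one_div_nat_pow.2 (by norm_num : 1 < 2))).mul_left 4
  refine Summable.of_norm_bounded hs fun n => ?_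
  have hn2 : (0:ℝ) < (n + 2:ℕ) := by positivity
  have hn3 : (0:ℝ) < (n + 3:ℕ) := by positivity
  have hx2 : 1/2 ≤ Real.log (n + 2:ℕ) := by
    have := Real.log_two_gt_d9
    have h : Real.log 2 ≤ Real.log (n + 2:ℕ) := Real.log_le_log (by norm_num) (by push_cast; linarith [(Nat.cast_nonneg n : (0:ℝ) ≤ n)])
    linarith
  have hlt : Real.log (n+2:ℕ) ≤ Real.log (n+3:ℕ) := Real.log_le_log hn2 (by push_cast; linarith)
  have hh : Real.log (n+3:ℕ) - Real.log (n+2:ℕ) ≤ 1 / (n+1:ℕ) := by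
    rw [← Real.log_div hn3.ne' hn2.ne']
    refine (Real.log_le_sub_one_of_pos (by positivity)).trans ?_
    have e : ((n+3:ℕ):ℝ) / (n+2:ℕ) - 1 = 1 / (n+2:ℕ) := by
      field_simp; push_cast; ring
    rw [e]
    refine one_div_le_one_div_of_le (by positivity) (by push_cast; linarith)
  set x := Real.log (n+3:ℕ)
  set z := Real.log (n+2:ℕ)
  have hd : dn n = Real.log (x / z) := by
    rw [dn, Real.log_div (by linarith) (by linarith)]
  have hx0 : 0 < x := by linarith
  have hz0 : 0 < z := by linarith
  have l1 : dn n ≤ x / z - 1 := hd ▸ Real.log_le_sub_one_of_pos (by positivity)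
  have l2 : 1 - z / x ≤ dn n := by
    have := Real.one_sub_inv_le_log_of_pos (x := x / z) (by positivity)
    rw [inv_div] at this; rw [hd]; exact this
  have e1 : (x - z) / x = 1 - z / x := by field_simp
  have hi : (0:ℝ) < 1 / (n+1:ℕ) := by positivity
  rw [Real.norm_eq_abs, abs_of_nonneg (by rw [e1]; linarith)]
  calc dn n - (x - z) / x ≤ x / z - 1 - (x - z) / x := by linarith
    _ = (x - z) ^ 2 / (x * z) := by field_simp
    _ ≤ (1 / (n+1:ℕ)) ^ 2 / (1/2 * (1/2)) := by
        have : 0 ≤ x - z := by linarith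
        have : 1/2 ≤ x := by linarith
        gcongr
    _ = _ := by rw [one_div_pow]; ring

theorem mertens2 : ∃ C, Tendsto (fun N : ℕ => ∑ n ∈ Finset.range (N + 1), gp n - Real.log (Real.log N)) atTop (nhds C) := by
  obtain ⟨K, hK⟩ := mertens1
  -- Dirichlet test
  set f : ℕ → ℝ := fun n => (Real.log (n+3:ℕ))⁻¹ with hf
  set z : ℕ → ℝ := fun n => gp (n+3) * Real.log (n+3:ℕ) - (Real.log (n+3:ℕ) - Real.log (n+2:ℕ)) with hz
  have hlogpos : ∀ n : ℕ, 0 < Real.log (n+3:ℕ) := fun n => Real.log_pos (by push_cast; linarith [(Nat.cast_nonneg n : (0:ℝ) ≤ n)])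
  have hfa : Antitone f := by
    intro a b hab
    refine inv_anti₀ (hlogpos a) (Real.log_le_log (by positivity) (by push_cast; have : (a:ℝ) ≤ b := by exact_mod_cast hab
                                                                      linarith))
  have hf0 : Tendsto f atTop (nhds 0) := by
    refine tendsto_inv_atTop_zero.comp (Real.tendsto_log_atTop.comp ?_)
    exact tendsto_natCast_atTop_atTop.comp (tendsto_add_atTop_nat 3)
  have hsum3 : ∀ (h : ℕ → ℝ) (N : ℕ), ∑ n ∈ Finset.range (N + 3), h n = (h 0 + h 1 + h 2) + ∑ n ∈ Finset.range N, h (n+3) := by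
    intro h N
    rw [add_comm N 3, Finset.sum_range_add]
    simp [Finset.sum_range_succ, add_comm]
  have hzs : ∀ N, ∑ i ∈ Finset.range N, z i = ∑ n ∈ Finset.range (N + 3), gp n * Real.log n - gp 2 * Real.log 2 -
      (Real.log (N+2:ℕ) - Real.log 2) := by
    intro N
    rw [hsum3, hz, Finset.sum_sub_distrib]
    have := Finset.sum_range_sub (fun n : ℕ => Real.log (n+2:ℕ)) N
    simp only [show ∀ n, n + 1 + 2 = n + 3 from fun n => rfl] at this
    rw [this]; simp [gp, Nat.not_prime_zero, Nat.not_prime_one]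
  have hzb : ∀ N, ‖∑ i ∈ Finset.range N, z i‖ ≤ K + |gp 2 * Real.log 2| + |Real.log 2| := by
    intro N
    have := hK (N+2) (by omega)
    rw [hzs, Real.norm_eq_abs]
    have a1 := abs_le.1 this
    have a2 := neg_abs_le (gp 2 * Real.log 2)
    have a3 := le_abs_self (gp 2 * Real.log 2)
    have a4 := neg_abs_le (Real.log 2)
    have a5 := le_abs_self (Real.log 2)
    simp only [show N + 2 + 1 = N + 3 from rfl] at a1
    rw [abs_le]; constructor <;> linarith [a1.1, a1.2]
  obtain ⟨L1, hL1⟩ := cauchySeq_tendsto_of_complete (hfa.cauchySeq_series_mul_of_tendsto_zero_of_bounded hf0 hzb)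
  have hL2 := dn_summable.hasSum.tendsto_sum_nat
  set L2 := ∑' n : ℕ, (dn n - (Real.log (n+3:ℕ) - Real.log (n+2:ℕ)) / Real.log (n+3:ℕ))
  refine ⟨L1 - L2 + (gp 2 - Real.log (Real.log 2)), ?_⟩
  rw [← tendsto_add_atTop_iff_nat 2]
  refine ((hL1.sub hL2).add_const (gp 2 - Real.log (Real.log 2))).congr fun N => ?_
  rw [← Finset.sum_sub_distrib, hsum3]
  have e : ∀ n, f n • z n - (dn n - (Real.log (n+3:ℕ) - Real.log (n+2:ℕ)) / Real.log (n+3:ℕ)) = gp (n+3) - dn n := by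
    intro n
    have := (hlogpos n).ne'
    simp only [hf, hz, smul_eq_mul]
    field_simp
    ring
  rw [Finset.sum_congr rfl fun n _ => e n, Finset.sum_sub_distrib]
  have := Finset.sum_range_sub (fun n : ℕ => Real.log (Real.log (n+2:ℕ))) N
  simp only [show ∀ n, n + 1 + 2 = n + 3 from fun n => rfl] at this
  simp only [dn]
  rw [this]; simp [gp, Nat.not_prime_zero, Nat.not_prime_one]; ring

end Cyc

open Filter Asymptotics Real

namespace Cyc

/-- shifted Euler factor -/
noncomputable def gd (d : ℝ) (n : ℕ) : ℝ := if n.Prime then -Real.log (1 - (n:ℝ) ^ (-(1 + d))) else 0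

lemma prime_inv_le {n : ℕ} (hn : n.Prime) : (n:ℝ)⁻¹ ≤ 1/2 := by
  have h2 : (2:ℝ) ≤ n := by exact_mod_cast hn.two_le
  rw [inv_le_comm₀ (by linarith) (by norm_num)]; norm_num; exact_mod_cast h2

lemma rpow_split {n : ℕ} (hn : n.Prime) (d : ℝ) : (n:ℝ) ^ (-(1 + d)) = (n:ℝ)⁻¹ * (n:ℝ) ^ (-d) := by
  have h0 : (0:ℝ) < n := by exact_mod_cast hn.pos
  rw [neg_add, Real.rpow_add h0, Real.rpow_neg_one]

lemma rpow_negd_le {n : ℕ} (hn : n.Prime) {d : ℝ} (hd : 0 ≤ d) : (n:ℝ) ^ (-d) ≤ 1 :=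
  Real.rpow_le_one_of_one_le_of_nonpos (by exact_mod_cast hn.one_le) (by linarith)

lemma neglog_bounds {u w : ℝ} (hu0 : 0 < u) (hu : u ≤ 1/2) (hw0 : 0 < w) (hw : w ≤ 1) :
    u * w ≤ -Real.log (1 - u * w) ∧ -Real.log (1 - u * w) ≤ u * w + 2 * u ^ 2 * w := by
  have h1 : u * w ≤ u := mul_le_of_le_one_right hu0.le hw
  have hpos : 0 < 1 - u * w := by linarith
  have huw : 0 < u * w := by positivity
  constructor
  · have := Real.log_le_sub_one_of_pos hpos
    linarith
  · have := Real.one_sub_inv_le_log_of_pos hpos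
    have e : (1 - u * w)⁻¹ - 1 ≤ u * w + 2 * u ^ 2 * w := by
      have : (1 - u * w)⁻¹ - 1 = u * w / (1 - u * w) := by field_simp; ring
      rw [this, div_le_iff₀ hpos]
      have a : u * w * (u * w) ≤ u * w * u := mul_le_mul_of_nonneg_left h1 huw.le
      have b : 0 ≤ u * w * u * (1 - 2 * (u * w)) := by
        have : 0 ≤ 1 - 2 * (u * w) := by linarith
        positivity
      nlinarith
    linarith

lemma gd_nonneg {d : ℝ} (hd : 0 < d) (n : ℕ) : 0 ≤ gd d n := by
  by_cases h : n.Prime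
  · rw [gd, if_pos h, rpow_split h]
    have h0 : (0:ℝ) < n := by exact_mod_cast h.pos
    exact le_trans (by positivity) (neglog_bounds (inv_pos.2 h0) (prime_inv_le h) (Real.rpow_pos_of_pos h0 _) (rpow_negd_le h hd.le)).1
  · rw [gd, if_neg h]

lemma gd_diff {d : ℝ} (hd : 0 < d) (n : ℕ) : |gd d n - gp n * (n:ℝ) ^ (-d)| ≤ 2 * (1 / (n:ℝ) ^ 2) := by
  by_cases h : n.Prime
  · rw [gd, if_pos h, gp, if_pos h, rpow_split h]
    have h0 : (0:ℝ) < n := by exact_mod_cast h.pos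
    have hw0 := Real.rpow_pos_of_pos h0 (-d)
    have hw := rpow_negd_le h hd.le
    set w := (n:ℝ) ^ (-d)
    have hu0 := inv_pos.2 h0
    have hu := prime_inv_le h
    have a := neglog_bounds hu0 hu hw0 hw
    have b := neglog_bounds hu0 hu one_pos le_rfl
    simp only [mul_one] at b
    have e : (1 / (n:ℝ) ^ 2) = (n:ℝ)⁻¹ ^ 2 := by rw [inv_pow, one_div]
    rw [e]
    set u := (n:ℝ)⁻¹
    have b1 := mul_le_mul_of_nonneg_right b.1 hw0.le
    have b2 := mul_le_mul_of_nonneg_right b.2 hw0.le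
    have c : 2 * u ^ 2 * w ≤ 2 * u ^ 2 := mul_le_of_le_one_right (by positivity) hw
    rw [abs_le]; constructor <;> linarith [a.1, a.2]
  · rw [gd, if_neg h, gp, if_neg h]; simp

lemma gd_tendsto {d : ℝ} (hd : 0 < d) : HasSum (gd d) (Real.log ‖riemannZeta ((1 + d : ℝ) : ℂ)‖) := by
  have hs : 1 < ((1 + d : ℝ) : ℂ).re := by simp [hd]
  have h := riemannZeta_eulerProduct hs
  have hne := riemannZeta_ne_zero_of_one_lt_re hs
  have h2 := ((Real.continuousAt_log (norm_ne_zero_iff.2 hne)).tendsto).comp h.norm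
  rw [hasSum_iff_tendsto_nat_of_nonneg (gd_nonneg hd)]
  refine h2.congr fun n => ?_
  simp only [Function.comp]
  rw [norm_prod, Real.log_prod]
  · rw [Nat.primesBelow, Finset.sum_filter]
    refine Finset.sum_congr rfl fun p _ => ?_
    rw [gd]
    split_ifs with hp
    · have h0 : (0:ℝ) < p := by exact_mod_cast hp.pos
      have e : (1 - (p:ℂ) ^ (-((1 + d : ℝ) : ℂ)))⁻¹ = (((1 - (p:ℝ) ^ (-(1 + d)))⁻¹ : ℝ) : ℂ) := by
        push_cast
        rw [Complex.ofReal_cpow h0.le]; push_cast; rfl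
      rw [e, Complex.norm_real, Real.norm_eq_abs, Real.log_abs, Real.log_inv]
    · rfl
  · intro p hp
    have hp' := Nat.prime_of_mem_primesBelow hp
    rw [norm_ne_zero_iff]
    refine inv_ne_zero (sub_ne_zero.2 (Ne.symm ?_))
    intro h
    have h0 : (0:ℝ) < p := by exact_mod_cast hp'.pos
    have h3 := congrArg norm h
    rw [norm_one, ← Complex.ofReal_natCast, Complex.norm_cpow_eq_rpow_re_of_pos h0] at h3
    have : (p:ℝ) ^ (-((1 + d : ℝ) : ℂ)).re < 1 := by
      refine Real.rpow_lt_one_of_one_lt_of_neg (by exact_mod_cast hp'.one_lt) ?_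
      simp; linarith
    linarith

lemma zeta_log : Tendsto (fun d : ℝ => Real.log ‖riemannZeta ((1 + d : ℝ) : ℂ)‖ + Real.log d) (nhdsWithin 0 (Set.Ioi 0)) (nhds 0) := by
  have h := riemannZeta_residue_one
  have t : Tendsto (fun d : ℝ => ((1 + d : ℝ) : ℂ)) (nhdsWithin 0 (Set.Ioi 0)) (nhdsWithin 1 {1}ᶜ) := by
    rw [tendsto_nhdsWithin_iff]
    constructor
    · have : Continuous (fun d : ℝ => ((1 + d : ℝ) : ℂ)) := by fun_prop
      have := this.tendsto 0
      simp only [add_zero, Complex.ofReal_one] at this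
      exact this.mono_left nhdsWithin_le_nhds
    · filter_upwards [self_mem_nhdsWithin] with d hd
      have hd' : (0:ℝ) < d := hd
      simp only [Set.mem_compl_iff, Set.mem_singleton_iff]
      intro h
      have := congrArg Complex.re h
      simp at this
      linarith
  have h2 := (h.comp t).norm
  rw [norm_one] at h2
  have h3 := ((Real.continuousAt_log one_ne_zero).tendsto).comp h2
  rw [Real.log_one] at h3
  refine h3.congr' ?_
  filter_upwards [self_mem_nhdsWithin] with d hd
  have hd' : (0:ℝ) < d := hd
  have hne := riemannZeta_ne_zero_of_one_lt_re (s := ((1 + d : ℝ) : ℂ)) (by simp [hd'])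
  simp only [Function.comp]
  rw [norm_mul, Real.log_mul, add_comm]
  · congr 1
    have : ((1 + d : ℝ) : ℂ) - 1 = (d : ℂ) := by push_cast; ring
    rw [this, Complex.norm_real, Real.norm_eq_abs, Real.log_abs]
  · rw [norm_ne_zero_iff]
    have : ((1 + d : ℝ) : ℂ) - 1 = (d : ℂ) := by push_cast; ring
    rw [this]; exact_mod_cast hd'.ne'
  · exact norm_ne_zero_iff.2 hne

lemma sum_sq : Summable fun n : ℕ => 2 * (1 / (n:ℝ) ^ 2) :=
  (Real.summable_one_div_nat_pow.2 (by norm_num : 1 < 2)).mul_left 2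

lemma gpd_summable {d : ℝ} (hd : 0 < d) : Summable fun n : ℕ => gp n * (n:ℝ) ^ (-d) := by
  have h1 : Summable fun n : ℕ => gd d n - gp n * (n:ℝ) ^ (-d) :=
    Summable.of_norm_bounded sum_sq (gd_diff hd)
  have := (gd_tendsto hd).summable.sub h1
  simpa using this

lemma diff_tendsto : Tendsto (fun d : ℝ => ∑' n : ℕ, (gd d n - gp n * (n:ℝ) ^ (-d))) (nhdsWithin 0 (Set.Ioi 0)) (nhds 0) := by
  have := tendsto_tsum_of_dominated_convergence (𝓕 := nhdsWithin (0:ℝ) (Set.Ioi 0))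
    (f := fun d n => gd d n - gp n * (n:ℝ) ^ (-d)) (g := fun _ : ℕ => (0:ℝ)) sum_sq ?_ ?_
  · simpa using this
  · intro n
    by_cases h : n.Prime
    · have h0 : (0:ℝ) < n := by exact_mod_cast h.pos
      have hne : 1 - (n:ℝ) ^ (-(1 + (0:ℝ))) ≠ 0 := by
        have := prime_inv_le h
        rw [add_zero, Real.rpow_neg_one]; linarith
      have c : ContinuousAt (fun d : ℝ => -Real.log (1 - (n:ℝ) ^ (-(1 + d))) - -Real.log (1 - (n:ℝ)⁻¹) * (n:ℝ) ^ (-d)) 0 := by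
        have c1 : ContinuousAt (fun d : ℝ => (n:ℝ) ^ (-(1 + d))) 0 :=
          ContinuousAt.rpow continuousAt_const (by fun_prop) (Or.inl h0.ne')
        have c2 : ContinuousAt (fun d : ℝ => (n:ℝ) ^ (-d)) 0 :=
          ContinuousAt.rpow continuousAt_const (by fun_prop) (Or.inl h0.ne')
        exact ((c1.const_sub 1).log hne).neg.sub (c2.const_mul _)
      have := c.tendsto
      simp only [add_zero, neg_zero, Real.rpow_zero, mul_one, Real.rpow_neg_one, sub_self] at this
      simp only [gd, gp, if_pos h]
      exact this.mono_left nhdsWithin_le_nhds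
    · simp [gd, gp, h]
  · filter_upwards [self_mem_nhdsWithin] with d hd n
    exact gd_diff hd n

lemma Y_tendsto : Tendsto (fun d : ℝ => ∑' n : ℕ, gp n * (n:ℝ) ^ (-d) + Real.log d) (nhdsWithin 0 (Set.Ioi 0)) (nhds 0) := by
  have := zeta_log.sub diff_tendsto
  rw [sub_zero] at this
  refine this.congr' ?_
  filter_upwards [self_mem_nhdsWithin] with d hd
  have hd' : (0:ℝ) < d := hd
  rw [(gd_tendsto hd').summable.tsum_sub (gpd_summable hd'), (gd_tendsto hd').tsum_eq]
  ring

/-- logarithmic block -/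
noncomputable def kk (n : ℕ) : ℕ := ⌈Real.log n⌉₊

lemma kk_term {n : ℕ} {d : ℝ} (hd : 0 < d) :
    gp n * Real.exp (-d) ^ kk n ≤ gp n * (n:ℝ) ^ (-d) ∧ Real.exp (-d) * (gp n * (n:ℝ) ^ (-d)) ≤ gp n * Real.exp (-d) ^ kk n := by
  by_cases h : n.Prime
  · have h0 : (0:ℝ) < n := by exact_mod_cast h.pos
    have hg := gp_nonneg n
    have k1 : Real.log n ≤ kk n := Nat.le_ceil _
    have k2 : (kk n : ℝ) < Real.log n + 1 := Nat.ceil_lt_add_one (Real.log_natCast_nonneg n)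
    have e1 : Real.exp (-d) ^ kk n = Real.exp (-d * kk n) := by
      rw [← Real.exp_nat_mul]; ring_nf
    have e2 : (n:ℝ) ^ (-d) = Real.exp (-d * Real.log n) := by
      rw [Real.rpow_def_of_pos h0]; ring_nf
    rw [e1, e2]
    constructor
    · refine mul_le_mul_of_nonneg_left (Real.exp_le_exp.2 ?_) hg
      nlinarith
    · rw [mul_left_comm, ← Real.exp_add]
      refine mul_le_mul_of_nonneg_left (Real.exp_le_exp.2 ?_) hg
      nlinarith
  · simp [gp, h]

lemma W_summable {d : ℝ} (hd : 0 < d) : Summable fun n : ℕ => gp n * Real.exp (-d) ^ kk n :=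
  Summable.of_nonneg_of_le (fun n => mul_nonneg (gp_nonneg n) (by positivity)) (fun n => (kk_term hd).1) (gpd_summable hd)

lemma W_tendsto : Tendsto (fun d : ℝ => ∑' n : ℕ, gp n * Real.exp (-d) ^ kk n + Real.log d) (nhdsWithin 0 (Set.Ioi 0)) (nhds 0) := by
  have hdl : Tendsto (fun d : ℝ => d * Real.log d) (nhdsWithin 0 (Set.Ioi 0)) (nhds 0) := by
    have := tendsto_log_mul_rpow_nhdsGT_zero (r := 1) one_pos
    simpa [mul_comm] using this
  have hd0 : Tendsto (fun d : ℝ => d) (nhdsWithin 0 (Set.Ioi 0)) (nhds 0) := nhdsWithin_le_nhds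
  have hlow : Tendsto (fun d : ℝ => ∑' n : ℕ, gp n * (n:ℝ) ^ (-d) + Real.log d - (d * (∑' n : ℕ, gp n * (n:ℝ) ^ (-d) + Real.log d) - d * Real.log d)) (nhdsWithin 0 (Set.Ioi 0)) (nhds 0) := by
    have := Y_tendsto.sub ((hd0.mul Y_tendsto).sub hdl)
    simpa using this
  refine tendsto_of_tendsto_of_tendsto_of_le_of_le' hlow Y_tendsto ?_ ?_
  · filter_upwards [self_mem_nhdsWithin] with d hd
    have hd' : (0:ℝ) < d := hd
    have h := Summable.tsum_le_tsum (fun n => (kk_term (n := n) hd').2) ((gpd_summable hd').mul_left _) (W_summable hd')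
    rw [tsum_mul_left] at h
    have hY : 0 ≤ ∑' n : ℕ, gp n * (n:ℝ) ^ (-d) := tsum_nonneg fun n => mul_nonneg (gp_nonneg n) (Real.rpow_nonneg (Nat.cast_nonneg n) _)
    have he := Real.add_one_le_exp (-d)
    nlinarith
  · filter_upwards [self_mem_nhdsWithin] with d hd
    have h := Summable.tsum_le_tsum (fun n => (kk_term (n := n) hd).1) (W_summable hd) (gpd_summable hd)
    linarith

/-- block sums -/
noncomputable def Bk (c : ℕ) : ℝ := ∑' b : kk ⁻¹' {c}, gp b

lemma kk_le {n M : ℕ} (hn : 0 < n) : kk n ≤ M ↔ n ≤ ⌊Real.exp M⌋₊ := by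
  rw [kk, Nat.ceil_le, Nat.le_floor_iff (Real.exp_pos _).le, Real.log_le_iff_le_exp (by exact_mod_cast hn)]

lemma Bk_eq {c M : ℕ} (hc : c ≤ M) : Bk c = ∑ n ∈ Finset.range (⌊Real.exp M⌋₊ + 1), if kk n = c then gp n else 0 := by
  rw [Bk, tsum_subtype (kk ⁻¹' {c}) gp, tsum_eq_sum (s := Finset.range (⌊Real.exp M⌋₊ + 1))]
  · refine Finset.sum_congr rfl fun n _ => ?_
    by_cases h : kk n = c <;> simp [Set.indicator, h]
  · intro n hn
    refine Set.indicator_of_notMem (fun h => ?_) _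
    have h' : kk n = c := h
    apply hn
    rcases Nat.eq_zero_or_pos n with h0 | h0
    · simp [h0]
    · rw [Finset.mem_range, Nat.lt_succ_iff, ← kk_le h0]; omega

lemma Bk_sum (M : ℕ) : ∑ c ∈ Finset.range (M + 1), Bk c = ∑ n ∈ Finset.range (⌊Real.exp M⌋₊ + 1), gp n := by
  rw [Finset.sum_congr rfl fun c hc => Bk_eq (M := M) (by simpa [Nat.lt_succ_iff] using hc), Finset.sum_comm]
  refine Finset.sum_congr rfl fun n hn => ?_
  rw [Finset.sum_ite_eq, if_pos]
  rw [Finset.mem_range, Nat.lt_succ_iff]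
  rcases Nat.eq_zero_or_pos n with h0 | h0
  · simp [h0, kk]
  · rw [kk_le h0]; simpa [Nat.lt_succ_iff] using hn

lemma Bk_hasSum {d : ℝ} (hd : 0 < d) : HasSum (fun c => Bk c * Real.exp (-d) ^ c) (∑' n : ℕ, gp n * Real.exp (-d) ^ kk n) := by
  have := (W_summable hd).hasSum.tsum_fiberwise kk
  have e : (fun c => Bk c * Real.exp (-d) ^ c) = fun c => ∑' b : kk ⁻¹' {c}, gp b * Real.exp (-d) ^ kk b := by
    funext c
    show (∑' b : kk ⁻¹' {c}, gp b) * _ = _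
    rw [← tsum_mul_right]
    refine tsum_congr fun b => ?_
    have : kk b = c := b.2
    rw [this]
  rw [e]; exact this

lemma loglog_floor : Tendsto (fun M : ℕ => Real.log (Real.log (⌊Real.exp M⌋₊ : ℕ)) - Real.log M) atTop (nhds 0) := by
  have h1 : Tendsto (fun M : ℕ => Real.log (⌊Real.exp M⌋₊ : ℕ) / M) atTop (nhds 1) := by
    have hl : Tendsto (fun M : ℕ => 1 - Real.log 2 / (M:ℝ)) atTop (nhds 1) := by
      have := (tendsto_const_div_atTop_nhds_zero_nat (Real.log 2)).const_sub 1
      simpa using this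
    refine tendsto_of_tendsto_of_tendsto_of_le_of_le' hl tendsto_const_nhds ?_ ?_
    · filter_upwards [eventually_ge_atTop 1] with M hM
      have hM0 : (0:ℝ) < M := by exact_mod_cast hM
      have he : (2:ℝ) ≤ Real.exp M := by
        have := Real.add_one_le_exp (M:ℝ)
        have : (1:ℝ) ≤ M := by exact_mod_cast hM
        linarith
      have hf := Nat.lt_floor_add_one (Real.exp M)
      have : Real.exp M / 2 ≤ (⌊Real.exp M⌋₊ : ℕ) := by linarith
      have := Real.log_le_log (by positivity) this
      rw [Real.log_div (Real.exp_pos _).ne' (by norm_num), Real.log_exp] at this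
      have e : 1 - Real.log 2 / (M:ℝ) = (M - Real.log 2) / M := by field_simp
      rw [e]
      exact div_le_div_of_nonneg_right this hM0.le
    · filter_upwards [eventually_ge_atTop 1] with M hM
      have hM0 : (0:ℝ) < M := by exact_mod_cast hM
      rw [div_le_one hM0]
      have hf := Nat.floor_le (Real.exp_pos M).le
      have h1 : 1 ≤ ⌊Real.exp M⌋₊ := Nat.le_floor (by simpa using (Real.one_le_exp hM0.le))
      have := Real.log_le_log (by exact_mod_cast h1) hf
      rwa [Real.log_exp] at this
  have h2 := ((Real.continuousAt_log one_ne_zero).tendsto).comp h1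
  rw [Real.log_one] at h2
  refine h2.congr' ?_
  filter_upwards [h1.eventually (eventually_gt_nhds (show (0:ℝ) < 1 by norm_num)), eventually_ge_atTop 1] with M hM hM1
  have hM0 : (0:ℝ) < M := by exact_mod_cast hM1
  simp only [Function.comp]
  rw [Real.log_div _ hM0.ne']
  intro h
  rw [h] at hM; simp at hM

lemma exp_ratio : Tendsto (fun d : ℝ => Real.log (1 - Real.exp (-d)) - Real.log d) (nhdsWithin 0 (Set.Ioi 0)) (nhds 0) := by
  have h : HasDerivAt (fun d : ℝ => 1 - Real.exp (-d)) 1 0 := by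
    have := ((hasDerivAt_neg (0:ℝ)).exp).const_sub 1
    simpa using this
  have h1 := h.tendsto_slope_zero_right
  simp only [zero_add, neg_zero, Real.exp_zero, sub_self, sub_zero, smul_eq_mul] at h1
  have h2 := ((Real.continuousAt_log one_ne_zero).tendsto).comp h1
  rw [Real.log_one] at h2
  refine h2.congr' ?_
  filter_upwards [self_mem_nhdsWithin] with d hd
  have hd' : (0:ℝ) < d := hd
  have : Real.exp (-d) < 1 := by rw [Real.exp_lt_one_iff]; linarith
  simp only [Function.comp]
  rw [Real.log_mul (inv_ne_zero hd'.ne') (by linarith), Real.log_inv]; ring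

theorem mertens_const {C : ℝ} (hC : Tendsto (fun N : ℕ => ∑ n ∈ Finset.range (N + 1), gp n - Real.log (Real.log N)) atTop (nhds C)) :
    C = Real.eulerMascheroniConstant := by
  have hfl : Tendsto (fun M : ℕ => ⌊Real.exp M⌋₊) atTop atTop :=
    tendsto_nat_floor_atTop.comp (Real.tendsto_exp_atTop.comp tendsto_natCast_atTop_atTop)
  have hp : Tendsto (fun n => ∑ k ∈ Finset.range n, (Bk k - (k:ℝ)⁻¹)) atTop (nhds (C - Real.eulerMascheroniConstant)) := by
    rw [← tendsto_add_atTop_iff_nat 1]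
    have := ((hC.comp hfl).add loglog_floor).sub Real.tendsto_harmonic_sub_log
    rw [add_zero] at this
    refine this.congr fun M => ?_
    simp only [Function.comp]
    rw [Finset.sum_sub_distrib, Bk_sum, Finset.sum_range_succ' (fun k : ℕ => (k:ℝ)⁻¹), harmonic]
    push_cast
    simp
  have hA := Real.tendsto_tsum_powerSeries_nhdsWithin_lt hp
  have t : Tendsto (fun d : ℝ => Real.exp (-d)) (nhdsWithin 0 (Set.Ioi 0)) (nhdsWithin 1 (Set.Iio 1)) := by
    rw [tendsto_nhdsWithin_iff]
    constructor
    · have : Continuous (fun d : ℝ => Real.exp (-d)) := by fun_prop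
      have := this.tendsto 0
      simp only [neg_zero, Real.exp_zero] at this
      exact this.mono_left nhdsWithin_le_nhds
    · filter_upwards [self_mem_nhdsWithin] with d hd
      have hd' : (0:ℝ) < d := hd
      rw [Set.mem_Iio, Real.exp_lt_one_iff]; linarith
  have h1 := hA.comp t
  have h2 := W_tendsto.add exp_ratio
  rw [add_zero] at h2
  have h3 : Tendsto (fun d : ℝ => ∑' n : ℕ, gp n * Real.exp (-d) ^ kk n + Real.log d + (Real.log (1 - Real.exp (-d)) - Real.log d))
      (nhdsWithin 0 (Set.Ioi 0)) (nhds (C - Real.eulerMascheroniConstant)) := by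
    refine h1.congr' ?_
    filter_upwards [self_mem_nhdsWithin] with d hd
    have hd' : (0:ℝ) < d := hd
    have hlt : Real.exp (-d) < 1 := by rw [Real.exp_lt_one_iff]; linarith
    have hl := Real.hasSum_pow_div_log_of_abs_lt_one (x := Real.exp (-d)) (by rw [abs_of_pos (Real.exp_pos _)]; exact hlt)
    have hl' : HasSum (fun k : ℕ => (k:ℝ)⁻¹ * Real.exp (-d) ^ k) (-Real.log (1 - Real.exp (-d))) := by
      rw [← hasSum_nat_add_iff' 1]
      simp only [Finset.range_one, Finset.sum_singleton, Nat.cast_zero, inv_zero, zero_mul, sub_zero]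
      refine hl.congr_fun ?_
      intro k
      push_cast
      rw [div_eq_inv_mul]
    have := ((Bk_hasSum hd').sub hl').tsum_eq
    simp only [Function.comp]
    simp only [← sub_mul] at this
    rw [this]; ring
  have := tendsto_nhds_unique h2 h3
  linarith

theorem mertens3 : Tendsto (fun y : ℕ => Real.log y * V y) atTop (nhds (Real.exp (-Real.eulerMascheroniConstant))) := by
  obtain ⟨C, hC⟩ := mertens2
  rw [← mertens_const hC]
  have := (Real.continuous_exp.tendsto _).comp hC.neg
  refine this.congr' ?_
  filter_upwards [eventually_ge_atTop 2] with y hy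
  have hl : 0 < Real.log y := Real.log_pos (by exact_mod_cast hy)
  simp only [Function.comp]
  rw [neg_sub, sub_eq_add_neg, ← log_V, Real.exp_add, Real.exp_log hl, Real.exp_log (V_pos y)]

end Cyc

open Filter Asymptotics Real

namespace Cyc

/-- cyclic numbers up to N -/
def Cy (N : ℕ) : Finset ℕ := (Finset.Ioc 0 N).filter IsCyclicNum

lemma mem_Cy {N n : ℕ} : n ∈ Cy N ↔ (0 < n ∧ n ≤ N) ∧ IsCyclicNum n := by
  simp [Cy]

/-- no divisor congruent to one -/
def Tp (p M : ℕ) : Finset ℕ := (Finset.Ioc 0 M).filter (fun n => ∀ q ∈ Qs p M, ¬ q ∣ n)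

lemma dvd_sub_one_of_cast {p q : ℕ} (hq : q.Prime) (h : (q : ZMod p) = 1) : p ∣ q - 1 := by
  have : ((q : ℕ) : ZMod p) = ((1 : ℕ) : ZMod p) := by simpa using h
  rw [ZMod.natCast_eq_natCast_iff] at this
  exact (Nat.modEq_iff_dvd' hq.one_le).1 this.symm

lemma cast_of_dvd_sub_one {p q : ℕ} (hq : q.Prime) (h : p ∣ q - 1) : (q : ZMod p) = 1 := by
  have h1 : 1 ≡ q [MOD p] := (Nat.modEq_iff_dvd' hq.one_le).2 h
  have := (ZMod.natCast_eq_natCast_iff _ _ _).2 h1.symm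
  simpa using this

lemma upper_count (N y : ℕ) : (Cy N).card ≤ (Rough N y).card + ∑ p ∈ Nat.primesLE y, (Tp p (N / p)).card := by
  classical
  have hsub : Cy N ⊆ Rough N y ∪ (Nat.primesLE y).biUnion (fun p => (Tp p (N / p)).image (fun m => p * m)) := by
    intro n hn
    rw [mem_Cy] at hn
    obtain ⟨⟨hn0, hnN⟩, hcyc⟩ := hn
    rw [Finset.mem_union]
    by_cases h : n ∈ Rough N y
    · exact Or.inl h
    · right
      rw [mem_Rough] at h
      push Not at h
      obtain ⟨p, hp, hpy, m, rfl⟩ := h ⟨hn0, hnN⟩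
      rw [Finset.mem_biUnion]
      refine ⟨p, Nat.mem_primesLE.2 ⟨hpy, hp⟩, Finset.mem_image.2 ⟨m, ?_, rfl⟩⟩
      rw [Tp, Finset.mem_filter, Finset.mem_Ioc]
      refine ⟨⟨Nat.pos_of_mul_pos_left hn0, ?_⟩, ?_⟩
      · rw [Nat.le_div_iff_mul_le hp.pos, mul_comm]; exact hnN
      · intro q hq hqm
        rw [mem_Qs] at hq
        have h1 : p ∣ q - 1 := dvd_sub_one_of_cast hq.2.1 hq.2.2
        have h2 : q - 1 ∣ Nat.totient (p * m) := by
          rw [← Nat.totient_prime hq.2.1]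
          exact Nat.totient_dvd_of_dvd (hqm.trans (dvd_mul_left _ _))
        have h3 := Nat.dvd_gcd (dvd_mul_right p m) (h1.trans h2)
        rw [hcyc.2] at h3
        exact hp.one_lt.ne' (Nat.dvd_one.1 h3)
  refine (Finset.card_le_card hsub).trans ((Finset.card_union_le _ _).trans ?_)
  refine Nat.add_le_add_left (Finset.card_biUnion_le.trans (Finset.sum_le_sum fun p _ => Finset.card_image_le)) _

lemma Tp_bound {p M : ℕ} {s : ℝ} (hs : 0 < s) (h : s / (4 * p) ≤ Sp p M) (hp : p.Prime) :
    ((Tp p M).card : ℝ) ≤ 12 * (p * M) / s := by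
  have hp0 : (0:ℝ) < p := by exact_mod_cast hp.pos
  have ht := turan (Qs p M) M (fun q hq => ⟨(mem_Qs.1 hq).2.1, (mem_Qs.1 hq).1⟩)
  have h1 : ((Tp p M).card : ℝ) * (s / (4 * p)) ≤ 3 * M :=
    le_trans (mul_le_mul_of_nonneg_left h (Nat.cast_nonneg _)) ht
  rw [le_div_iff₀ hs]
  have h2 : ((Tp p M).card : ℝ) * s = ((Tp p M).card : ℝ) * (s / (4 * p)) * (4 * p) := by field_simp
  rw [h2]
  calc _ ≤ 3 * (M:ℝ) * (4 * p) := by gcongr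
    _ = _ := by ring

lemma dvd_totient_cases {n p : ℕ} (hn : 0 < n) (hp : p.Prime) (hpn : p ∣ n) (h : p ∣ Nat.totient n) :
    p * p ∣ n ∨ ∃ q, q.Prime ∧ q ∣ n ∧ p ∣ q - 1 := by
  rw [Nat.totient_eq_div_primeFactors_mul] at h
  rcases (hp.dvd_mul).1 h with h | h
  · left
    have h1 : p ∣ ∏ q ∈ n.primeFactors, q :=
      Finset.dvd_prod_of_mem (fun q => q) (Nat.mem_primeFactors.2 ⟨hp, hpn, hn.ne'⟩)
    have h2 := mul_dvd_mul h h1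
    rwa [Nat.div_mul_cancel (Nat.prod_primeFactors_dvd n)] at h2
  · right
    obtain ⟨q, hq, hd⟩ := (Prime.dvd_finset_prod_iff hp.prime _).1 h
    exact ⟨q, Nat.prime_of_mem_primeFactors hq, Nat.dvd_of_mem_primeFactors hq, hd⟩

lemma card_dvd_le (N d : ℕ) : (((Finset.Ioc 0 N).filter (fun n => d ∣ n)).card : ℝ) ≤ N * (1 / (d:ℝ)) := by
  rw [Nat.Ioc_filter_dvd_card_eq_div, mul_one_div]
  exact Nat.cast_div_le

lemma lower_count (N z : ℕ) : ((Rough N z).card : ℝ) ≤ (Cy N).card +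
    ∑ p ∈ (Finset.Ioc z N).filter Nat.Prime, (N * (1 / ((p:ℝ) ^ 2)) + N * (1 / (p:ℝ)) * Sp p N) := by
  classical
  set P := (Finset.Ioc z N).filter Nat.Prime
  have hsub : Rough N z ⊆ Cy N ∪ P.biUnion (fun p => (Finset.Ioc 0 N).filter (fun n => p * p ∣ n) ∪
      (Qs p N).biUnion (fun q => (Finset.Ioc 0 N).filter (fun n => p * q ∣ n))) := by
    intro n hn
    rw [mem_Rough] at hn
    obtain ⟨⟨hn0, hnN⟩, hr⟩ := hn
    rw [Finset.mem_union]
    by_cases hc : IsCyclicNum n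
    · exact Or.inl (mem_Cy.2 ⟨⟨hn0, hnN⟩, hc⟩)
    · right
      have hg : Nat.gcd n (Nat.totient n) ≠ 1 := fun h => hc ⟨hn0, h⟩
      obtain ⟨p, hp, hpd⟩ := Nat.exists_prime_and_dvd hg
      have hpn := hpd.trans (Nat.gcd_dvd_left _ _)
      have hpt := hpd.trans (Nat.gcd_dvd_right _ _)
      have hpN : p ≤ N := (Nat.le_of_dvd hn0 hpn).trans hnN
      have hpz : z < p := by
        by_contra hh
        exact hr p hp (not_lt.1 hh) hpn
      rw [Finset.mem_biUnion]
      refine ⟨p, Finset.mem_filter.2 ⟨Finset.mem_Ioc.2 ⟨hpz, hpN⟩, hp⟩, ?_⟩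
      rw [Finset.mem_union]
      rcases dvd_totient_cases hn0 hp hpn hpt with h | ⟨q, hq, hqn, hqd⟩
      · left; exact Finset.mem_filter.2 ⟨Finset.mem_Ioc.2 ⟨hn0, hnN⟩, h⟩
      · right
        rw [Finset.mem_biUnion]
        refine ⟨q, mem_Qs.2 ⟨(Nat.le_of_dvd hn0 hqn).trans hnN, hq, cast_of_dvd_sub_one hq hqd⟩,
          Finset.mem_filter.2 ⟨Finset.mem_Ioc.2 ⟨hn0, hnN⟩, ?_⟩⟩
        refine Nat.Coprime.mul_dvd_of_dvd_of_dvd ((Nat.coprime_primes hp hq).2 ?_) hpn hqn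
        rintro rfl
        have := Nat.le_of_dvd (by have := hp.two_le; omega) hqd
        have := hp.two_le
        omega
  have h1 : (Rough N z).card ≤ (Cy N).card + ∑ p ∈ P, (((Finset.Ioc 0 N).filter (fun n => p * p ∣ n)).card +
      ∑ q ∈ Qs p N, ((Finset.Ioc 0 N).filter (fun n => p * q ∣ n)).card) := by
    refine (Finset.card_le_card hsub).trans ((Finset.card_union_le _ _).trans (Nat.add_le_add_left ?_ _))
    refine Finset.card_biUnion_le.trans (Finset.sum_le_sum fun p _ => ?_)
    exact (Finset.card_union_le _ _).trans (Nat.add_le_add_left Finset.card_biUnion_le _)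
  have h2 : ((Rough N z).card : ℝ) ≤ (Cy N).card + ∑ p ∈ P, ((((Finset.Ioc 0 N).filter (fun n => p * p ∣ n)).card : ℝ) +
      ∑ q ∈ Qs p N, (((Finset.Ioc 0 N).filter (fun n => p * q ∣ n)).card : ℝ)) := by exact_mod_cast h1
  refine h2.trans (add_le_add le_rfl (Finset.sum_le_sum fun p _ => add_le_add ?_ ?_))
  · refine (card_dvd_le N _).trans (le_of_eq ?_)
    push_cast; rw [sq]
  · rw [Sp, Finset.mul_sum]
    refine Finset.sum_le_sum fun q _ => (card_dvd_le N _).trans (le_of_eq ?_)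
    push_cast
    rw [mul_assoc, one_div_mul_one_div]

end Cyc

open Filter Asymptotics Real

namespace Cyc

theorem upper_bound : ∃ C0 : ℝ, 0 < C0 ∧ ∀ N y : ℕ, 4 ≤ Real.log N → 0 < Real.log (Real.log N) →
    C0 * y * ell y ^ 9 ≤ Real.log (Real.log N) / 2 → 2 * (y:ℝ) ≤ √N →
    ((Cy N).card : ℝ) ≤ N * V y + 4 ^ y + 24 * N * y / Real.log (Real.log N) := by
  obtain ⟨C0, hC0, hL⟩ := propL
  refine ⟨C0, hC0, fun N y hlog ht hy hyN => ?_⟩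
  set t := Real.log (Real.log N) with htd
  have hN0 : (0:ℝ) < N := by
    rcases Nat.eq_zero_or_pos N with h | h
    · rw [h] at hlog; simp at hlog; linarith
    · exact_mod_cast h
  have hT : ∀ p ∈ Nat.primesLE y, ((Tp p (N / p)).card : ℝ) ≤ 24 * N / t := by
    intro p hp
    have hpp := Nat.prime_of_mem_primesLE hp
    have hpy := Nat.le_of_mem_primesLE hp
    have hp0 : (0:ℝ) < p := by exact_mod_cast hpp.pos
    have hpy' : (p:ℝ) ≤ y := by exact_mod_cast hpy
    have hsq : √(N:ℝ) ≤ ((N / p : ℕ) : ℝ) := by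
      have hd2 := Nat.lt_floor_add_one ((N : ℝ) / p)
      rw [Nat.floor_div_natCast, Nat.floor_natCast] at hd2
      have h1 : 2 * √(N:ℝ) ≤ N / p := by
        rw [le_div_iff₀ hp0]
        have := Real.mul_self_sqrt hN0.le
        nlinarith [Real.sqrt_nonneg (N:ℝ)]
      have h2 : 1 ≤ √(N:ℝ) := by
        have : (2:ℝ) ≤ p := by exact_mod_cast hpp.two_le
        linarith
      linarith
    have hl1 : Real.log N / 2 ≤ Real.log ((N / p : ℕ) : ℝ) := by
      rw [← Real.log_sqrt hN0.le]
      exact Real.log_le_log (Real.sqrt_pos.2 hN0) hsq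
    have hl2 : t / 2 ≤ Real.log (Real.log ((N / p : ℕ) : ℝ)) := by
      rw [htd, ← Real.log_sqrt (by linarith)]
      refine Real.log_le_log (Real.sqrt_pos.2 (by linarith)) (le_trans ?_ hl1)
      rw [Real.sqrt_le_left (by linarith)]
      nlinarith
    have he : ell p ≤ ell y := by
      unfold ell
      linarith [Real.log_le_log hp0 hpy']
    have he1 : 0 ≤ ell p := le_trans zero_le_one (one_le_ell p)
    have hpl := hL p (N / p) hpp (le_trans (le_trans (by gcongr) hy) hl2)
    have h := Tp_bound (by linarith) hpl hpp
    refine h.trans ?_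
    have hpN : (p:ℝ) * ((N / p : ℕ) : ℝ) ≤ N := by exact_mod_cast Nat.mul_div_le N p
    calc _ ≤ 12 * (N:ℝ) / (t / 2) := by gcongr
      _ = _ := by field_simp; ring
  have h1 : ((Cy N).card : ℝ) ≤ (Rough N y).card + ∑ p ∈ Nat.primesLE y, ((Tp p (N / p)).card : ℝ) := by
    exact_mod_cast upper_count N y
  have h2 := (abs_le.1 (rough_bound N y)).2
  have h3 : ∑ p ∈ Nat.primesLE y, ((Tp p (N / p)).card : ℝ) ≤ 24 * N * y / t := by
    refine (Finset.sum_le_card_nsmul _ _ _ hT).trans ?_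
    rw [nsmul_eq_mul]
    have hc : ((Nat.primesLE y).card : ℝ) ≤ y := by
      have : Nat.primesLE y ⊆ Finset.Ioc 0 y := fun q hq => Finset.mem_Ioc.2
        ⟨(Nat.prime_of_mem_primesLE hq).pos, Nat.le_of_mem_primesLE hq⟩
      have := Finset.card_le_card this
      rw [Nat.card_Ioc] at this
      exact_mod_cast this
    calc _ ≤ (y:ℝ) * (24 * N / t) := by gcongr
      _ = _ := by ring
  linarith

theorem lower_bound : ∃ C : ℝ, 0 < C ∧ ∀ N z : ℕ, 1 ≤ z → 1 ≤ Real.log (Real.log N) →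
    N * V z ≤ (Cy N).card + 4 ^ z + N * (C * ((1 + Real.log (Real.log N)) / z + (z:ℝ) ^ (-(1/8):ℝ))) := by
  obtain ⟨C, hC, hU⟩ := propU
  have hs : Summable fun n : ℕ => (n:ℝ) ^ (-(9/8):ℝ) := Real.summable_nat_rpow.2 (by norm_num)
  set K := ∑' n : ℕ, (n:ℝ) ^ (-(9/8):ℝ)
  have hK : 0 ≤ K := tsum_nonneg fun n => by positivity
  refine ⟨1 + C + C * K, by positivity, fun N z hz ht => ?_⟩
  set t := Real.log (Real.log N)
  have hz0 : (0:ℝ) < z := by exact_mod_cast hz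
  have h2 := (abs_le.1 (rough_bound N z)).1
  have h1 := lower_count N z
  have hsq : ∑ p ∈ (Finset.Ioc z N).filter Nat.Prime, (1 / (p:ℝ) ^ 2) ≤ 1 / (z:ℝ) := by
    refine (Finset.sum_le_sum_of_subset_of_nonneg (Finset.filter_subset _ _) fun _ _ _ => by positivity).trans ?_
    rcases le_or_gt z N with h | h
    · have := sum_Ioc_inv_sq_le_sub (α := ℝ) (by omega : z ≠ 0) h
      simp only [one_div]
      have h0 : (0:ℝ) ≤ (N:ℝ)⁻¹ := by positivity
      linarith
    · rw [Finset.Ioc_eq_empty (by omega)]; simp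
  have hr : ∑ p ∈ (Finset.Ioc z N).filter Nat.Prime, (1 / (p:ℝ)) * (p:ℝ) ^ (-(1/4):ℝ) ≤ K * (z:ℝ) ^ (-(1/8):ℝ) := by
    have : ∀ p ∈ (Finset.Ioc z N).filter Nat.Prime, (1 / (p:ℝ)) * (p:ℝ) ^ (-(1/4):ℝ) ≤ (p:ℝ) ^ (-(9/8):ℝ) * (z:ℝ) ^ (-(1/8):ℝ) := by
      intro p hp
      have hzp := (Finset.mem_Ioc.1 (Finset.mem_filter.1 hp).1).1
      have hzp' : (z:ℝ) ≤ p := by exact_mod_cast hzp.le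
      have hp0 : (0:ℝ) < p := by linarith
      have e : (1 / (p:ℝ)) * (p:ℝ) ^ (-(1/4):ℝ) = (p:ℝ) ^ (-(9/8):ℝ) * (p:ℝ) ^ (-(1/8):ℝ) := by
        rw [one_div, ← Real.rpow_neg_one, ← Real.rpow_add hp0, ← Real.rpow_add hp0]; norm_num
      rw [e]
      refine mul_le_mul_of_nonneg_left ?_ (by positivity)
      exact Real.rpow_le_rpow_of_nonpos hz0 hzp' (by norm_num)
    refine (Finset.sum_le_sum this).trans ?_
    rw [← Finset.sum_mul]
    exact mul_le_mul_of_nonneg_right (hs.sum_le_tsum _ fun n _ => by positivity) (by positivity)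
  have h3 : ∑ p ∈ (Finset.Ioc z N).filter Nat.Prime, (N * (1 / ((p:ℝ) ^ 2)) + N * (1 / (p:ℝ)) * Sp p N) ≤
      N * (1 / (z:ℝ) + C * (t * (1 / (z:ℝ)) + K * (z:ℝ) ^ (-(1/8):ℝ))) := by
    have : ∀ p ∈ (Finset.Ioc z N).filter Nat.Prime, N * (1 / ((p:ℝ) ^ 2)) + N * (1 / (p:ℝ)) * Sp p N ≤
        N * (1 / ((p:ℝ) ^ 2) + C * (t * (1 / (p:ℝ) ^ 2) + (1 / (p:ℝ)) * (p:ℝ) ^ (-(1/4):ℝ))) := by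
      intro p hp
      have hp0 : (0:ℝ) < p := by exact_mod_cast (Finset.mem_filter.1 hp).2.pos
      have := mul_le_mul_of_nonneg_left (hU p N (Finset.mem_filter.1 hp).2 ht) (show 0 ≤ N * (1 / (p:ℝ)) by positivity)
      refine (add_le_add le_rfl this).trans (le_of_eq ?_)
      field_simp
      rfl
    refine (Finset.sum_le_sum this).trans ?_
    rw [← Finset.mul_sum, Finset.sum_add_distrib, ← Finset.mul_sum, Finset.sum_add_distrib, ← Finset.mul_sum]
    gcongr
  have hw : (0:ℝ) ≤ (z:ℝ) ^ (-(1/8):ℝ) := by positivity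
  have h4 : 1 / (z:ℝ) + C * (t * (1 / (z:ℝ)) + K * (z:ℝ) ^ (-(1/8):ℝ)) ≤ (1 + C + C * K) * ((1 + t) / z + (z:ℝ) ^ (-(1/8):ℝ)) := by
    have e : (1 + t) / (z:ℝ) = 1 / (z:ℝ) + t * (1 / (z:ℝ)) := by field_simp
    rw [e]
    have hi : (0:ℝ) < 1 / z := by positivity
    set a : ℝ := 1 / z
    set w := (z:ℝ) ^ (-(1/8):ℝ)
    have hta : 0 < t * a := by positivity
    have := mul_nonneg hC.le hK
    have q1 : 0 ≤ C * K * (a + t * a) := by positivity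
    have q2 : 0 ≤ C * a := by positivity
    have q3 : 0 ≤ C * w := by positivity
    linarith
  have h5 := mul_le_mul_of_nonneg_left h4 (Nat.cast_nonneg N : (0:ℝ) ≤ N)
  linarith

end Cyc

open Filter Asymptotics Real

namespace Cyc

/-- lower sieve level -/
noncomputable def yv (t : ℝ) : ℕ := ⌊t / Real.log t ^ 10⌋₊
/-- upper sieve level -/
noncomputable def zv (t : ℝ) : ℕ := ⌈t * Real.log t ^ 2⌉₊

lemma loglog_ratio : Tendsto (fun t : ℝ => Real.log (Real.log t) / Real.log t) atTop (nhds 0) :=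
  (Real.isLittleO_log_id_atTop.tendsto_div_nhds_zero).comp Real.tendsto_log_atTop

lemma fy_tendsto : Tendsto (fun t : ℝ => t / Real.log t ^ 10) atTop atTop := by
  have h := (Real.isLittleO_pow_log_id_atTop (n := 10)).tendsto_div_nhds_zero
  have h2 : Tendsto (fun t : ℝ => Real.log t ^ 10 / t) atTop (nhdsWithin 0 (Set.Ioi 0)) := by
    rw [tendsto_nhdsWithin_iff]
    refine ⟨h, ?_⟩
    filter_upwards [eventually_gt_atTop 1] with t ht
    have := Real.log_pos ht
    have : 0 < t := by linarith
    rw [Set.mem_Ioi]; positivity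
  refine (tendsto_inv_nhdsGT_zero.comp h2).congr fun t => ?_
  simp

lemma fz_tendsto : Tendsto (fun t : ℝ => t * Real.log t ^ 2) atTop atTop :=
  tendsto_id.atTop_mul_atTop₀ ((tendsto_pow_atTop (by norm_num)).comp Real.tendsto_log_atTop)

lemma log_ratio {g : ℝ → ℕ} {f : ℝ → ℝ} (hf : Tendsto f atTop atTop) (hg : Tendsto (fun t => (g t : ℝ) / f t) atTop (nhds 1))
    (hl : Tendsto (fun t => Real.log (f t) / Real.log t) atTop (nhds 1)) :
    Tendsto (fun t => Real.log (g t) / Real.log t) atTop (nhds 1) := by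
  have h1 := ((Real.continuousAt_log one_ne_zero).tendsto).comp hg
  rw [Real.log_one] at h1
  have h2 := (h1.div_atTop Real.tendsto_log_atTop).add hl
  rw [zero_add] at h2
  refine h2.congr' ?_
  filter_upwards [hf.eventually_gt_atTop 0, hg.eventually (eventually_gt_nhds (show (0:ℝ) < 1 by norm_num))] with t h0 hgp
  have hg0 : (g t : ℝ) ≠ 0 := by
    intro h; rw [h] at hgp; simp at hgp
  simp only [Function.comp]
  rw [Real.log_div hg0 h0.ne']; ring

lemma log_yv : Tendsto (fun t => Real.log (yv t) / Real.log t) atTop (nhds 1) := by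
  refine log_ratio fy_tendsto ((tendsto_nat_floor_div_atTop (R := ℝ)).comp fy_tendsto) ?_
  have := (loglog_ratio.const_mul 10).const_sub 1
  rw [mul_zero, sub_zero] at this
  refine this.congr' ?_
  filter_upwards [eventually_gt_atTop 1] with t ht
  have hl := Real.log_pos ht
  rw [Real.log_div (by linarith) (by positivity), Real.log_pow]
  field_simp
  push_cast; ring

lemma log_zv : Tendsto (fun t => Real.log (zv t) / Real.log t) atTop (nhds 1) := by
  refine log_ratio fz_tendsto ((tendsto_nat_ceil_div_atTop (R := ℝ)).comp fz_tendsto) ?_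
  have := (loglog_ratio.const_mul 2).const_add 1
  rw [mul_zero, add_zero] at this
  refine this.congr' ?_
  filter_upwards [eventually_gt_atTop 1] with t ht
  have hl := Real.log_pos ht
  rw [Real.log_mul (by linarith) (by positivity), Real.log_pow]
  field_simp
  push_cast; ring

lemma V_level {g : ℝ → ℕ} (hg : Tendsto g atTop atTop) (hl : Tendsto (fun t => Real.log (g t) / Real.log t) atTop (nhds 1)) :
    Tendsto (fun t => Real.log t * V (g t)) atTop (nhds (Real.exp (-Real.eulerMascheroniConstant))) := by
  have h := (mertens3.comp hg).div hl one_ne_zero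
  rw [div_one] at h
  refine h.congr' ?_
  filter_upwards [hg.eventually_ge_atTop 2, eventually_gt_atTop 1] with t h2 ht
  have h1 : 0 < Real.log (g t) := Real.log_pos (by exact_mod_cast h2)
  have h3 := Real.log_pos ht
  simp only [Pi.div_apply, Function.comp]
  field_simp

lemma pow_level {g : ℝ → ℕ} (hg : ∀ᶠ t in atTop, (g t : ℝ) ≤ t ^ 2) :
    Tendsto (fun t => Real.log t * 4 ^ (g t) / Real.exp (Real.exp t)) atTop (nhds 0) := by
  refine tendsto_of_tendsto_of_tendsto_of_le_of_le' tendsto_const_nhds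
    (Real.tendsto_exp_atBot.comp tendsto_neg_atTop_atBot) ?_ ?_
  · filter_upwards [eventually_ge_atTop 1] with t ht
    have := Real.log_nonneg ht
    positivity
  · have h3 : ∀ᶠ t : ℝ in atTop, t ^ 3 ≤ Real.exp t := by
      have := (Real.tendsto_exp_div_pow_atTop 3).eventually_ge_atTop 1
      filter_upwards [this, eventually_gt_atTop 0] with t h h0
      rwa [le_div_iff₀ (by positivity), one_mul] at h
    filter_upwards [hg, h3, eventually_ge_atTop 4] with t hgt ht3 ht4
    have hl : Real.log t ≤ Real.exp t := by
      have := Real.log_le_sub_one_of_pos (by linarith : 0 < t)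
      have := Real.add_one_le_exp t
      linarith
    have h4 : (4:ℝ) ^ (g t) ≤ Real.exp (2 * t ^ 2) := by
      have e : (4:ℝ) ≤ Real.exp 2 := by
        have := Real.quadratic_le_exp_of_nonneg (x := 2) (by norm_num)
        norm_num at this; linarith
      calc (4:ℝ) ^ (g t) ≤ Real.exp 2 ^ (g t) := by gcongr
        _ = Real.exp (g t * 2) := by rw [← Real.exp_nat_mul]
        _ ≤ _ := Real.exp_le_exp.2 (by linarith)
    simp only [Function.comp]
    calc Real.log t * 4 ^ (g t) / Real.exp (Real.exp t) ≤ Real.exp t * Real.exp (2 * t ^ 2) / Real.exp (Real.exp t) := by gcongr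
      _ = Real.exp (t + 2 * t ^ 2 - Real.exp t) := by rw [← Real.exp_add, ← Real.exp_sub]
      _ ≤ _ := by
        refine Real.exp_le_exp.2 ?_
        nlinarith [sq_nonneg t, mul_nonneg (sq_nonneg t) (by linarith : 0 ≤ t - 4)]

lemma yv_le {t : ℝ} (h1 : 0 < t) (h : 1 ≤ Real.log t) : (yv t : ℝ) ≤ t / Real.log t ^ 10 :=
  Nat.floor_le (by positivity)

lemma yv_le' {t : ℝ} (h1 : 0 < t) (h : 1 ≤ Real.log t) : (yv t : ℝ) ≤ t :=
  (yv_le h1 h).trans (div_le_self h1.le (one_le_pow₀ h))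

lemma zv_ge {t : ℝ} : t * Real.log t ^ 2 ≤ (zv t : ℝ) := Nat.le_ceil _

lemma ev_yv_sq : ∀ᶠ t : ℝ in atTop, (yv t : ℝ) ≤ t ^ 2 := by
  filter_upwards [Real.tendsto_log_atTop.eventually_ge_atTop 1, eventually_ge_atTop 1] with t h1 h2
  have := yv_le' (by linarith) h1
  nlinarith

lemma ev_zv_sq : ∀ᶠ t : ℝ in atTop, (zv t : ℝ) ≤ t ^ 2 := by
  have h := (Real.isLittleO_pow_log_id_atTop (n := 2)).bound (show (0:ℝ) < 1/2 by norm_num)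
  filter_upwards [h, eventually_ge_atTop 2] with t h1 h2
  have hc := Nat.ceil_lt_add_one (show 0 ≤ t * Real.log t ^ 2 by positivity)
  rw [Real.norm_eq_abs, abs_of_nonneg (sq_nonneg _), id, Real.norm_eq_abs, abs_of_nonneg (by linarith)] at h1
  rw [zv]
  nlinarith

/-- the main counting asymptotic -/
theorem count_asymp : Tendsto (fun N : ℕ => ((Cy N).card : ℝ) * Real.log (Real.log (Real.log N)) / N) atTop
    (nhds (Real.exp (-Real.eulerMascheroniConstant))) := by
  obtain ⟨C0, hC0, hU⟩ := upper_bound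
  obtain ⟨C, hC, hL⟩ := lower_bound
  have hlogN : Tendsto (fun N : ℕ => Real.log N) atTop atTop := Real.tendsto_log_atTop.comp tendsto_natCast_atTop_atTop
  have htt : Tendsto (fun N : ℕ => Real.log (Real.log N)) atTop atTop := Real.tendsto_log_atTop.comp hlogN
  have hlt : Tendsto (fun t : ℝ => Real.log t) atTop atTop := Real.tendsto_log_atTop
  -- upper
  have up : Tendsto (fun t : ℝ => Real.log t * V (yv t) + Real.log t * 4 ^ (yv t) / Real.exp (Real.exp t) + 24 * (Real.log t)⁻¹)
      atTop (nhds (Real.exp (-Real.eulerMascheroniConstant))) := by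
    have := ((V_level (g := yv) (tendsto_nat_floor_atTop.comp fy_tendsto) log_yv).add (pow_level ev_yv_sq)).add
      ((tendsto_inv_atTop_zero.comp hlt).const_mul 24)
    simpa using this
  have low : Tendsto (fun t : ℝ => Real.log t * V (zv t) - Real.log t * 4 ^ (zv t) / Real.exp (Real.exp t) -
      C * (2 * (Real.log t)⁻¹ + Real.log t / t ^ (1/8:ℝ)))
      atTop (nhds (Real.exp (-Real.eulerMascheroniConstant))) := by
    have h8 : Tendsto (fun t : ℝ => Real.log t / t ^ (1/8:ℝ)) atTop (nhds 0) :=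
      (isLittleO_log_rpow_atTop (by norm_num)).tendsto_div_nhds_zero
    have := ((V_level (g := zv) (tendsto_nat_ceil_atTop.comp fz_tendsto) log_zv).sub (pow_level ev_zv_sq)).sub
      ((((tendsto_inv_atTop_zero.comp hlt).const_mul 2).add h8).const_mul C)
    simpa using this
  refine tendsto_of_tendsto_of_tendsto_of_le_of_le' (low.comp htt) (up.comp htt) ?_ ?_
  · filter_upwards [htt.eventually_ge_atTop 1, hlogN.eventually_ge_atTop 1, (hlt.comp htt).eventually_ge_atTop 1, eventually_ge_atTop 1] with N ht hlN hlt1 hN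
    simp only [Function.comp] at hlt1 ⊢
    have hN0 : (0:ℝ) < N := by exact_mod_cast hN
    have hexp : Real.exp (Real.exp (Real.log (Real.log N))) = N := by
      rw [Real.exp_log (by linarith), Real.exp_log hN0]
    rw [hexp]
    have hLL := fun z hz => hL N z hz ht
    set t := Real.log (Real.log N)
    set l := Real.log t
    have hz : t ≤ (zv t : ℝ) := le_trans (le_mul_of_one_le_right (by linarith) (one_le_pow₀ hlt1)) zv_ge
    have hz1 : 1 ≤ zv t := by
      have : (1:ℝ) ≤ zv t := ht.trans hz
      exact_mod_cast this
    have hb := hLL (zv t) hz1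
    have e1 : (1 + t) / (zv t) ≤ 2 * (l ^ 2)⁻¹ := by
      rw [div_le_iff₀ (by linarith)]
      have : t * l ^ 2 ≤ zv t := zv_ge
      calc 1 + t ≤ 2 * (l ^ 2)⁻¹ * (t * l ^ 2) := by field_simp; linarith
        _ ≤ _ := by gcongr
    have e2 : (zv t : ℝ) ^ (-(1/8):ℝ) ≤ (t ^ (1/8:ℝ))⁻¹ := by
      rw [← Real.rpow_neg (by linarith)]
      exact Real.rpow_le_rpow_of_nonpos (by linarith) hz (by norm_num)
    have e3 : N * V (zv t) ≤ (Cy N).card + 4 ^ (zv t) + N * (C * (2 * (l ^ 2)⁻¹ + (t ^ (1/8:ℝ))⁻¹)) := by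
      refine hb.trans (add_le_add le_rfl ?_)
      gcongr
    have e4 := mul_le_mul_of_nonneg_right e3 (show 0 ≤ l / N by positivity)
    have a1 : N * V (zv t) * (l / N) = l * V (zv t) := by field_simp
    have a2 : ((Cy N).card + 4 ^ (zv t) + N * (C * (2 * (l ^ 2)⁻¹ + (t ^ (1/8:ℝ))⁻¹))) * (l / N) =
        (Cy N).card * l / N + l * 4 ^ (zv t) / N + C * (2 * l⁻¹ + l / t ^ (1/8:ℝ)) := by
      have : 0 < t ^ (1/8:ℝ) := Real.rpow_pos_of_pos (by linarith) _
      field_simp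
    rw [a1, a2] at e4
    linarith
  · filter_upwards [htt.eventually_ge_atTop 6, hlogN.eventually_ge_atTop 4, (hlt.comp htt).eventually_ge_atTop 1, (hlt.comp htt).eventually_ge_atTop (1024 * C0), eventually_ge_atTop 1] with N ht hlN hlt1 hltC hN
    simp only [Function.comp] at hlt1 hltC ⊢
    have hN0 : (0:ℝ) < N := by exact_mod_cast hN
    have hexp : Real.exp (Real.exp (Real.log (Real.log N))) = N := by
      rw [Real.exp_log (by linarith), Real.exp_log hN0]
    rw [hexp]
    have hUU := fun y => hU N y hlN (by linarith)
    set t := Real.log (Real.log N)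
    set l := Real.log t
    have ht0 : 0 < t := by linarith
    have hy1 := yv_le ht0 hlt1
    have hy2 := yv_le' ht0 hlt1
    have hell : ell (yv t) ≤ 2 * l := by
      unfold ell
      rcases Nat.eq_zero_or_pos (yv t) with h | h
      · rw [h]; simp; linarith
      · have := Real.log_le_log (by exact_mod_cast h) hy2
        linarith
    have hell1 : 0 ≤ ell (yv t) := le_trans zero_le_one (one_le_ell _)
    have c1 : C0 * (yv t) * ell (yv t) ^ 9 ≤ t / 2 := by
      calc C0 * (yv t) * ell (yv t) ^ 9 ≤ C0 * (t / l ^ 10) * (2 * l) ^ 9 := by gcongr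
        _ = (512 * C0) * t / l := by field_simp; ring
        _ ≤ _ := by
          rw [div_le_div_iff₀ (by linarith) (by norm_num)]
          nlinarith
    have c2 : 2 * (yv t : ℝ) ≤ √N := by
      have e : √(N:ℝ) = Real.exp (Real.exp t / 2) := by
        rw [← hexp, Real.exp_half]
      rw [e]
      have h1 := Real.add_one_le_exp (Real.exp t / 2)
      have h2 := Real.quadratic_le_exp_of_nonneg ht0.le
      nlinarith
    have hb := hUU (yv t) c1 c2
    have e3 : ((Cy N).card : ℝ) ≤ N * V (yv t) + 4 ^ (yv t) + 24 * N * (t / l ^ 2) / t := by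
      refine hb.trans (add_le_add le_rfl ?_)
      have : (yv t : ℝ) ≤ t / l ^ 2 := hy1.trans (by
        have : l ^ 2 ≤ l ^ 10 := pow_le_pow_right₀ hlt1 (by norm_num)
        gcongr)
      gcongr
    have e4 := mul_le_mul_of_nonneg_right e3 (show 0 ≤ l / N by positivity)
    have a2 : (N * V (yv t) + 4 ^ (yv t) + 24 * N * (t / l ^ 2) / t) * (l / N) =
        l * V (yv t) + l * 4 ^ (yv t) / N + 24 * l⁻¹ := by
      field_simp
    rw [a2] at e4
    rw [mul_div_assoc]; exact e4

end Cyc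

open Filter Asymptotics Real

namespace Cyc

lemma cyc_infinite : (Set.ofPred IsCyclicNum).Infinite := by
  refine Nat.infinite_setOfPred_prime.mono ?_
  intro p hp
  have hp : p.Prime := hp
  refine ⟨hp.pos, ?_⟩
  rw [Nat.totient_prime hp]
  exact (Nat.coprime_self_sub_right hp.one_le).2 (Nat.coprime_one_right p)

lemma card_Cy_cyclicNum {n : ℕ} (hn : 1 ≤ n) : (Cy (cyclicNum n)).card = n := by
  have h := Nat.count_nth_succ_of_infinite cyc_infinite (n - 1)
  rw [Nat.count_eq_card_filter_range, Nat.sub_add_cancel hn] at h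
  conv_rhs => rw [← h]
  congr 1
  ext m
  rw [mem_Cy]
  simp only [Finset.mem_filter, Finset.mem_range, cyclicNum]
  constructor
  · rintro ⟨⟨_, h2⟩, h3⟩
    exact ⟨by omega, h3⟩
  · rintro ⟨h2, h3⟩
    exact ⟨⟨h3.1, by omega⟩, h3⟩

lemma le_cyclicNum {n : ℕ} (hn : 1 ≤ n) : n ≤ cyclicNum n := by
  have h := card_Cy_cyclicNum hn
  have h2 : (Cy (cyclicNum n)).card ≤ (Finset.Ioc 0 (cyclicNum n)).card := Finset.card_filter_le _ _
  rw [h] at h2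
  simpa using h2

lemma cyclicNum_tendsto : Tendsto cyclicNum atTop atTop :=
  tendsto_atTop_mono' _ (by filter_upwards [eventually_ge_atTop 1] with n hn using le_cyclicNum hn) tendsto_id

theorem main : (fun n : ℕ => (cyclicNum n : ℝ)) ~[atTop]
      (fun n : ℕ => Real.exp Real.eulerMascheroniConstant * (n : ℝ) *
        Real.log (Real.log (Real.log n))) := by
  have l1 : Tendsto (fun N : ℕ => Real.log N) atTop atTop := Real.tendsto_log_atTop.comp tendsto_natCast_atTop_atTop
  have l2 : Tendsto (fun N : ℕ => Real.log (Real.log N)) atTop atTop := Real.tendsto_log_atTop.comp l1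
  have l3 : Tendsto (fun N : ℕ => Real.log (Real.log (Real.log N))) atTop atTop := Real.tendsto_log_atTop.comp l2
  have hR : Tendsto (fun n : ℕ => (n : ℝ) * Real.log (Real.log (Real.log (cyclicNum n))) / (cyclicNum n)) atTop
      (nhds (Real.exp (-Real.eulerMascheroniConstant))) := by
    refine (count_asymp.comp cyclicNum_tendsto).congr' ?_
    filter_upwards [eventually_ge_atTop 1] with n hn
    simp only [Function.comp, card_Cy_cyclicNum hn]
  set δ := Real.exp (-Real.eulerMascheroniConstant) / 2 with hδ
  have hδ0 : 0 < δ := by positivity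
  have hsmall : ∀ᶠ N : ℕ in atTop, Real.log (Real.log (Real.log N)) ≤ δ * Real.sqrt N := by
    have h := ((isLittleO_log_rpow_atTop (show (0:ℝ) < 1/2 by norm_num)).bound hδ0)
    have h' := tendsto_natCast_atTop_atTop (R := ℝ) |>.eventually h
    filter_upwards [h', l1.eventually_ge_atTop 1, l2.eventually_ge_atTop 1] with N h h1 h2
    rw [← Real.sqrt_eq_rpow, Real.norm_eq_abs, Real.norm_eq_abs, abs_of_nonneg (by linarith), abs_of_nonneg (Real.sqrt_nonneg _)] at h
    have a1 := Real.log_le_self (show 0 ≤ Real.log (Real.log N) by linarith)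
    have a2 := Real.log_le_self (show 0 ≤ Real.log N by linarith)
    linarith
  have hsq : ∀ᶠ n : ℕ in atTop, (cyclicNum n : ℝ) ≤ (n : ℝ) ^ 2 := by
    have hlow : ∀ᶠ n : ℕ in atTop, δ < (n : ℝ) * Real.log (Real.log (Real.log (cyclicNum n))) / (cyclicNum n) :=
      hR.eventually_const_lt (by rw [hδ]; linarith)
    filter_upwards [hlow, cyclicNum_tendsto.eventually hsmall, eventually_ge_atTop 1] with n h1 h2 hn
    have hc : (0:ℝ) < cyclicNum n := by
      have := le_cyclicNum hn
      exact_mod_cast (by omega : 0 < cyclicNum n)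
    rw [lt_div_iff₀ hc] at h1
    have hs : 0 < Real.sqrt (cyclicNum n) := Real.sqrt_pos.2 hc
    have hss := Real.mul_self_sqrt hc.le
    set s := Real.sqrt (cyclicNum n)
    have h3 : δ * (s * s) < n * (δ * s) := by
      rw [hss]
      exact h1.trans_le (by gcongr)
    have h4 : s < n := by
      by_contra hcon
      push Not at hcon
      have : n * (δ * s) ≤ s * (δ * s) := by gcongr
      nlinarith
    rw [← hss]
    nlinarith
  have hratio : Tendsto (fun n : ℕ => Real.log (Real.log (Real.log (cyclicNum n))) / Real.log (Real.log (Real.log n)))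
      atTop (nhds 1) := by
    have hup : Tendsto (fun n : ℕ => 1 + Real.log 2 / Real.log (Real.log (Real.log n))) atTop (nhds 1) := by
      simpa using (l3.const_div_atTop (Real.log 2)).const_add 1
    refine tendsto_of_tendsto_of_tendsto_of_le_of_le' tendsto_const_nhds hup ?_ ?_
    · filter_upwards [l1.eventually_ge_atTop 1, l2.eventually_ge_atTop 1, l3.eventually_ge_atTop 1, eventually_ge_atTop 1] with n h1 h2 h3 hn
      rw [le_div_iff₀ (by linarith), one_mul]
      have hn0 : (0:ℝ) < n := by exact_mod_cast hn
      have hle : (n:ℝ) ≤ cyclicNum n := by exact_mod_cast le_cyclicNum hn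
      exact Real.log_le_log (by linarith) (Real.log_le_log (by linarith) (Real.log_le_log hn0 hle))
    · filter_upwards [l1.eventually_ge_atTop 1, l2.eventually_ge_atTop 1, l3.eventually_ge_atTop 1, eventually_ge_atTop 1, hsq] with n h1 h2 h3 hn hsq
      have hn0 : (0:ℝ) < n := by exact_mod_cast hn
      have hle : (n:ℝ) ≤ cyclicNum n := by exact_mod_cast le_cyclicNum hn
      have b1 : Real.log (cyclicNum n) ≤ 2 * Real.log n := by
        have := Real.log_le_log (by linarith) hsq
        rw [Real.log_pow] at this
        exact_mod_cast this
      have c1 := Real.log_le_log hn0 hle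
      have c2 := Real.log_le_log (by linarith) c1
      have b2 : Real.log (Real.log (cyclicNum n)) ≤ 2 * Real.log (Real.log n) := by
        have := Real.log_le_log (by linarith) b1
        rw [Real.log_mul (by norm_num) (by linarith)] at this
        have := Real.log_two_lt_d9
        linarith
      have b3 : Real.log (Real.log (Real.log (cyclicNum n))) ≤ Real.log 2 + Real.log (Real.log (Real.log n)) := by
        have := Real.log_le_log (by linarith) b2
        rwa [Real.log_mul (by norm_num) (by linarith)] at this
      rw [div_le_iff₀ (by linarith), add_mul, div_mul_cancel₀ _ (by linarith)]
      linarith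
  have hfin := hratio.div ((hR.const_mul (Real.exp Real.eulerMascheroniConstant))) (by positivity)
  rw [← Real.exp_add, add_neg_cancel, Real.exp_zero, div_one] at hfin
  refine (isEquivalent_iff_tendsto_one ?_).2 (hfin.congr' ?_)
  · filter_upwards [l3.eventually_ge_atTop 1, eventually_ge_atTop 1] with n h3 hn
    have hn0 : (0:ℝ) < n := by exact_mod_cast hn
    have : 0 < Real.log (Real.log (Real.log n)) := by linarith
    positivity
  · filter_upwards [l3.eventually_ge_atTop 1, eventually_ge_atTop 1, (l3.comp cyclicNum_tendsto).eventually_ge_atTop 1] with n h3 hn h4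
    simp only [Function.comp] at h4
    have hn0 : (0:ℝ) < n := by exact_mod_cast hn
    have hle : (n:ℝ) ≤ cyclicNum n := by exact_mod_cast le_cyclicNum hn
    simp only [Pi.div_apply]
    generalize Real.log (Real.log (Real.log n)) = a at *
    generalize Real.log (Real.log (Real.log (cyclicNum n))) = b at *
    have : (cyclicNum n : ℝ) ≠ 0 := by linarith
    have : a ≠ 0 := by linarith
    have : b ≠ 0 := by linarith
    field_simp

end Cyc

theorem cyclicNum_isEquivalent :
    (fun n : ℕ => (cyclicNum n : ℝ)) ~[atTop]
      (fun n : ℕ => Real.exp Real.eulerMascheroniConstant * (n : ℝ) *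
        Real.log (Real.log (Real.log n))) := by
  exact Cyc.main
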